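/- There exists ε₀ > 0 such that for every ε ∈ (0, ε₀), every integer q ≥ 1, and every η₁ > 0, there exist η ∈ (0, η₁) and a C^∞ diffeomorphism g of the unit sphere S² ⊂ ℝ³ such that: (i) g preserves the normalized surface measure σ; (ii) g equals the identity on a neighborhood of each pole (0,0,±1); (iii) g commutes with the rotation R_{1/q} by angle 2π/q about the x₃-axis; (iv) ‖g(x) − x‖ ≤ ε and ‖g⁻¹(x) − x‖ ≤ ε for all x ∈ S²; and (v) for every y ∈ [−1+ε, 1−ε], (1/2)·Leb{ y' ∈ [−1, 1] : for every 1-Lipschitz f : S² → ℝ, ∫ f d(g_*μ_y) − ∫ f d(g_*μ_{y'}) ≤ 3η } ≤ exp(−η^{−2+ε}). (Corollary 4.2, sphere case.) -/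

import Mathlib

open MeasureTheory Metric
open scoped ENNReal Manifold

/-- The normalized surface measure `σ` on the unit sphere `S² ⊂ ℝ³`. -/
noncomputable def sphereMeasure : Measure (sphere (0 : EuclideanSpace ℝ (Fin 3)) 1) :=
  ((4 : ℝ≥0∞) * ENNReal.ofReal Real.pi)⁻¹ •
    Measure.comap Subtype.val (μH[2] : Measure (EuclideanSpace ℝ (Fin 3)))

/-- The cylindrical (Archimedes) parametrization of the unit sphere. -/
noncomputable def piS (θ y : ℝ) : EuclideanSpace ℝ (Fin 3) :=
  (EuclideanSpace.equiv (Fin 3) ℝ).symm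
    ![Real.sqrt (1 - y ^ 2) * Real.cos (2 * Real.pi * θ),
      Real.sqrt (1 - y ^ 2) * Real.sin (2 * Real.pi * θ), y]

/-- The uniform probability measure `μ_y` on the latitude circle of the sphere at height `y`. -/
noncomputable def latitudeMeasure (y : ℝ) :
    Measure (sphere (0 : EuclideanSpace ℝ (Fin 3)) 1) :=
  Measure.comap Subtype.val
    (Measure.map (fun θ => piS θ y) (volume.restrict (Set.Icc (0 : ℝ) 1)))

/-- The rotation of `ℝ³` by angle `2πα` about the `x₃`-axis. -/
noncomputable def rotZ (α : ℝ) (x : EuclideanSpace ℝ (Fin 3)) : EuclideanSpace ℝ (Fin 3) :=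
  (EuclideanSpace.equiv (Fin 3) ℝ).symm
    ![Real.cos (2 * Real.pi * α) * x 0 - Real.sin (2 * Real.pi * α) * x 1,
      Real.sin (2 * Real.pi * α) * x 0 + Real.cos (2 * Real.pi * α) * x 1, x 2]

/-- Uniqueness of uniformly distributed measures (Christensen). -/
lemma uniform_unique {X : Type*} [MetricSpace X] [SecondCountableTopology X]
    [MeasurableSpace X] [BorelSpace X] (μ ν : Measure X) [IsFiniteMeasure μ] [IsFiniteMeasure ν]
    (h k : ℝ → ℝ≥0∞) (hk0 : ∀ r, 0 < r → k r ≠ 0)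
    (hμ : ∀ x r, μ (ball x r) = h r) (hν : ∀ x r, ν (ball x r) = k r)
    (hν0 : ν Set.univ ≠ 0) :
    μ = (μ Set.univ / ν Set.univ) • ν := by
  set t := μ Set.univ / ν Set.univ with ht
  have hνt : ν Set.univ ≠ ∞ := measure_ne_top _ _
  have hfub : ∀ (r : ℝ) (U : Set X), MeasurableSet U →
      ∫⁻ x in U, ν (U ∩ ball x r) ∂μ = ∫⁻ y in U, μ (U ∩ ball y r) ∂ν := by
    intro r U hU
    have hS : MeasurableSet {p : X × X | dist p.1 p.2 < r} :=
      (isOpen_lt (continuous_fst.dist continuous_snd) continuous_const).measurableSet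
    have e1 := Measure.prod_apply (μ := μ.restrict U) (ν := ν.restrict U) hS
    have e2 := Measure.prod_apply_symm (μ := μ.restrict U) (ν := ν.restrict U) hS
    rw [e1] at e2
    calc _ = ∫⁻ x in U, (ν.restrict U) (Prod.mk x ⁻¹' {p : X × X | dist p.1 p.2 < r}) ∂μ := by
          apply lintegral_congr; intro x
          rw [Measure.restrict_apply (measurable_prodMk_left hS), Set.inter_comm]
          congr 1; ext y; simp [dist_comm]
      _ = _ := e2
      _ = _ := by
          apply lintegral_congr; intro x
          rw [Measure.restrict_apply (measurable_prodMk_right hS), Set.inter_comm]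
          congr 1
  have hkt : ∀ r, k r ≠ ∞ := by
    intro r
    have : Nonempty X := by
      by_contra hne
      rw [not_nonempty_iff] at hne
      exact hν0 (by rw [Set.univ_eq_empty_iff.2 hne]; simp)
    obtain ⟨x⟩ := this
    rw [← hν x r]; exact measure_ne_top _ _
  have hratio : ∀ r, 0 < r → h r = t * k r := by
    intro r hr
    have := hfub r Set.univ MeasurableSet.univ
    simp only [Set.univ_inter, hμ, hν, Measure.restrict_univ, lintegral_const] at this
    rw [ht, ENNReal.div_eq_inv_mul, mul_assoc, mul_comm (μ Set.univ), this, mul_comm, mul_assoc,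
      ENNReal.mul_inv_cancel hν0 hνt, mul_one]
  have hopen : ∀ U : Set X, IsOpen U → μ U ≤ t * ν U := by
    intro U hU
    let r : ℕ → ℝ := fun n => 1 / ((n : ℝ) + 1)
    have hr : ∀ n, 0 < r n := fun n => by positivity
    have hr0 : Filter.Tendsto r Filter.atTop (nhds 0) := tendsto_one_div_add_atTop_nhds_zero_nat
    have hmeas : ∀ n, Measurable fun x => ν (U ∩ ball x (r n)) := by
      intro n
      have hS : MeasurableSet {p : X × X | dist p.1 p.2 < r n} :=
        (isOpen_lt (continuous_fst.dist continuous_snd) continuous_const).measurableSet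
      have := measurable_measure_prodMk_left (ν := ν.restrict U) hS
      convert this using 2 with x
      rw [Measure.restrict_apply (measurable_prodMk_left hS), Set.inter_comm]
      congr 1; ext y; simp [dist_comm]
    calc μ U = ∫⁻ x in U, 1 ∂μ := by simp
      _ ≤ ∫⁻ x in U, Filter.liminf (fun n => ν (U ∩ ball x (r n)) / k (r n)) Filter.atTop ∂μ := by
          apply setLIntegral_mono' hU.measurableSet
          intro x hx
          apply Filter.le_liminf_of_le
          · isBoundedDefault
          obtain ⟨δ, hδ, hb⟩ := Metric.isOpen_iff.1 hU x hx
          filter_upwards [hr0.eventually (gt_mem_nhds hδ)] with n hn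
          rw [Set.inter_eq_right.2 ((ball_subset_ball hn.le).trans hb), hν,
            ENNReal.div_self (hk0 _ (hr n)) (hkt _)]
      _ ≤ Filter.liminf (fun n => ∫⁻ x in U, ν (U ∩ ball x (r n)) / k (r n) ∂μ) Filter.atTop := by
          apply lintegral_liminf_le
          intro n
          exact (hmeas n).div_const _
      _ ≤ t * ν U := by
          apply Filter.liminf_le_of_le
          · isBoundedDefault
          intro b hb
          obtain ⟨n, hn⟩ := hb.exists
          refine hn.trans ?_
          simp only [div_eq_mul_inv]
          rw [lintegral_mul_const _ (hmeas n), hfub _ _ hU.measurableSet]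
          calc _ ≤ (∫⁻ y in U, h (r n) ∂ν) * (k (r n))⁻¹ := by
                gcongr with y
                rw [← hμ y]; exact measure_mono Set.inter_subset_right
            _ = t * ν U := by
                rw [setLIntegral_const, hratio _ (hr n)]
                rw [mul_comm (t * _), mul_assoc, mul_assoc,
                  ENNReal.mul_inv_cancel (hk0 _ (hr n)) (hkt _), mul_one, mul_comm]
  have htt : t ≠ ∞ := ENNReal.div_ne_top (measure_ne_top _ _) hν0
  have hle : μ ≤ t • ν := by
    intro s
    have : IsFiniteMeasure (t • ν) := ν.smul_finite htt
    rw [Set.measure_eq_iInf_isOpen s (t • ν)]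
    refine le_iInf fun U => le_iInf fun hs => le_iInf fun hU => ?_
    exact (measure_mono hs).trans (hopen U hU)
  have : IsFiniteMeasure (t • ν) := ν.smul_finite htt
  refine Measure.eq_of_le_of_measure_univ_eq hle ?_
  simp only [Measure.smul_apply, smul_eq_mul, ht]
  rw [ENNReal.div_mul_cancel hν0 hνt]

abbrev E3 := EuclideanSpace ℝ (Fin 3)
abbrev S2 := sphere (0 : EuclideanSpace ℝ (Fin 3)) 1

noncomputable def gam (p : ℝ × ℝ) : E3 :=
  (EuclideanSpace.equiv (Fin 3) ℝ).symm
    ![Real.cos p.2 * Real.cos (2 * Real.pi * p.1),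
      Real.cos p.2 * Real.sin (2 * Real.pi * p.1), Real.sin p.2]

lemma mem_S2_iff (x : E3) : x ∈ sphere (0 : E3) 1 ↔ x 0 ^ 2 + x 1 ^ 2 + x 2 ^ 2 = 1 := by
  rw [mem_sphere_zero_iff_norm, EuclideanSpace.norm_eq, Real.sqrt_eq_one, Fin.sum_univ_three]
  simp

lemma gam_mem (p : ℝ × ℝ) : gam p ∈ sphere (0 : E3) 1 := by
  rw [mem_S2_iff]
  simp [gam]
  have h1 := Real.sin_sq_add_cos_sq p.2
  have h2 := Real.sin_sq_add_cos_sq (2 * Real.pi * p.1)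
  nlinarith

lemma gam_contDiff : ContDiff ℝ ⊤ gam := by
  unfold gam
  apply (EuclideanSpace.equiv (Fin 3) ℝ).symm.contDiff.comp
  rw [contDiff_pi]
  intro i
  fin_cases i <;> simp <;> fun_prop

noncomputable def Gam : ℝ × ℝ → S2 := Set.codRestrict gam _ gam_mem

lemma Gam_contMDiff : ContMDiff 𝓘(ℝ, ℝ × ℝ) (𝓡 2) (⊤ : ℕ∞) Gam := by
  have : Fact (Module.finrank ℝ (EuclideanSpace ℝ (Fin 3)) = 2 + 1) := ⟨by simp⟩
  apply ContMDiff.codRestrict_sphere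
  exact (gam_contDiff.of_le le_top).contMDiff

noncomputable def sph (p : ℝ × ℝ) : S2 := Gam (p.1, Real.arcsin p.2)

lemma sph_coe (p : ℝ × ℝ) (h : p.2 ∈ Set.Icc (-1 : ℝ) 1) : (sph p : E3) = piS p.1 p.2 := by
  simp only [sph, Gam, Set.val_codRestrict_apply, gam, piS]
  rw [Real.cos_arcsin, Real.sin_arcsin h.1 h.2]

lemma polar_exists (a b : ℝ) : ∃ θ ∈ Set.Icc (0:ℝ) 1,
    a = Real.sqrt (a ^ 2 + b ^ 2) * Real.cos (2 * Real.pi * θ) ∧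
    b = Real.sqrt (a ^ 2 + b ^ 2) * Real.sin (2 * Real.pi * θ) := by
  have key : ∀ φ : ℝ, a = Real.sqrt (a ^ 2 + b ^ 2) * Real.cos φ →
    b = Real.sqrt (a ^ 2 + b ^ 2) * Real.sin φ → ∃ θ ∈ Set.Icc (0:ℝ) 1,
    a = Real.sqrt (a ^ 2 + b ^ 2) * Real.cos (2 * Real.pi * θ) ∧
    b = Real.sqrt (a ^ 2 + b ^ 2) * Real.sin (2 * Real.pi * θ) := by
    intro φ h1 h2
    have hpi := Real.pi_pos
    have e : 2 * Real.pi * Int.fract (φ / (2 * Real.pi)) =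
        φ - (⌊φ / (2 * Real.pi)⌋ : ℝ) * (2 * Real.pi) := by
      unfold Int.fract; field_simp
    refine ⟨Int.fract (φ / (2 * Real.pi)), ⟨Int.fract_nonneg _, (Int.fract_lt_one _).le⟩, ?_, ?_⟩
    · rw [e, Real.cos_sub_int_mul_two_pi]; exact h1
    · rw [e, Real.sin_sub_int_mul_two_pi]; exact h2
  let z : ℂ := ⟨a, b⟩
  have hz : ‖z‖ = Real.sqrt (a ^ 2 + b ^ 2) := by
    rw [Complex.norm_def, Complex.normSq_mk]; ring_nf
  apply key z.arg
  · rw [← hz, Complex.norm_mul_cos_arg]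
  · rw [← hz, Complex.norm_mul_sin_arg]

lemma sph_surj (x : S2) : ∃ p : ℝ × ℝ, p.1 ∈ Set.Icc (0:ℝ) 1 ∧ p.2 = (x : E3) 2 ∧
    p.2 ∈ Set.Icc (-1 : ℝ) 1 ∧ sph p = x := by
  have hx := (mem_S2_iff x).1 x.2
  obtain ⟨θ, hθ, h1, h2⟩ := polar_exists ((x : E3) 0) ((x : E3) 1)
  have hI : (x : E3) 2 ∈ Set.Icc (-1 : ℝ) 1 := by constructor <;> nlinarith
  refine ⟨(θ, (x : E3) 2), hθ, rfl, hI, ?_⟩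
  ext1
  rw [sph_coe _ hI]
  have e : (x : E3) 0 ^ 2 + (x : E3) 1 ^ 2 = 1 - (x : E3) 2 ^ 2 := by linarith
  rw [e] at h1 h2
  ext i
  fin_cases i
  · simp [piS]; exact h1.symm
  · simp [piS]; exact h2.symm
  · simp [piS]

lemma hausdorff_finite : (μH[2] : Measure E3) (sphere (0 : E3) 1) < ∞ := by
  have hl : LocallyLipschitz gam := (gam_contDiff.of_le le_top).locallyLipschitz
  have hK : IsCompact (Set.Icc (0 : ℝ) 1 ×ˢ Set.Icc (-2 : ℝ) 2) := isCompact_Icc.prod isCompact_Icc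
  have hsub : sphere (0 : E3) 1 ⊆ gam '' (Set.Icc (0 : ℝ) 1 ×ˢ Set.Icc (-2 : ℝ) 2) := by
    intro x hx
    obtain ⟨p, h1, -, -, h⟩ := sph_surj ⟨x, hx⟩
    refine ⟨(p.1, Real.arcsin p.2), ⟨h1, ?_⟩, ?_⟩
    · have := Real.arcsin_mem_Icc p.2
      have := Real.pi_le_four
      simp only [Set.mem_Icc] at *
      constructor <;> linarith
    · have := congrArg Subtype.val h
      exact this
  refine (measure_mono hsub).trans_lt ?_
  refine hK.induction_on (p := fun s => μH[2] (gam '' s) < ∞) (by simp) ?_ ?_ ?_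
  · intro s t hst ht; exact (measure_mono (Set.image_mono hst)).trans_lt ht
  · intro s t hs ht
    rw [Set.image_union]
    exact (measure_union_le _ _).trans_lt (ENNReal.add_lt_top.2 ⟨hs, ht⟩)
  · intro p hp
    obtain ⟨K, t, ht, hL⟩ := hl p
    refine ⟨t ∩ ball p 1, mem_nhdsWithin_of_mem_nhds (Filter.inter_mem ht (ball_mem_nhds p one_pos)), ?_⟩
    refine ((hL.mono Set.inter_subset_left).hausdorffMeasure_image_le (by norm_num : (0:ℝ) ≤ 2)).trans_lt ?_
    apply ENNReal.mul_lt_top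
    · exact ENNReal.rpow_lt_top_of_nonneg (by norm_num) (by simp)
    · rw [hausdorffMeasure_prod_real]
      exact (measure_mono Set.inter_subset_right).trans_lt measure_ball_lt_top

open MeasureTheory Metric
open scoped ENNReal Manifold Pointwise

lemma coe_smooth : ContMDiff (𝓡 2) 𝓘(ℝ, EuclideanSpace ℝ (Fin 3)) (⊤ : ℕ∞)
    (Subtype.val : S2 → E3) := by
  have : Fact (Module.finrank ℝ (EuclideanSpace ℝ (Fin 3)) = 2 + 1) := ⟨by simp⟩
  exact contMDiff_coe_sphere

lemma exists_isom (x y : S2) : ∃ L : E3 ≃ₗᵢ[ℝ] E3, L x = y := by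
  refine ⟨(ℝ ∙ ((x : E3) - y))ᗮ.reflection, ?_⟩
  apply Submodule.reflection_sub
  rw [norm_eq_of_mem_sphere, norm_eq_of_mem_sphere]

lemma isom_ball (L : E3 ≃ₗᵢ[ℝ] E3) (x y : S2) (h : L x = y) (r : ℝ) :
    L '' (Subtype.val '' (ball x r)) = Subtype.val '' (ball y r) := by
  ext z
  constructor
  · rintro ⟨_, ⟨u, hu, rfl⟩, rfl⟩
    refine ⟨⟨L u, by simp⟩, ?_, rfl⟩
    rw [mem_ball, Subtype.dist_eq] at *
    simp only [← h]; rwa [L.dist_map]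
  · rintro ⟨u, hu, rfl⟩
    refine ⟨L.symm u, ⟨⟨L.symm u, by simp⟩, ?_, rfl⟩, by simp⟩
    rw [mem_ball, Subtype.dist_eq] at *
    have : (x : E3) = L.symm y := by rw [← h]; simp
    simp only [this]; rwa [L.symm.dist_map]

lemma comap_apply_S2 (μ : Measure E3) (s : Set S2) :
    μ.comap Subtype.val s = μ (Subtype.val '' s) :=
  (MeasurableEmbedding.subtype_coe isClosed_sphere.measurableSet).comap_apply _ _

lemma sphereMeasure_eq : ∃ c : ℝ≥0∞, sphereMeasure = c • (volume : Measure E3).toSphere := by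
  let μ : Measure S2 := Measure.comap Subtype.val (μH[2] : Measure E3)
  let ν : Measure S2 := (volume : Measure E3).toSphere
  have hfin : IsFiniteMeasure μ := by
    constructor
    simp only [μ]
    rw [comap_apply_S2, Set.image_univ, Subtype.range_coe]
    exact hausdorff_finite
  let x0 : S2 := Gam 0
  have hμ : ∀ x r, μ (ball x r) = μ (ball x0 r) := by
    intro x r
    obtain ⟨L, hL⟩ := exists_isom x x0
    simp only [μ]
    rw [comap_apply_S2, comap_apply_S2, ← isom_ball L x x0 hL]
    exact (L.toIsometryEquiv.hausdorffMeasure_image 2 _).symm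
  have hν : ∀ x r, ν (ball x r) = ν (ball x0 r) := by
    intro x r
    obtain ⟨L, hL⟩ := exists_isom x x0
    simp only [ν]
    rw [Measure.toSphere_apply' _ measurableSet_ball, Measure.toSphere_apply' _ measurableSet_ball,
      ← isom_ball L x x0 hL]
    congr 1
    have : Set.Ioo (0:ℝ) 1 • (L '' (Subtype.val '' ball x r)) =
        L '' (Set.Ioo (0:ℝ) 1 • (Subtype.val '' ball x r)) := by
      ext z
      simp only [Set.mem_smul, Set.mem_image]
      constructor
      · rintro ⟨a, ha, _, ⟨u, hu, rfl⟩, rfl⟩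
        exact ⟨a • u, ⟨a, ha, u, hu, rfl⟩, by simp⟩
      · rintro ⟨_, ⟨a, ha, u, hu, rfl⟩, rfl⟩
        exact ⟨a, ha, L u, ⟨u, hu, rfl⟩, by simp⟩
    rw [this]
    rw [← L.symm.measurePreserving.measure_preimage_equiv (f := L.symm.toMeasurableEquiv)
        (Set.Ioo (0:ℝ) 1 • (Subtype.val '' ball x r))]
    congr 1
    ext z
    constructor
    · intro hz; exact ⟨L.symm z, hz, by simp⟩
    · rintro ⟨w, hw, rfl⟩
      change L.symm (L w) ∈ Set.Ioo (0:ℝ) 1 • (Subtype.val '' ball x r)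
      rw [L.symm_apply_apply]; exact hw
  have hu := uniform_unique μ ν (fun r => μ (ball x0 r)) (fun r => ν (ball x0 r))
    (fun r hr => (isOpen_ball.measure_pos ν (nonempty_ball.2 hr)).ne') hμ hν
    (by
      simp only [ν]
      exact (isOpen_univ.measure_pos _ ⟨x0, trivial⟩).ne')
  refine ⟨((4 : ℝ≥0∞) * ENNReal.ofReal Real.pi)⁻¹ * (μ Set.univ / ν Set.univ), ?_⟩
  rw [mul_smul, ← hu]
  rfl

open MeasureTheory Metric
open scoped ENNReal Manifold Pointwise

lemma angle_inj {a b : ℝ} (hc : Real.cos (2 * Real.pi * a) = Real.cos (2 * Real.pi * b))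
    (hs : Real.sin (2 * Real.pi * a) = Real.sin (2 * Real.pi * b)) : ∃ n : ℤ, a = b + n := by
  have h := Real.Angle.cos_sin_inj hc hs
  rw [Real.Angle.angle_eq_iff_two_pi_dvd_sub] at h
  obtain ⟨n, hn⟩ := h
  refine ⟨n, ?_⟩
  have hpi := Real.pi_pos
  have : 2 * Real.pi * (a - b - n) = 0 := by linarith
  rcases mul_eq_zero.1 this with h | h
  · linarith
  · linarith

lemma piS_zero (θ y : ℝ) : piS θ y 0 = Real.sqrt (1 - y ^ 2) * Real.cos (2 * Real.pi * θ) := by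
  simp [piS]
lemma piS_one (θ y : ℝ) : piS θ y 1 = Real.sqrt (1 - y ^ 2) * Real.sin (2 * Real.pi * θ) := by
  simp [piS]
lemma piS_two (θ y : ℝ) : piS θ y 2 = y := by
  simp [piS]

lemma sqrt_pos_of_Ioo {y : ℝ} (h : y ∈ Set.Ioo (-1 : ℝ) 1) : 0 < Real.sqrt (1 - y ^ 2) := by
  apply Real.sqrt_pos.2; nlinarith [h.1, h.2]

lemma piS_inj {θ y θ' y' : ℝ} (hy : y ∈ Set.Ioo (-1 : ℝ) 1) (h : piS θ y = piS θ' y') :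
    y = y' ∧ ∃ n : ℤ, θ = θ' + n := by
  have h2 : y = y' := by rw [← piS_two θ y, h, piS_two]
  subst h2
  refine ⟨rfl, ?_⟩
  have hs := sqrt_pos_of_Ioo hy
  have e0 : piS θ y 0 = piS θ' y 0 := by rw [h]
  have e1 : piS θ y 1 = piS θ' y 1 := by rw [h]
  rw [piS_zero, piS_zero] at e0
  rw [piS_one, piS_one] at e1
  exact angle_inj (mul_left_cancel₀ hs.ne' e0) (mul_left_cancel₀ hs.ne' e1)

lemma piS_add_int (θ y : ℝ) (n : ℤ) : piS (θ + n) y = piS θ y := by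
  unfold piS
  have : 2 * Real.pi * (θ + n) = 2 * Real.pi * θ + n * (2 * Real.pi) := by ring
  rw [this, Real.cos_add_int_mul_two_pi, Real.sin_add_int_mul_two_pi]

lemma sph_add_int (θ y : ℝ) (n : ℤ) : sph (θ + n, y) = sph (θ, y) := by
  ext1
  simp only [sph, Gam, Set.val_codRestrict_apply, gam]
  have : 2 * Real.pi * (θ + n) = 2 * Real.pi * θ + n * (2 * Real.pi) := by ring
  rw [this, Real.cos_add_int_mul_two_pi, Real.sin_add_int_mul_two_pi]

noncomputable def Psi (v : Fin 3 → ℝ) : Fin 3 → ℝ :=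
  ![v 2 * (Real.sqrt (1 - v 1 ^ 2) * Real.cos (2 * Real.pi * v 0)),
    v 2 * (Real.sqrt (1 - v 1 ^ 2) * Real.sin (2 * Real.pi * v 0)), v 2 * v 1]

noncomputable def PsiJ (v : Fin 3 → ℝ) : Matrix (Fin 3) (Fin 3) ℝ :=
  let s := Real.sqrt (1 - v 1 ^ 2)
  let C := Real.cos (2 * Real.pi * v 0)
  let S := Real.sin (2 * Real.pi * v 0)
  !![- (v 2 * s * (2 * Real.pi) * S), -(v 2 * (v 1 / s) * C), s * C;
    v 2 * s * (2 * Real.pi) * C, -(v 2 * (v 1 / s) * S), s * S;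
    0, v 2, v 1]

lemma Psi_deriv (v : Fin 3 → ℝ) (hv : v 1 ∈ Set.Ioo (-1 : ℝ) 1) :
    HasFDerivAt Psi (LinearMap.toContinuousLinearMap (Matrix.toLin' (PsiJ v))) v := by
  have hp : ∀ i, HasFDerivAt (fun v : Fin 3 → ℝ => v i)
      (ContinuousLinearMap.proj (R := ℝ) (φ := fun _ : Fin 3 => ℝ) i) v :=
    fun i => hasFDerivAt_apply i v
  have h1 : (1 - v 1 ^ 2) ≠ 0 := by nlinarith [hv.1, hv.2]
  have hs := sqrt_pos_of_Ioo hv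
  have hsq := (((hp 1).pow 2).const_sub 1).sqrt h1
  have hc := ((hp 0).const_mul (2 * Real.pi)).cos
  have hsn := ((hp 0).const_mul (2 * Real.pi)).sin
  rw [hasFDerivAt_pi']
  intro i
  fin_cases i
  · refine ((hp 2).mul (hsq.mul hc)).congr_fderiv ?_
    ext w
    simp [Matrix.toLin'_apply, PsiJ, Matrix.mulVec, dotProduct, Fin.sum_univ_three]
    field_simp
  · refine ((hp 2).mul (hsq.mul hsn)).congr_fderiv ?_
    ext w
    simp [Matrix.toLin'_apply, PsiJ, Matrix.mulVec, dotProduct, Fin.sum_univ_three]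
    field_simp
  · refine ((hp 2).mul (hp 1)).congr_fderiv ?_
    ext w
    simp [Matrix.toLin'_apply, PsiJ, Matrix.mulVec, dotProduct, Fin.sum_univ_three]

lemma PsiJ_det (v : Fin 3 → ℝ) (hv : v 1 ∈ Set.Ioo (-1 : ℝ) 1) :
    |(PsiJ v).det| = 2 * Real.pi * v 2 ^ 2 := by
  have hs := sqrt_pos_of_Ioo hv
  have h1 := Real.sq_sqrt (show 0 ≤ 1 - v 1 ^ 2 by nlinarith [hv.1, hv.2])
  have h2 := Real.sin_sq_add_cos_sq (2 * Real.pi * v 0)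
  have : (PsiJ v).det = 2 * Real.pi * v 2 ^ 2 := by
    rw [Matrix.det_fin_three]
    simp only [PsiJ, Matrix.of_apply, Matrix.cons_val]
    set s := Real.sqrt (1 - v 1 ^ 2)
    set C := Real.cos (2 * Real.pi * v 0)
    set S := Real.sin (2 * Real.pi * v 0)
    have : 2 * Real.pi * v 2 ^ 2 = 2 * Real.pi * v 2 ^ 2 * (S ^ 2 + C ^ 2) * (s ^ 2 + v 1 ^ 2) := by
      rw [h2, h1]; ring
    rw [this]
    field_simp
    ring
  rw [this, abs_of_nonneg]
  have := Real.pi_pos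
  positivity

/-- Archimedes: the cylindrical parametrization is area preserving. -/
lemma toSphere_sph (θ₀ : ℝ) (A : Set (ℝ × ℝ)) (hA : MeasurableSet A)
    (hsub : A ⊆ Set.Ioo θ₀ (θ₀ + 1) ×ˢ Set.Ioo (-1) 1) (hm : MeasurableSet (sph '' A)) :
    (volume : Measure E3).toSphere (sph '' A) =
      (3 * ∫⁻ t in Set.Ioo (0:ℝ) 1, ENNReal.ofReal (2 * Real.pi * t ^ 2)) * volume A := by
  rw [Measure.toSphere_apply' _ hm]
  let B : Set (Fin 3 → ℝ) := {v | (v 0, v 1) ∈ A ∧ v 2 ∈ Set.Ioo (0:ℝ) 1}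
  have hB : MeasurableSet B := by
    apply MeasurableSet.inter
    · exact (by fun_prop : Measurable fun v : Fin 3 → ℝ => (v 0, v 1)) hA
    · exact (measurable_pi_apply 2) measurableSet_Ioo
  have himg : (MeasurableEquiv.toLp 2 (Fin 3 → ℝ)) ⁻¹' (Set.Ioo (0:ℝ) 1 • (Subtype.val '' (sph '' A)))
      = Psi '' B := by
    ext w
    simp only [Set.mem_preimage, Set.mem_smul, Set.mem_image]
    constructor
    · rintro ⟨a, ha, _, ⟨_, ⟨p, hp, rfl⟩, rfl⟩, h⟩
      have hp2 := (hsub hp).2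
      refine ⟨![p.1, p.2, a], ⟨by simpa using hp, by simpa using ha⟩, ?_⟩
      rw [sph_coe _ ⟨hp2.1.le, hp2.2.le⟩] at h
      have hw : ∀ i, w i = a * piS p.1 p.2 i := by
        intro i
        have := congrArg (fun z : E3 => z i) h
        simpa using this.symm
      ext i
      rw [hw]
      fin_cases i
      · simp [Psi, piS_zero]
      · simp [Psi, piS_one]
      · simp [Psi, piS_two]
    · rintro ⟨v, ⟨hv, hv2⟩, rfl⟩
      have hp2 := (hsub hv).2
      refine ⟨v 2, hv2, _, ⟨_, ⟨_, hv, rfl⟩, rfl⟩, ?_⟩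
      rw [sph_coe _ ⟨hp2.1.le, hp2.2.le⟩]
      ext i
      fin_cases i
      · simp [Psi, piS_zero]
      · simp [Psi, piS_one]
      · simp [Psi, piS_two]
  have hinj : Set.InjOn Psi B := by
    rintro v ⟨hv, hv2⟩ w ⟨hw, hw2⟩ h
    have hn : ∀ v : Fin 3 → ℝ, (v 0, v 1) ∈ A → (Psi v 0) ^ 2 + (Psi v 1) ^ 2 + (Psi v 2) ^ 2 = v 2 ^ 2 := by
      intro v hv
      have hp2 := (hsub hv).2
      have h1 := Real.sq_sqrt (show 0 ≤ 1 - v 1 ^ 2 by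
        have := hp2.1; have := hp2.2; simp only at *; nlinarith)
      have h2 := Real.sin_sq_add_cos_sq (2 * Real.pi * v 0)
      simp only [Psi, Matrix.cons_val]
      set s := Real.sqrt (1 - v 1 ^ 2)
      set C := Real.cos (2 * Real.pi * v 0)
      set S := Real.sin (2 * Real.pi * v 0)
      have : v 2 ^ 2 = v 2 ^ 2 * (s ^ 2 * (S ^ 2 + C ^ 2) + v 1 ^ 2) := by rw [h2, h1]; ring
      rw [this]; ring
    have e2 : v 2 = w 2 := by
      have := hn v hv
      rw [h, hn w hw] at this
      nlinarith [hv2.1, hw2.1]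
    have : piS (v 0) (v 1) = piS (w 0) (w 1) := by
      ext i
      have hi : Psi v i = Psi w i := by rw [h]
      apply mul_left_cancel₀ (hv2.1.ne')
      nth_rw 2 [e2]
      fin_cases i
      · simpa [Psi, piS_zero] using hi
      · simpa [Psi, piS_one] using hi
      · simpa [Psi, piS_two] using hi
    obtain ⟨e1, n, e0⟩ := piS_inj (hsub hv).2 this
    have a1 := (hsub hv).1
    have a2 := (hsub hw).1
    simp only [Set.mem_Ioo] at a1 a2
    have hn0 : n = 0 := by
      have : (n : ℝ) < 1 := by linarith
      have h' : (-1 : ℝ) < n := by linarith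
      have : n < 1 := by exact_mod_cast this
      have : -1 < n := by exact_mod_cast h'
      omega
    subst hn0
    ext i
    fin_cases i
    · simpa using e0
    · exact e1
    · exact e2
  have hvol : volume (Set.Ioo (0:ℝ) 1 • (Subtype.val '' (sph '' A))) = volume (Psi '' B) := by
    rw [← himg]
    exact ((EuclideanSpace.volume_preserving_symm_measurableEquiv_toLp (Fin 3)).symm.measure_preimage_equiv _).symm
  have hv1 : ∀ v ∈ B, v 1 ∈ Set.Ioo (-1 : ℝ) 1 := fun v hv => (hsub hv.1).2
  rw [hvol, ← lintegral_abs_det_fderiv_eq_addHaar_image volume hB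
    (fun v hv => (Psi_deriv v (hv1 v hv)).hasFDerivWithinAt) hinj]
  have : ∫⁻ v in B, ENNReal.ofReal
      |(LinearMap.toContinuousLinearMap (Matrix.toLin' (PsiJ v))).det| =
      ∫⁻ v in B, ENNReal.ofReal (2 * Real.pi * v 2 ^ 2) := by
    apply setLIntegral_congr_fun hB
    intro v hv
    have h3 : (LinearMap.toContinuousLinearMap (Matrix.toLin' (PsiJ v))).det = (PsiJ v).det := by
      rw [ContinuousLinearMap.det]; simp
    simp only [h3]
    rw [PsiJ_det v (hv1 v hv)]
  rw [this]
  let e := (MeasurableEquiv.piFinSuccAbove (fun _ : Fin 3 => ℝ) 2)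
  have he : MeasurePreserving e volume volume := volume_preserving_piFinSuccAbove _ _
  have he2 : MeasurePreserving (Prod.map id MeasurableEquiv.finTwoArrow : ℝ × (Fin 2 → ℝ) → ℝ × (ℝ × ℝ))
      volume volume := (MeasurePreserving.id _).prod (volume_preserving_finTwoArrow ℝ)
  have he3 := he2.comp he
  let F : ℝ × (ℝ × ℝ) → ℝ≥0∞ := fun z => (Set.Ioo (0:ℝ) 1).indicator (fun t => ENNReal.ofReal (2 * Real.pi * t ^ 2)) z.1 *
      A.indicator 1 z.2
  have hF1 : Measurable fun t : ℝ => (Set.Ioo (0:ℝ) 1).indicator (fun t => ENNReal.ofReal (2 * Real.pi * t ^ 2)) t :=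
    Measurable.indicator (by fun_prop) measurableSet_Ioo
  have hF2 : Measurable (A.indicator (1 : ℝ × ℝ → ℝ≥0∞)) := measurable_one.indicator hA
  have hF : Measurable F := (hF1.comp measurable_fst).mul (hF2.comp measurable_snd)
  have e5 : ∀ v : Fin 3 → ℝ, (Prod.map id MeasurableEquiv.finTwoArrow ∘ e) v = (v 2, (v 0, v 1)) := by
    intro v; rfl
  rw [← lintegral_indicator hB]
  have e6 : ∀ v, B.indicator (fun v => ENNReal.ofReal (2 * Real.pi * v 2 ^ 2)) v = F ((Prod.map id MeasurableEquiv.finTwoArrow ∘ e) v) := by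
    intro v
    rw [e5]
    by_cases h1 : (v 0, v 1) ∈ A <;> by_cases h2 : v 2 ∈ Set.Ioo (0:ℝ) 1
    · simp only [F]; rw [Set.indicator_of_mem (show v ∈ B from ⟨h1, h2⟩), Set.indicator_of_mem h2, Set.indicator_of_mem h1]; simp
    · rw [Set.indicator_of_notMem (fun h : v ∈ B => h2 h.2)]; simp only [F]; rw [Set.indicator_of_notMem h2]; simp
    · rw [Set.indicator_of_notMem (fun h : v ∈ B => h1 h.1)]; simp only [F]; rw [Set.indicator_of_notMem h1]; simp
    · rw [Set.indicator_of_notMem (fun h : v ∈ B => h1 h.1)]; simp only [F]; rw [Set.indicator_of_notMem h1]; simp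
  simp_rw [e6]
  rw [he3.lintegral_comp hF, Measure.volume_eq_prod, lintegral_prod_mul hF1.aemeasurable hF2.aemeasurable,
    lintegral_indicator measurableSet_Ioo, lintegral_indicator_one hA]
  simp [mul_assoc]

/-- Compactly supported smooth area-preserving planar homeomorphisms. -/
structure Nice (U : Set (ℝ × ℝ)) (G : (ℝ × ℝ) ≃ₜ (ℝ × ℝ)) : Prop where
  smooth : ContDiff ℝ (⊤ : ℕ∞) G
  smooth_symm : ContDiff ℝ (⊤ : ℕ∞) G.symm
  mp : MeasurePreserving G volume volume
  supp : ∃ K ⊆ U, IsCompact K ∧ ∀ p, p ∉ K → G p = p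

lemma Nice.mono {U V : Set (ℝ × ℝ)} {G} (h : Nice U G) (hUV : U ⊆ V) : Nice V G := by
  obtain ⟨K, hK, h1, h2⟩ := h.supp
  exact ⟨h.1, h.2, h.3, K, hK.trans hUV, h1, h2⟩

lemma Nice.refl (U : Set (ℝ × ℝ)) : Nice U (Homeomorph.refl _) :=
  ⟨contDiff_id, contDiff_id, MeasurePreserving.id _, ∅, Set.empty_subset _, isCompact_empty,
    fun _ _ => rfl⟩

lemma Nice.trans {U : Set (ℝ × ℝ)} {G G'} (h : Nice U G) (h' : Nice U G') :
    Nice U (G.trans G') := by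
  obtain ⟨K, hK, h1, h2⟩ := h.supp
  obtain ⟨K', hK', h1', h2'⟩ := h'.supp
  refine ⟨h'.smooth.comp h.smooth, h.smooth_symm.comp h'.smooth_symm, h'.mp.comp h.mp,
    K ∪ K', Set.union_subset hK hK', h1.union h1', fun p hp => ?_⟩
  have a : p ∉ K := fun h => hp (Or.inl h)
  have b : p ∉ K' := fun h => hp (Or.inr h)
  simp [h2 p a, h2' p b]

lemma Nice.symm {U : Set (ℝ × ℝ)} {G} (h : Nice U G) : Nice U G.symm := by
  obtain ⟨K, hK, h1, h2⟩ := h.supp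
  refine ⟨h.2, h.1, h.3.symm (e := G.toMeasurableEquiv), K, hK, h1, fun p hp => ?_⟩
  rw [Homeomorph.symm_apply_eq, h2 p hp]

lemma Nice.eq_of_notMem {U : Set (ℝ × ℝ)} {G} (h : Nice U G) {p} (hp : p ∉ U) : G p = p := by
  obtain ⟨K, hK, h1, h2⟩ := h.supp
  exact h2 p fun h => hp (hK h)

lemma Nice.mem {U : Set (ℝ × ℝ)} {G} (h : Nice U G) {p} (hp : p ∈ U) : G p ∈ U := by
  by_contra hn
  have := h.eq_of_notMem hn
  rw [G.injective this] at hn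
  exact hn hp

lemma Nice.mem_iff {U : Set (ℝ × ℝ)} {G} (h : Nice U G) {p} : G p ∈ U ↔ p ∈ U := by
  refine ⟨fun hp => ?_, h.mem⟩
  by_contra hn
  rw [h.eq_of_notMem hn] at hp
  exact hn hp

open Classical in
lemma transport_fun {H E : Type*} [TopologicalSpace H] [NormedAddCommGroup E] [NormedSpace ℝ E]
    (I : ModelWithCorners ℝ E H) {M : Type*} [TopologicalSpace M] [T2Space M] [ChartedSpace H M]
    (φ : ℝ × ℝ → M) (ψ : M → ℝ × ℝ) (U : Set (ℝ × ℝ)) (V : Set M)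
    (hV : IsOpen V) (hφ : Set.MapsTo φ U V) (hψ : Set.MapsTo ψ V U)
    (r : ∀ x ∈ V, φ (ψ x) = x)
    (sφ : ContMDiffOn 𝓘(ℝ, ℝ × ℝ) I (⊤ : ℕ∞) φ U) (sψ : ContMDiffOn I 𝓘(ℝ, ℝ × ℝ) (⊤ : ℕ∞) ψ V)
    (K : Set (ℝ × ℝ)) (hK : K ⊆ U) (hKc : IsCompact K)
    (G : (ℝ × ℝ) ≃ₜ (ℝ × ℝ)) (hG : Nice U G) (hGK : ∀ p, p ∉ K → G p = p) :
    ContMDiff I I (⊤ : ℕ∞) (fun x => if x ∈ V then φ (G (ψ x)) else x) ∧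
      ∀ x, x ∉ φ '' K → (if x ∈ V then φ (G (ψ x)) else x) = x := by
  have h2 : ∀ x, x ∉ φ '' K → (if x ∈ V then φ (G (ψ x)) else x) = x := by
    intro x hx
    split_ifs with h
    · have : ψ x ∉ K := fun hk => hx ⟨_, hk, r x h⟩
      rw [hGK _ this, r x h]
    · rfl
  refine ⟨?_, h2⟩
  intro x
  by_cases hx : x ∈ V
  · have h : ContMDiffOn I I (⊤ : ℕ∞) (φ ∘ (G ∘ ψ)) V := by
      refine sφ.comp (hG.smooth.contMDiff.comp_contMDiffOn sψ) ?_
      intro z hz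
      exact hG.mem (hψ hz)
    refine (h.contMDiffAt (hV.mem_nhds hx)).congr_of_eventuallyEq ?_
    filter_upwards [hV.mem_nhds hx] with z hz
    simp [hz]
  · have hc : IsClosed (φ '' K) := (hKc.image_of_continuousOn (sφ.continuousOn.mono hK)).isClosed
    by_cases hxK : x ∈ φ '' K
    · exfalso
      obtain ⟨p, hp, rfl⟩ := hxK
      exact hx (hφ (hK hp))
    · refine contMDiffAt_id.congr_of_eventuallyEq ?_
      filter_upwards [hc.isOpen_compl.mem_nhds hxK] with z hz
      exact h2 z hz

lemma transport {H E : Type*} [TopologicalSpace H] [NormedAddCommGroup E] [NormedSpace ℝ E]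
    (I : ModelWithCorners ℝ E H) {M : Type*} [TopologicalSpace M] [T2Space M] [ChartedSpace H M]
    [MeasurableSpace M] [BorelSpace M] (μ : Measure M)
    (φ : ℝ × ℝ → M) (ψ : M → ℝ × ℝ) (U : Set (ℝ × ℝ)) (V : Set M)
    (hU : IsOpen U) (hV : IsOpen V) (hφ : Set.MapsTo φ U V) (hψ : Set.MapsTo ψ V U)
    (l : ∀ p ∈ U, ψ (φ p) = p) (r : ∀ x ∈ V, φ (ψ x) = x)
    (sφ : ContMDiffOn 𝓘(ℝ, ℝ × ℝ) I (⊤ : ℕ∞) φ U) (sψ : ContMDiffOn I 𝓘(ℝ, ℝ × ℝ) (⊤ : ℕ∞) ψ V)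
    (c : ℝ≥0∞) (hμ : ∀ A ⊆ U, MeasurableSet A → MeasurableSet (φ '' A) → μ (φ '' A) = c * volume A)
    (G : (ℝ × ℝ) ≃ₜ (ℝ × ℝ)) (hG : Nice U G) :
    ∃ g : M ≃ₜ M, ContMDiff I I (⊤ : ℕ∞) g ∧ ContMDiff I I (⊤ : ℕ∞) g.symm ∧
      MeasurePreserving g μ μ ∧ (∀ p ∈ U, g (φ p) = φ (G p)) ∧
      ∃ K ⊆ V, IsCompact K ∧ ∀ x, x ∉ K → g x = x := by
  classical
  obtain ⟨K, hK, hKc, hGK⟩ := hG.supp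
  have hGK' : ∀ p, p ∉ K → G.symm p = p := fun p hp => by
    rw [Homeomorph.symm_apply_eq, hGK p hp]
  obtain ⟨s1, f1⟩ := transport_fun I φ ψ U V hV hφ hψ r sφ sψ K hK hKc G hG hGK
  obtain ⟨s2, f2⟩ := transport_fun I φ ψ U V hV hφ hψ r sφ sψ K hK hKc G.symm hG.symm hGK'
  let g : M ≃ₜ M :=
    { toFun := fun x => if x ∈ V then φ (G (ψ x)) else x
      invFun := fun x => if x ∈ V then φ (G.symm (ψ x)) else x
      left_inv := by
        intro x
        by_cases h : x ∈ V
        · have h1 := hG.mem (hψ h)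
          simp [h, hφ h1, l _ h1, r x h]
        · simp [h]
      right_inv := by
        intro x
        by_cases h : x ∈ V
        · have h1 := hG.symm.mem (hψ h)
          simp [h, hφ h1, l _ h1, r x h]
        · simp [h]
      continuous_toFun := s1.continuous
      continuous_invFun := s2.continuous }
  have hg1 : ∀ p ∈ U, g (φ p) = φ (G p) := by
    intro p hp
    simp [g, hφ hp, l p hp]
  have hgV : ∀ x, x ∉ V → g x = x := by
    intro x hx
    simp [g, hx]
  refine ⟨g, s1, s2, ?_, hg1, φ '' K, (hφ.mono_left hK).image_subset,
    hKc.image_of_continuousOn (sφ.continuousOn.mono hK), f1⟩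
  refine ⟨g.measurable, ?_⟩
  ext A hA
  rw [Measure.map_apply g.measurable hA]
  have hmem : ∀ x, g x ∈ V ↔ x ∈ V := by
    intro x
    constructor
    · intro h
      by_contra hn
      rw [hgV x hn] at h
      exact hn h
    · intro h
      rw [← r x h, hg1 _ (hψ h)]
      exact hφ (hG.mem (hψ h))
  let B := U ∩ φ ⁻¹' A
  have hB : MeasurableSet B := by
    have : Measurable (U.domRestrict φ) := (continuousOn_iff_continuous_domRestrict.1 sφ.continuousOn).measurable
    have h3 := hU.measurableSet.subtype_image (this hA)
    convert h3 using 1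
    ext p
    simp [B, Set.domRestrict, and_comm]
  have e1 : φ '' B = A ∩ V := by
    ext x
    constructor
    · rintro ⟨p, ⟨h1, h2⟩, rfl⟩
      exact ⟨h2, hφ h1⟩
    · rintro ⟨h1, h2⟩
      exact ⟨ψ x, ⟨hψ h2, by simpa [r x h2] using h1⟩, r x h2⟩
  have e2 : φ '' (G ⁻¹' B) = g ⁻¹' A ∩ V := by
    ext x
    constructor
    · rintro ⟨p, ⟨h1, h2⟩, rfl⟩
      have hp := hG.mem_iff.1 h1
      exact ⟨by rw [Set.mem_preimage, hg1 p hp]; exact h2, hφ hp⟩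
    · rintro ⟨h1, h2⟩
      refine ⟨ψ x, ⟨hG.mem (hψ h2), ?_⟩, r x h2⟩
      rw [Set.mem_preimage, ← hg1 _ (hψ h2), r x h2]
      exact h1
  have e3 : g ⁻¹' A \ V = A \ V := by
    ext x
    by_cases hx : x ∈ V
    · simp [hx]
    · simp [hx, hgV x hx]
  have m1 : MeasurableSet (φ '' B) := by rw [e1]; exact hA.inter hV.measurableSet
  have m2 : MeasurableSet (φ '' (G ⁻¹' B)) := by
    rw [e2]; exact (g.measurable hA).inter hV.measurableSet
  rw [← measure_inter_add_sdiff _ hV.measurableSet, ← measure_inter_add_sdiff A hV.measurableSet, e3,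
    ← e1, ← e2, hμ _ Set.inter_subset_left hB m1, hμ _ ?_ (G.measurable hB) m2,
    hG.mp.measure_preimage hB.nullMeasurableSet]
  intro p hp
  exact hG.mem_iff.1 hp.1

noncomputable def mat2 (a b c d : ℝ) : ℝ × ℝ →L[ℝ] ℝ × ℝ :=
  (a • ContinuousLinearMap.fst ℝ ℝ ℝ + b • ContinuousLinearMap.snd ℝ ℝ ℝ).prod
    (c • ContinuousLinearMap.fst ℝ ℝ ℝ + d • ContinuousLinearMap.snd ℝ ℝ ℝ)

lemma mat2_det (a b c d : ℝ) : (mat2 a b c d).det = a * d - b * c := by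
  rw [mat2, ← Matrix.toLin_finTwoProd_toContinuousLinearMap, LinearMap.det_toContinuousLinearMap,
    LinearMap.det_toLin, Matrix.det_fin_two_of]

lemma mp_of_det (G : (ℝ × ℝ) ≃ₜ (ℝ × ℝ)) (G' : ℝ × ℝ → ℝ × ℝ →L[ℝ] ℝ × ℝ)
    (h : ∀ p, HasFDerivAt G (G' p) p) (hd : ∀ p, (G' p).det = 1) :
    MeasurePreserving G volume volume := by
  have hs : MeasurePreserving G.symm volume volume := by
    refine ⟨G.symm.measurable, ?_⟩
    ext A hA
    rw [Measure.map_apply G.symm.measurable hA]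
    have : G.symm ⁻¹' A = G '' A := (Homeomorph.image_eq_preimage_symm G A).symm
    rw [this, ← lintegral_abs_det_fderiv_eq_addHaar_image volume hA
      (fun p _ => (h p).hasFDerivWithinAt) G.injective.injOn]
    simp [hd]
  exact hs.symm (e := G.symm.toMeasurableEquiv)

noncomputable def twistFun (ρ : ℝ → ℝ) (p : ℝ × ℝ) : ℝ × ℝ :=
  (Real.cos (ρ (p.1 ^ 2 + p.2 ^ 2)) * p.1 - Real.sin (ρ (p.1 ^ 2 + p.2 ^ 2)) * p.2,
   Real.sin (ρ (p.1 ^ 2 + p.2 ^ 2)) * p.1 + Real.cos (ρ (p.1 ^ 2 + p.2 ^ 2)) * p.2)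

lemma twistFun_norm (ρ : ℝ → ℝ) (p : ℝ × ℝ) :
    (twistFun ρ p).1 ^ 2 + (twistFun ρ p).2 ^ 2 = p.1 ^ 2 + p.2 ^ 2 := by
  simp only [twistFun]
  linear_combination (p.1 ^ 2 + p.2 ^ 2) * Real.sin_sq_add_cos_sq (ρ (p.1 ^ 2 + p.2 ^ 2))

lemma twistFun_inv (ρ : ℝ → ℝ) (p : ℝ × ℝ) :
    twistFun (fun t => - ρ t) (twistFun ρ p) = p := by
  have h := twistFun_norm ρ p
  have h2 := Real.sin_sq_add_cos_sq (ρ (p.1 ^ 2 + p.2 ^ 2))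
  rw [twistFun, h, Real.cos_neg, Real.sin_neg]
  simp only [twistFun]
  ext <;> simp only
  · linear_combination p.1 * h2
  · linear_combination p.2 * h2

lemma twistFun_smooth (ρ : ℝ → ℝ) (h : ContDiff ℝ (⊤ : ℕ∞) ρ) :
    ContDiff ℝ (⊤ : ℕ∞) (twistFun ρ) := by
  unfold twistFun
  fun_prop

noncomputable def twist (ρ : ℝ → ℝ) (h : ContDiff ℝ (⊤ : ℕ∞) ρ) : (ℝ × ℝ) ≃ₜ (ℝ × ℝ) where
  toFun := twistFun ρ
  invFun := twistFun (fun t => - ρ t)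
  left_inv := twistFun_inv ρ
  right_inv := by
    intro p
    have := twistFun_inv (fun t => - ρ t) p
    simpa using this
  continuous_toFun := (twistFun_smooth ρ h).continuous
  continuous_invFun := (twistFun_smooth _ h.neg).continuous

lemma twist_apply (ρ : ℝ → ℝ) (h : ContDiff ℝ (⊤ : ℕ∞) ρ) (p : ℝ × ℝ) :
    twist ρ h p = twistFun ρ p := rfl

lemma twist_coe (ρ : ℝ → ℝ) (h : ContDiff ℝ (⊤ : ℕ∞) ρ) : ⇑(twist ρ h) = twistFun ρ := rfl

lemma twist_coe_symm (ρ : ℝ → ℝ) (h : ContDiff ℝ (⊤ : ℕ∞) ρ) :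
    ⇑(twist ρ h).symm = twistFun (fun t => - ρ t) := rfl

lemma twist_mp (ρ : ℝ → ℝ) (h : ContDiff ℝ (⊤ : ℕ∞) ρ) :
    MeasurePreserving (twist ρ h) volume volume := by
  let C : ℝ × ℝ → ℝ := fun p => Real.cos (ρ (p.1 ^ 2 + p.2 ^ 2))
  let S : ℝ × ℝ → ℝ := fun p => Real.sin (ρ (p.1 ^ 2 + p.2 ^ 2))
  let D : ℝ × ℝ → ℝ := fun p => deriv ρ (p.1 ^ 2 + p.2 ^ 2)
  refine mp_of_det _ (fun p => mat2
    (C p - (S p * p.1 + C p * p.2) * (2 * p.1 * D p))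
    (-S p - (S p * p.1 + C p * p.2) * (2 * p.2 * D p))
    (S p + (C p * p.1 - S p * p.2) * (2 * p.1 * D p))
    (C p + (C p * p.1 - S p * p.2) * (2 * p.2 * D p))) ?_ ?_
  · intro p
    have h1 : HasFDerivAt (fun q : ℝ × ℝ => q.1) (ContinuousLinearMap.fst ℝ ℝ ℝ) p := hasFDerivAt_fst
    have h2 : HasFDerivAt (fun q : ℝ × ℝ => q.2) (ContinuousLinearMap.snd ℝ ℝ ℝ) p := hasFDerivAt_snd
    have hd : HasDerivAt ρ (D p) (p.1 ^ 2 + p.2 ^ 2) :=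
      (h.differentiable (by simp) _).hasDerivAt
    have h3 : HasFDerivAt (fun q : ℝ × ℝ => ρ (q.1 ^ 2 + q.2 ^ 2)) _ p :=
      hd.comp_hasFDerivAt p ((h1.pow 2).add (h2.pow 2))
    refine HasFDerivAt.congr_fderiv (((h3.cos.mul h1).sub (h3.sin.mul h2)).prodMk
      ((h3.sin.mul h1).add (h3.cos.mul h2))) ?_
    ext <;> simp [mat2, C, S, D] <;> ring
  · intro p
    rw [mat2_det]
    linear_combination Real.sin_sq_add_cos_sq (ρ (p.1 ^ 2 + p.2 ^ 2))

lemma exists_rho (r s : ℝ) (hrs : r < s) : ∃ ρ : ℝ → ℝ, ContDiff ℝ (⊤ : ℕ∞) ρ ∧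
    (∀ t, s < t → ρ t = 0) ∧ (∀ t, t ≤ r → ρ t = Real.pi) := by
  refine ⟨fun t => Real.pi * (1 - Real.smoothTransition ((t - r) / (s - r))), ?_, ?_, ?_⟩
  · have : ContDiff ℝ (⊤ : ℕ∞) (fun t : ℝ => (t - r) / (s - r)) := by fun_prop
    exact contDiff_const.mul (contDiff_const.sub (Real.smoothTransition.contDiff.comp this))
  · intro t ht
    beta_reduce
    rw [Real.smoothTransition.one_of_one_le]
    · simp
    · rw [le_div_iff₀ (by linarith)]; linarith
  · intro t ht
    beta_reduce
    rw [Real.smoothTransition.zero_of_nonpos]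
    · simp
    · exact div_nonpos_of_nonpos_of_nonneg (by linarith) (by linarith)

lemma disc_compact (s : ℝ) (hs1 : s < 1) : IsCompact {p : ℝ × ℝ | p.1 ^ 2 + p.2 ^ 2 ≤ s} := by
  have hc : IsClosed {p : ℝ × ℝ | p.1 ^ 2 + p.2 ^ 2 ≤ s} :=
    isClosed_le (by fun_prop) continuous_const
  have hI : IsCompact (Set.Icc ((-1 : ℝ), (-1 : ℝ)) (1, 1)) := isCompact_Icc
  refine hI.of_isClosed_subset hc ?_
  rintro ⟨x, y⟩ hp
  have hp' : x ^ 2 + y ^ 2 ≤ s := hp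
  have hx := abs_le.1 (abs_le_one_iff_mul_self_le_one.2 (show x * x ≤ 1 by nlinarith [sq_nonneg y]))
  have hy := abs_le.1 (abs_le_one_iff_mul_self_le_one.2 (show y * y ≤ 1 by nlinarith [sq_nonneg x]))
  exact ⟨⟨hx.1, hy.1⟩, ⟨hx.2, hy.2⟩⟩

/-- Half-turn of the unit disc, cut off near the boundary. -/
lemma disc_twist (r : ℝ) (hr : r < 1) :
    ∃ G : (ℝ × ℝ) ≃ₜ (ℝ × ℝ), Nice {p : ℝ × ℝ | p.1 ^ 2 + p.2 ^ 2 < 1} G ∧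
    ∀ p : ℝ × ℝ, p.1 ^ 2 + p.2 ^ 2 ≤ r → G p = (-p.1, -p.2) := by
  obtain ⟨s, hrs, hs1⟩ := exists_between hr
  obtain ⟨ρ, hρ, h0, hpi⟩ := exists_rho r s hrs
  have hcomp := disc_compact s hs1
  have hid : ∀ p : ℝ × ℝ, p ∉ {p : ℝ × ℝ | p.1 ^ 2 + p.2 ^ 2 ≤ s} → twist ρ hρ p = p := by
    intro p hp
    have hp' : s < p.1 ^ 2 + p.2 ^ 2 := not_le.1 hp
    simp [twist_apply, twistFun, h0 _ hp']
  have hsub : {p : ℝ × ℝ | p.1 ^ 2 + p.2 ^ 2 ≤ s} ⊆ {p : ℝ × ℝ | p.1 ^ 2 + p.2 ^ 2 < 1} := by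
    intro p hp
    simp only [Set.mem_ofPred_eq] at hp ⊢
    exact lt_of_le_of_lt hp hs1
  have hN : Nice {p : ℝ × ℝ | p.1 ^ 2 + p.2 ^ 2 < 1} (twist ρ hρ) :=
    { smooth := by rw [twist_coe]; exact twistFun_smooth ρ hρ
      smooth_symm := by rw [twist_coe_symm]; exact twistFun_smooth _ hρ.neg
      mp := twist_mp ρ hρ
      supp := ⟨_, hsub, hcomp, hid⟩ }
  refine ⟨twist ρ hρ, hN, ?_⟩
  intro p hp
  simp [twist_apply, twistFun, hpi _ hp]

noncomputable def kf (u : ℝ) : ℝ := u + Real.sin u * Real.cos u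

lemma kf_deriv (u : ℝ) : HasDerivAt kf (2 * Real.cos u ^ 2) u := by
  have := (hasDerivAt_id u).add ((Real.hasDerivAt_sin u).mul (Real.hasDerivAt_cos u))
  refine this.congr_deriv ?_
  linear_combination - Real.sin_sq_add_cos_sq u

lemma kf_cont : Continuous kf := by unfold kf; fun_prop

lemma kf_strictMono : StrictMono kf := by
  intro a b hab
  have h : kf b - kf a = (b - a) + Real.sin (b - a) * Real.cos (b + a) := by
    rw [Real.sin_sub, Real.cos_add]
    simp only [kf]
    have h1 := Real.sin_sq_add_cos_sq a
    have h2 := Real.sin_sq_add_cos_sq b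
    linear_combination (-Real.sin b * Real.cos b) * h1 + (Real.sin a * Real.cos a) * h2
  have h1 : |Real.sin (b - a)| < b - a := by
    have := Real.abs_sin_lt_abs (x := b - a) (by linarith)
    rwa [abs_of_pos (by linarith : 0 < b - a)] at this
  have h2 := Real.abs_cos_le_one (b + a)
  have h3 : |Real.sin (b - a) * Real.cos (b + a)| < b - a := by
    rw [abs_mul]
    nlinarith [abs_nonneg (Real.sin (b - a))]
  have := (abs_lt.1 h3).1
  linarith

lemma kf_surj : Function.Surjective kf := by
  have hb : ∀ u, |Real.sin u * Real.cos u| ≤ 1 := by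
    intro u
    rw [abs_mul]
    exact mul_le_one₀ (Real.abs_sin_le_one u) (abs_nonneg _) (Real.abs_cos_le_one u)
  refine kf_cont.surjective ?_ ?_
  · refine Filter.tendsto_atTop_mono (f := fun u => u - 1) ?_ ?_
    · intro u
      have := (abs_le.1 (hb u)).1
      simp only [kf]; linarith
    · exact Filter.tendsto_atTop_add_const_right _ _ Filter.tendsto_id
  · refine Filter.tendsto_atBot_mono (f := fun u => u + 1) ?_ ?_
    · intro u
      have := (abs_le.1 (hb u)).2
      simp only [kf]; linarith
    · exact Filter.tendsto_atBot_add_const_right _ _ Filter.tendsto_id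

noncomputable def kH : ℝ ≃ₜ ℝ := (StrictMono.orderIsoOfSurjective kf kf_strictMono kf_surj).toHomeomorph

lemma kH_apply (u : ℝ) : kH u = kf u := rfl

lemma kf_half : kf (Real.pi / 2) = Real.pi / 2 := by simp [kf]
lemma kf_neg (u : ℝ) : kf (-u) = - kf u := by simp [kf]; ring

lemma kH_symm_mem {X : ℝ} (h : X ∈ Set.Ioo (-(Real.pi / 2)) (Real.pi / 2)) :
    kH.symm X ∈ Set.Ioo (-(Real.pi / 2)) (Real.pi / 2) := by
  have h1 : kf (kH.symm X) = X := kH.apply_symm_apply X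
  constructor
  · rw [← kf_strictMono.lt_iff_lt, h1, kf_neg, kf_half]; exact h.1
  · rw [← kf_strictMono.lt_iff_lt, h1, kf_half]; exact h.2

lemma kf_mem {u : ℝ} (h : u ∈ Set.Ioo (-(Real.pi / 2)) (Real.pi / 2)) :
    kf u ∈ Set.Ioo (-(Real.pi / 2)) (Real.pi / 2) := by
  constructor
  · have := kf_strictMono h.1
    rwa [kf_neg, kf_half] at this
  · have := kf_strictMono h.2
    rwa [kf_half] at this

lemma kH_symm_smooth {X : ℝ} (h : X ∈ Set.Ioo (-(Real.pi / 2)) (Real.pi / 2)) :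
    ContDiffAt ℝ (⊤ : ℕ∞) kH.symm X := by
  have hm := kH_symm_mem h
  have hc := Real.cos_pos_of_mem_Ioo hm
  have := kH.toOpenPartialHomeomorph.contDiffAt_symm_deriv (n := (⊤ : ℕ∞)) (a := X)
    (f₀' := 2 * Real.cos (kH.symm X) ^ 2) (by positivity) (by simp) (kf_deriv _) ?_
  · exact this
  · have : ContDiff ℝ (⊤ : ℕ∞) kf := by unfold kf; fun_prop
    exact this.contDiffAt

section rect
variable (c1 c2 w h : ℝ)

noncomputable def rphi (p : ℝ × ℝ) : ℝ × ℝ :=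
  (c1 + w * (2 / Real.pi) * kf (Real.arcsin p.1), c2 + h * (p.2 / Real.sqrt (1 - p.1 ^ 2)))

noncomputable def rpsi (p : ℝ × ℝ) : ℝ × ℝ :=
  (Real.sin (kH.symm ((p.1 - c1) / w * (Real.pi / 2))),
    (p.2 - c2) / h * Real.cos (kH.symm ((p.1 - c1) / w * (Real.pi / 2))))

def Disc : Set (ℝ × ℝ) := {p : ℝ × ℝ | p.1 ^ 2 + p.2 ^ 2 < 1}
def Rect : Set (ℝ × ℝ) := Set.Ioo (c1 - w) (c1 + w) ×ˢ Set.Ioo (c2 - h) (c2 + h)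

lemma Disc_open : IsOpen Disc := isOpen_lt (by fun_prop) continuous_const
lemma Rect_open : IsOpen (Rect c1 c2 w h) := isOpen_Ioo.prod isOpen_Ioo

variable {c1 c2 w h}

lemma Disc_fst {p : ℝ × ℝ} (hp : p ∈ Disc) : p.1 ∈ Set.Ioo (-1 : ℝ) 1 := by
  have hp' : p.1 ^ 2 + p.2 ^ 2 < 1 := hp
  have : p.1 ^ 2 < 1 := by nlinarith [sq_nonneg p.2]
  exact abs_lt.1 ((sq_lt_one_iff_abs_lt_one _).1 this)

lemma arcsin_mem {x : ℝ} (hx : x ∈ Set.Ioo (-1 : ℝ) 1) :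
    Real.arcsin x ∈ Set.Ioo (-(Real.pi / 2)) (Real.pi / 2) :=
  ⟨Real.neg_pi_div_two_lt_arcsin.2 hx.1, Real.arcsin_lt_pi_div_two.2 hx.2⟩

lemma rphi_mapsTo (hw : 0 < w) (hh : 0 < h) : Set.MapsTo (rphi c1 c2 w h) Disc (Rect c1 c2 w h) := by
  intro p hp
  have h1 := Disc_fst hp
  have hp' : p.1 ^ 2 + p.2 ^ 2 < 1 := hp
  have hk := kf_mem (arcsin_mem h1)
  have hs := sqrt_pos_of_Ioo h1
  have hpi := Real.pi_pos
  have hsq := Real.sq_sqrt (show 0 ≤ 1 - p.1 ^ 2 by nlinarith [sq_nonneg p.2])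
  have h2 : |p.2 / Real.sqrt (1 - p.1 ^ 2)| < 1 := by
    rw [abs_div, abs_of_pos hs, div_lt_one hs]
    apply abs_lt_of_sq_lt_sq _ hs.le
    rw [hsq]; linarith
  have h3 : |2 / Real.pi * kf (Real.arcsin p.1)| < 1 := by
    rw [abs_mul, abs_of_pos (by positivity : 0 < 2 / Real.pi), div_mul_eq_mul_div, div_lt_one hpi]
    have : |kf (Real.arcsin p.1)| < Real.pi / 2 := abs_lt.2 hk
    linarith
  rw [abs_lt] at h2 h3
  simp only [Rect, rphi, Set.mem_prod, Set.mem_Ioo, mul_assoc]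
  refine ⟨⟨?_, ?_⟩, ⟨?_, ?_⟩⟩ <;> nlinarith

lemma rpsi_aux (hw : 0 < w) {p : ℝ × ℝ} (hp : p ∈ Rect c1 c2 w h) :
    (p.1 - c1) / w * (Real.pi / 2) ∈ Set.Ioo (-(Real.pi / 2)) (Real.pi / 2) := by
  have hpi := Real.pi_pos
  have h1 := hp.1.1
  have h2 := hp.1.2
  have a : (p.1 - c1) / w < 1 := by rw [div_lt_one hw]; linarith
  have b : -1 < (p.1 - c1) / w := by rw [lt_div_iff₀ hw]; linarith
  constructor <;> nlinarith

lemma rpsi_mapsTo (hw : 0 < w) (hh : 0 < h) : Set.MapsTo (rpsi c1 c2 w h) (Rect c1 c2 w h) Disc := by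
  intro p hp
  have hu := kH_symm_mem (rpsi_aux hw hp)
  have hc := Real.cos_pos_of_mem_Ioo hu
  have h1 := hp.2.1
  have h2 := hp.2.2
  have a : (p.2 - c2) / h < 1 := by rw [div_lt_one hh]; linarith
  have b : -1 < (p.2 - c2) / h := by rw [lt_div_iff₀ hh]; linarith
  have hab : ((p.2 - c2) / h) ^ 2 < 1 := (sq_lt_one_iff_abs_lt_one _).2 (abs_lt.2 ⟨b, a⟩)
  change (rpsi c1 c2 w h p).1 ^ 2 + (rpsi c1 c2 w h p).2 ^ 2 < 1
  simp only [rpsi]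
  set u := kH.symm ((p.1 - c1) / w * (Real.pi / 2))
  have := Real.sin_sq_add_cos_sq u
  have h3 : 0 < Real.cos u ^ 2 := by positivity
  rw [mul_pow]
  nlinarith

lemma rpsi_rphi (hw : 0 < w) (hh : 0 < h) (p : ℝ × ℝ) (hp : p ∈ Disc) :
    rpsi c1 c2 w h (rphi c1 c2 w h p) = p := by
  have h1 := Disc_fst hp
  have hs := sqrt_pos_of_Ioo h1
  have hpi := Real.pi_pos
  have e : (c1 + w * (2 / Real.pi) * kf (Real.arcsin p.1) - c1) / w * (Real.pi / 2)
      = kH (Real.arcsin p.1) := by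
    rw [kH_apply]; field_simp; ring
  ext
  · simp only [rpsi, rphi]
    rw [e, kH.symm_apply_apply, Real.sin_arcsin h1.1.le h1.2.le]
  · simp only [rpsi, rphi]
    rw [e, kH.symm_apply_apply, Real.cos_arcsin]
    field_simp
    ring

lemma rphi_rpsi (hw : 0 < w) (hh : 0 < h) (p : ℝ × ℝ) (hp : p ∈ Rect c1 c2 w h) :
    rphi c1 c2 w h (rpsi c1 c2 w h p) = p := by
  have hpi := Real.pi_pos
  have hu := kH_symm_mem (rpsi_aux hw hp)
  have hc := Real.cos_pos_of_mem_Ioo hu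
  have e := Real.arcsin_sin hu.1.le hu.2.le
  ext
  · simp only [rpsi, rphi]
    rw [e, ← kH_apply, kH.apply_symm_apply]
    field_simp
    ring
  · simp only [rpsi, rphi]
    rw [← Real.cos_eq_sqrt_one_sub_sin_sq hu.1.le hu.2.le]
    rw [mul_div_assoc, div_self hc.ne']
    field_simp
    ring

lemma rphi_smooth : ContDiffOn ℝ (⊤ : ℕ∞) (rphi c1 c2 w h) Disc := by
  intro p hp
  have h1 := Disc_fst hp
  have hs := sqrt_pos_of_Ioo h1
  have hk : ContDiff ℝ (⊤ : ℕ∞) kf := by unfold kf; fun_prop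
  have ha : ContDiffAt ℝ (⊤ : ℕ∞) (fun q : ℝ × ℝ => Real.arcsin q.1) p :=
    (Real.contDiffAt_arcsin h1.1.ne' h1.2.ne).comp p contDiffAt_fst
  have hq : ContDiffAt ℝ (⊤ : ℕ∞) (fun q : ℝ × ℝ => Real.sqrt (1 - q.1 ^ 2)) p :=
    (Real.contDiffAt_sqrt (Real.sqrt_pos.1 hs).ne').comp p (by fun_prop)
  have := (contDiffAt_const (c := c1)).add ((contDiffAt_const (c := w * (2 / Real.pi))).mul
    (hk.contDiffAt.comp p ha))
  have h2 := (contDiffAt_const (c := c2)).add ((contDiffAt_const (c := h)).mul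
    (contDiffAt_snd.div hq hs.ne'))
  exact (this.prodMk h2).contDiffWithinAt

lemma rpsi_smooth (hw : 0 < w) : ContDiffOn ℝ (⊤ : ℕ∞) (rpsi c1 c2 w h) (Rect c1 c2 w h) := by
  intro p hp
  have hk := kH_symm_smooth (rpsi_aux hw hp)
  have hk2 : ContDiffAt ℝ (⊤ : ℕ∞) (fun q : ℝ × ℝ => kH.symm ((q.1 - c1) / w * (Real.pi / 2))) p :=
    ContDiffAt.comp p hk (by fun_prop)
  have h1 := Real.contDiff_sin.contDiffAt.comp p hk2
  have h2 := Real.contDiff_cos.contDiffAt.comp p hk2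
  have h3 : ContDiffAt ℝ (⊤ : ℕ∞) (fun q : ℝ × ℝ => (q.2 - c2) / h) p := by fun_prop
  exact (h1.prodMk (h3.mul h2)).contDiffWithinAt

lemma rphi_deriv (p : ℝ × ℝ) (hp : p ∈ Disc) :
    HasFDerivAt (rphi c1 c2 w h) (mat2 (w * (2 / Real.pi) * (2 * Real.sqrt (1 - p.1 ^ 2))) 0
      (h * p.2 * p.1 / (Real.sqrt (1 - p.1 ^ 2)) ^ 3) (h / Real.sqrt (1 - p.1 ^ 2))) p := by
  have hx := Disc_fst hp
  have hs := sqrt_pos_of_Ioo hx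
  have hsq := Real.sq_sqrt (Real.sqrt_pos.1 hs).le
  have h1 : HasFDerivAt (fun q : ℝ × ℝ => q.1) (ContinuousLinearMap.fst ℝ ℝ ℝ) p := hasFDerivAt_fst
  have h2 : HasFDerivAt (fun q : ℝ × ℝ => q.2) (ContinuousLinearMap.snd ℝ ℝ ℝ) p := hasFDerivAt_snd
  have ha := (Real.hasDerivAt_arcsin hx.1.ne' hx.2.ne)
  have h3 : HasFDerivAt (fun q : ℝ × ℝ => kf (Real.arcsin q.1)) _ p :=
    ((kf_deriv _).comp p.1 ha).comp_hasFDerivAt p h1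
  have h4 : HasFDerivAt (fun q : ℝ × ℝ => Real.sqrt (1 - q.1 ^ 2)) _ p :=
    ((h1.pow 2).const_sub 1).sqrt (Real.sqrt_pos.1 hs).ne'
  have h5 : HasFDerivAt (fun q : ℝ × ℝ => (Real.sqrt (1 - q.1 ^ 2))⁻¹) _ p :=
    (hasDerivAt_inv hs.ne').comp_hasFDerivAt p h4
  have e : rphi c1 c2 w h = fun p : ℝ × ℝ => (c1 + w * (2 / Real.pi) * kf (Real.arcsin p.1),
      c2 + h * (p.2 * (Real.sqrt (1 - p.1 ^ 2))⁻¹)) := by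
    funext p
    simp only [rphi, div_eq_mul_inv]
  rw [e]
  refine HasFDerivAt.congr_fderiv (((h3.const_mul (w * (2 / Real.pi))).const_add c1).prodMk
    (((h2.mul h5).const_mul h).const_add c2)) ?_
  have hc : Real.cos (Real.arcsin p.1) = Real.sqrt (1 - p.1 ^ 2) := Real.cos_arcsin _
  ext <;> simp [mat2, hc] <;> field_simp <;> simp

lemma rphi_vol (hw : 0 < w) (hh : 0 < h) (A : Set (ℝ × ℝ)) (hA : A ⊆ Disc) (hm : MeasurableSet A) :
    volume (rphi c1 c2 w h '' A) = ENNReal.ofReal (4 * w * h / Real.pi) * volume A := by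
  rw [← lintegral_abs_det_fderiv_eq_addHaar_image volume hm
    (fun p hp => (rphi_deriv p (hA hp)).hasFDerivWithinAt)
    (Set.LeftInvOn.injOn (f₁' := rpsi c1 c2 w h) fun p hp => rpsi_rphi hw hh p (hA hp))]
  rw [← setLIntegral_const]
  apply setLIntegral_congr_fun hm
  intro p hp
  have hs := sqrt_pos_of_Ioo (Disc_fst (hA hp))
  have hpi := Real.pi_pos
  simp only [mat2_det]
  congr 1
  rw [abs_of_nonneg]
  · field_simp; ring
  · have : 0 ≤ w * (2 / Real.pi) * (2 * Real.sqrt (1 - p.1 ^ 2)) * (h / Real.sqrt (1 - p.1 ^ 2)) := by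
      positivity
    linarith

lemma rphi_neg (p : ℝ × ℝ) : rphi c1 c2 w h (-p.1, -p.2) =
    (2 * c1 - (rphi c1 c2 w h p).1, 2 * c2 - (rphi c1 c2 w h p).2) := by
  simp only [rphi, Real.arcsin_neg, kf_neg, neg_sq]
  ext <;> simp only <;> ring

lemma annulus_meas (r : ℝ) : MeasurableSet {p : ℝ × ℝ | p ∈ Disc ∧ r < p.1 ^ 2 + p.2 ^ 2} := by
  have h : IsOpen {p : ℝ × ℝ | r < p.1 ^ 2 + p.2 ^ 2} := isOpen_lt continuous_const (by fun_prop)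
  exact (Disc_open.inter h).measurableSet

lemma annulus_small (κ : ℝ≥0∞) (hκ : 0 < κ) : ∃ r < (1 : ℝ),
    volume {p : ℝ × ℝ | p ∈ Disc ∧ r < p.1 ^ 2 + p.2 ^ 2} < κ := by
  let A : ℕ → Set (ℝ × ℝ) := fun n => {p | p ∈ Disc ∧ 1 - 1 / ((n : ℝ) + 1) < p.1 ^ 2 + p.2 ^ 2}
  have hm : ∀ n, MeasurableSet (A n) := fun n => annulus_meas _
  have hanti : Antitone A := by
    intro m n hmn p hp
    refine ⟨hp.1, lt_of_le_of_lt ?_ hp.2⟩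
    have : (m : ℝ) ≤ n := by exact_mod_cast hmn
    have := one_div_le_one_div_of_le (by positivity : (0 : ℝ) < (m : ℝ) + 1) (by linarith : (m : ℝ) + 1 ≤ n + 1)
    linarith
  have hfin : volume (A 0) ≠ ∞ := by
    have hsub : A 0 ⊆ Set.Icc (-1, -1) (1, 1) := by
      rintro ⟨x, y⟩ hp
      have hp' : x ^ 2 + y ^ 2 < 1 := hp.1
      have hx := abs_le.1 (abs_le_one_iff_mul_self_le_one.2 (show x * x ≤ 1 by nlinarith [sq_nonneg y]))
      have hy := abs_le.1 (abs_le_one_iff_mul_self_le_one.2 (show y * y ≤ 1 by nlinarith [sq_nonneg x]))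
      exact ⟨⟨hx.1, hy.1⟩, ⟨hx.2, hy.2⟩⟩
    have hI : IsCompact (Set.Icc ((-1 : ℝ), (-1 : ℝ)) (1, 1)) := isCompact_Icc
    exact ((measure_mono hsub).trans_lt hI.measure_lt_top).ne
  have ht := tendsto_measure_iInter_atTop (μ := volume) (fun n => (hm n).nullMeasurableSet) hanti ⟨0, hfin⟩
  have he : ⋂ n, A n = ∅ := by
    ext p
    simp only [Set.mem_iInter, Set.mem_empty_iff_false, iff_false, not_forall]
    by_cases hp : p ∈ Disc
    · have hp' : p.1 ^ 2 + p.2 ^ 2 < 1 := hp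
      obtain ⟨n, hn⟩ := exists_nat_one_div_lt (show 0 < 1 - (p.1 ^ 2 + p.2 ^ 2) by linarith)
      refine ⟨n, fun h => ?_⟩
      have := h.2
      linarith
    · exact ⟨0, fun h => hp h.1⟩
  rw [he, measure_empty] at ht
  obtain ⟨n, hn⟩ := (ht.eventually (gt_mem_nhds hκ)).exists
  refine ⟨1 - 1 / ((n : ℝ) + 1), ?_, hn⟩
  have : 0 < 1 / ((n : ℝ) + 1) := by positivity
  linarith

lemma rect_reflect (c1 c2 w h : ℝ) (hw : 0 < w) (hh : 0 < h) (κ : ℝ≥0∞) (hκ : 0 < κ) :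
    ∃ G : (ℝ × ℝ) ≃ₜ (ℝ × ℝ), Nice (Rect c1 c2 w h) G ∧
      volume {p ∈ Rect c1 c2 w h | G p ≠ (2 * c1 - p.1, 2 * c2 - p.2)} ≤ κ := by
  have hpi := Real.pi_pos
  have hc : 0 < 4 * w * h / Real.pi := by positivity
  obtain ⟨r, hr, hv⟩ := annulus_small (κ / ENNReal.ofReal (4 * w * h / Real.pi))
    (ENNReal.div_pos hκ.ne' ENNReal.ofReal_ne_top)
  obtain ⟨T, hT, hT2⟩ := disc_twist r hr
  obtain ⟨g, s1, s2, hmp, hg, K, hK, hKc, hgK⟩ := transport 𝓘(ℝ, ℝ × ℝ) volume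
    (rphi c1 c2 w h) (rpsi c1 c2 w h) Disc (Rect c1 c2 w h) Disc_open (Rect_open _ _ _ _)
    (rphi_mapsTo hw hh) (rpsi_mapsTo hw hh) (rpsi_rphi hw hh) (rphi_rpsi hw hh)
    rphi_smooth.contMDiffOn (rpsi_smooth hw).contMDiffOn _
    (fun A hA hm _ => rphi_vol hw hh A hA hm) T hT
  refine ⟨g, ⟨contMDiff_iff_contDiff.1 s1, contMDiff_iff_contDiff.1 s2, hmp, K, hK, hKc, hgK⟩, ?_⟩
  have hsub : {p ∈ Rect c1 c2 w h | g p ≠ (2 * c1 - p.1, 2 * c2 - p.2)} ⊆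
      rphi c1 c2 w h '' {p : ℝ × ℝ | p ∈ Disc ∧ r < p.1 ^ 2 + p.2 ^ 2} := by
    rintro p ⟨hp, hne⟩
    have hq := rpsi_mapsTo hw hh hp
    have e := rphi_rpsi hw hh p hp
    refine ⟨rpsi c1 c2 w h p, ⟨hq, ?_⟩, e⟩
    by_contra hcon
    apply hne
    have h1 := hg _ hq
    rw [hT2 _ (not_lt.1 hcon), rphi_neg, e] at h1
    exact h1
  refine (measure_mono hsub).trans ?_
  rw [rphi_vol hw hh _ (fun p hp => hp.1) (annulus_meas r)]
  have := (ENNReal.le_div_iff_mul_le (Or.inl (by simpa using hc)) (Or.inl ENNReal.ofReal_ne_top)).1 hv.le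
  rwa [mul_comm]
end rect

def Sq : Set (ℝ × ℝ) := Set.Ioo 0 1 ×ˢ Set.Ioo 0 1

/-- `T` is approximable in measure by nice maps. -/
def App (T : ℝ × ℝ → ℝ × ℝ) : Prop := ∀ κ : ℝ≥0∞, 0 < κ →
  ∃ G : (ℝ × ℝ) ≃ₜ (ℝ × ℝ), Nice Sq G ∧ volume {p ∈ Sq | G p ≠ T p} ≤ κ

lemma App.comp {T T' : ℝ × ℝ → ℝ × ℝ} (h : App T) (h' : App T') : App (T' ∘ T) := by
  intro κ hκ
  obtain ⟨G, hG, hv⟩ := h (κ / 2) (ENNReal.half_pos hκ.ne')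
  obtain ⟨G', hG', hv'⟩ := h' (κ / 2) (ENNReal.half_pos hκ.ne')
  refine ⟨G.trans G', hG.trans hG', ?_⟩
  have hsub : {p ∈ Sq | (G.trans G') p ≠ (T' ∘ T) p} ⊆
      {p ∈ Sq | G p ≠ T p} ∪ G ⁻¹' {p ∈ Sq | G' p ≠ T' p} := by
    rintro p ⟨hp, hne⟩
    by_cases h1 : G p = T p
    · right
      refine ⟨hG.mem hp, fun h2 => hne ?_⟩
      rw [Homeomorph.trans_apply, h2, Function.comp, h1]
    · left; exact ⟨hp, h1⟩
  refine (measure_mono hsub).trans ((measure_union_le _ _).trans ?_)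
  have : volume (G ⁻¹' {p ∈ Sq | G' p ≠ T' p}) = volume {p ∈ Sq | G' p ≠ T' p} :=
    MeasurePreserving.measure_preimage_equiv (f := G.toMeasurableEquiv) hG.mp _
  rw [this]
  calc _ ≤ κ / 2 + κ / 2 := add_le_add hv hv'
    _ = κ := ENNReal.add_halves κ

open Classical in
noncomputable def reflT (c1 c2 w h : ℝ) (p : ℝ × ℝ) : ℝ × ℝ :=
  if p ∈ Rect c1 c2 w h then (2 * c1 - p.1, 2 * c2 - p.2) else p

lemma reflT_of_mem {c1 c2 w h : ℝ} {p : ℝ × ℝ} (hp : p ∈ Rect c1 c2 w h) :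
    reflT c1 c2 w h p = (2 * c1 - p.1, 2 * c2 - p.2) := by simp [reflT, hp]

lemma reflT_of_notMem {c1 c2 w h : ℝ} {p : ℝ × ℝ} (hp : p ∉ Rect c1 c2 w h) :
    reflT c1 c2 w h p = p := by simp [reflT, hp]

lemma App_reflT {c1 c2 w h : ℝ} (hw : 0 < w) (hh : 0 < h) (hs : Rect c1 c2 w h ⊆ Sq) :
    App (reflT c1 c2 w h) := by
  intro κ hκ
  obtain ⟨G, hG, hv⟩ := rect_reflect c1 c2 w h hw hh κ hκ
  refine ⟨G, hG.mono hs, (measure_mono ?_).trans hv⟩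
  rintro p ⟨hp, hne⟩
  by_cases h1 : p ∈ Rect c1 c2 w h
  · rw [reflT_of_mem h1] at hne
    exact ⟨h1, hne⟩
  · rw [reflT_of_notMem h1] at hne
    exact absurd (hG.eq_of_notMem h1) hne

lemma App_id : App id := by
  intro κ _
  exact ⟨Homeomorph.refl _, Nice.refl _, by simp⟩

section grid
variable {NX NY : ℕ}

def Box (b : Fin NX × Fin NY) : Set (ℝ × ℝ) :=
  {p | ((b.1 : ℕ) : ℝ) < NX * p.1 ∧ NX * p.1 < ((b.1 : ℕ) : ℝ) + 1 ∧
    ((b.2 : ℕ) : ℝ) < NY * p.2 ∧ NY * p.2 < ((b.2 : ℕ) : ℝ) + 1}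

noncomputable def shiftB (b b' : Fin NX × Fin NY) (p : ℝ × ℝ) : ℝ × ℝ :=
  (p.1 + (((b'.1 : ℕ) : ℝ) - ((b.1 : ℕ) : ℝ)) / NX, p.2 + (((b'.2 : ℕ) : ℝ) - ((b.2 : ℕ) : ℝ)) / NY)

def PermOK (π : Equiv.Perm (Fin NX × Fin NY)) : Prop :=
  ∃ T, App T ∧ ∀ b, ∀ p ∈ Box b, T p = shiftB b (π b) p

lemma posX (b : Fin NX × Fin NY) : (0 : ℝ) < NX := by
  have := b.1.pos; exact_mod_cast this
lemma posY (b : Fin NX × Fin NY) : (0 : ℝ) < NY := by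
  have := b.2.pos; exact_mod_cast this

lemma shiftB_mem {b b' : Fin NX × Fin NY} {p : ℝ × ℝ} (hp : p ∈ Box b) : shiftB b b' p ∈ Box b' := by
  have hX := posX b
  have hY := posY b
  obtain ⟨h1, h2, h3, h4⟩ := hp
  have e1 : (NX : ℝ) * (shiftB b b' p).1 = NX * p.1 + (((b'.1 : ℕ) : ℝ) - ((b.1 : ℕ) : ℝ)) := by
    simp only [shiftB]; field_simp
  have e2 : (NY : ℝ) * (shiftB b b' p).2 = NY * p.2 + (((b'.2 : ℕ) : ℝ) - ((b.2 : ℕ) : ℝ)) := by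
    simp only [shiftB]; field_simp
  refine ⟨?_, ?_, ?_, ?_⟩
  · rw [e1]; linarith
  · rw [e1]; linarith
  · rw [e2]; linarith
  · rw [e2]; linarith

lemma shiftB_comp (b b' b'' : Fin NX × Fin NY) (p : ℝ × ℝ) :
    shiftB b' b'' (shiftB b b' p) = shiftB b b'' p := by
  simp only [shiftB]
  ext <;> simp only <;> ring

lemma PermOK.mul {π σ : Equiv.Perm (Fin NX × Fin NY)} (h : PermOK π) (h' : PermOK σ) :
    PermOK (π * σ) := by
  obtain ⟨T, hT, hT2⟩ := h
  obtain ⟨S, hS, hS2⟩ := h'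
  refine ⟨T ∘ S, hS.comp hT, fun b p hp => ?_⟩
  rw [Function.comp, hS2 b p hp, hT2 _ _ (shiftB_mem hp), shiftB_comp]
  rfl

lemma PermOK.one : PermOK (1 : Equiv.Perm (Fin NX × Fin NY)) := by
  refine ⟨id, App_id, fun b p _ => ?_⟩
  simp [shiftB]

lemma nat_unique {a b : ℕ} {x : ℝ} (h1 : (a : ℝ) < x) (h2 : x < b + 1) : a ≤ b := by
  have : (a : ℝ) < ((b + 1 : ℕ) : ℝ) := by push_cast; linarith
  have := Nat.cast_lt.1 this
  omega

lemma Box_unique {b b' : Fin NX × Fin NY} {p : ℝ × ℝ} (h : p ∈ Box b) (h' : p ∈ Box b') : b = b' := by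
  obtain ⟨h1, h2, h3, h4⟩ := h
  obtain ⟨h1', h2', h3', h4'⟩ := h'
  ext
  · exact le_antisymm (nat_unique h1 h2') (nat_unique h1' h2)
  · exact le_antisymm (nat_unique h3 h4') (nat_unique h3' h4)

noncomputable def cenX (b : Fin NX × Fin NY) : ℝ := (((b.1 : ℕ) : ℝ) + 1 / 2) / NX
noncomputable def cenY (b : Fin NX × Fin NY) : ℝ := (((b.2 : ℕ) : ℝ) + 1 / 2) / NY

lemma Box_eq (b : Fin NX × Fin NY) : Box b = Rect (cenX b) (cenY b) (1 / (2 * NX)) (1 / (2 * NY)) := by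
  have hX := posX b
  have hY := posY b
  ext p
  simp only [Box, Rect, cenX, cenY, Set.mem_ofPred_eq, Set.mem_prod, Set.mem_Ioo]
  have e1 : (((b.1 : ℕ) : ℝ) + 1 / 2) / NX - 1 / (2 * NX) = ((b.1 : ℕ) : ℝ) / NX := by field_simp; ring
  have e2 : (((b.1 : ℕ) : ℝ) + 1 / 2) / NX + 1 / (2 * NX) = (((b.1 : ℕ) : ℝ) + 1) / NX := by field_simp; ring
  have e3 : (((b.2 : ℕ) : ℝ) + 1 / 2) / NY - 1 / (2 * NY) = ((b.2 : ℕ) : ℝ) / NY := by field_simp; ring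
  have e4 : (((b.2 : ℕ) : ℝ) + 1 / 2) / NY + 1 / (2 * NY) = (((b.2 : ℕ) : ℝ) + 1) / NY := by field_simp; ring
  rw [e1, e2, e3, e4, div_lt_iff₀ hX, div_lt_iff₀ hY, lt_div_iff₀ hX, lt_div_iff₀ hY, mul_comm p.1, mul_comm p.2]
  tauto

lemma Box_sub (b : Fin NX × Fin NY) : Box b ⊆ Sq := by
  have hX := posX b
  have hY := posY b
  rintro p ⟨h1, h2, h3, h4⟩
  have a1 : ((b.1 : ℕ) : ℝ) + 1 ≤ NX := by exact_mod_cast b.1.2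
  have a2 : ((b.2 : ℕ) : ℝ) + 1 ≤ NY := by exact_mod_cast b.2.2
  have a3 : (0 : ℝ) ≤ ((b.1 : ℕ) : ℝ) := by positivity
  have a4 : (0 : ℝ) ≤ ((b.2 : ℕ) : ℝ) := by positivity
  refine ⟨⟨?_, ?_⟩, ⟨?_, ?_⟩⟩
  · exact pos_of_mul_pos_right (lt_of_le_of_lt a3 h1) hX.le
  · nlinarith
  · exact pos_of_mul_pos_right (lt_of_le_of_lt a4 h3) hY.le
  · nlinarith

lemma swap_adj (b b' : Fin NX × Fin NY) (hne : b ≠ b') (w h : ℝ) (hw : 0 < w) (hh : 0 < h)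
    (hR : Rect ((cenX b + cenX b') / 2) ((cenY b + cenY b') / 2) w h ⊆ Sq)
    (h1 : Box b ⊆ Rect ((cenX b + cenX b') / 2) ((cenY b + cenY b') / 2) w h)
    (h2 : Box b' ⊆ Rect ((cenX b + cenX b') / 2) ((cenY b + cenY b') / 2) w h)
    (h3 : ∀ a p, p ∈ Box a → p ∈ Rect ((cenX b + cenX b') / 2) ((cenY b + cenY b') / 2) w h →
      a = b ∨ a = b') : PermOK (Equiv.swap b b') := by
  have hX := posX b
  have hY := posY b
  let TR := reflT ((cenX b + cenX b') / 2) ((cenY b + cenY b') / 2) w h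
  let TB : Fin NX × Fin NY → ℝ × ℝ → ℝ × ℝ := fun a => reflT (cenX a) (cenY a) (1 / (2 * NX)) (1 / (2 * NY))
  have hB : ∀ a, App (TB a) := fun a => App_reflT (by positivity) (by positivity)
    (by rw [← Box_eq]; exact Box_sub a)
  have key : ∀ a a' : Fin NX × Fin NY, a ≠ a' → (cenX b + cenX b' = cenX a + cenX a') →
      (cenY b + cenY b' = cenY a + cenY a') →
      Box a ⊆ Rect ((cenX b + cenX b') / 2) ((cenY b + cenY b') / 2) w h → ∀ p ∈ Box a,
      TR p ∈ Box a' ∧ TB a' (TR p) = shiftB a a' p := by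
    intro a a' haa ex ey hsub p hp
    have e1 : TR p = (cenX a + cenX a' - p.1, cenY a + cenY a' - p.2) := by
      simp only [TR]
      rw [reflT_of_mem (hsub hp)]
      ext <;> simp only <;> linarith
    have hm : TR p ∈ Box a' := by
      rw [e1]
      obtain ⟨u1, u2, u3, u4⟩ := hp
      have f1 : (NX : ℝ) * (cenX a + cenX a' - p.1) = ((a.1 : ℕ) : ℝ) + ((a'.1 : ℕ) : ℝ) + 1 - NX * p.1 := by
        simp only [cenX]; field_simp; ring
      have f2 : (NY : ℝ) * (cenY a + cenY a' - p.2) = ((a.2 : ℕ) : ℝ) + ((a'.2 : ℕ) : ℝ) + 1 - NY * p.2 := by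
        simp only [cenY]; field_simp; ring
      refine ⟨?_, ?_, ?_, ?_⟩ <;> simp only [f1, f2] <;> linarith
    refine ⟨hm, ?_⟩
    simp only [TB]
    rw [reflT_of_mem (by rw [← Box_eq]; exact hm), e1]
    simp only [shiftB, cenX, cenY]
    ext <;> simp only <;> ring
  have hnot : ∀ a a' : Fin NX × Fin NY, a ≠ a' → ∀ p ∈ Box a, TB a' p = p := by
    intro a a' haa p hp
    apply reflT_of_notMem
    rw [← Box_eq]
    exact fun h => haa (Box_unique hp h)
  refine ⟨TB b' ∘ (TB b ∘ TR), ((App_reflT hw hh hR).comp (hB b)).comp (hB b'), ?_⟩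
  intro a p hp
  simp only [Function.comp]
  by_cases hab : a = b
  · subst hab
    obtain ⟨k1, k2⟩ := key a b' hne rfl rfl h1 p hp
    rw [hnot b' a hne.symm _ k1, k2, Equiv.swap_apply_left]
  · by_cases hab' : a = b'
    · subst hab'
      obtain ⟨k1, k2⟩ := key a b hne.symm (add_comm _ _) (add_comm _ _) h2 p hp
      rw [k2, hnot b a hne _ (by rw [← k2]; rw [k2]; exact shiftB_mem hp), Equiv.swap_apply_right]
    · have : TR p = p := by
        apply reflT_of_notMem
        intro hc
        rcases h3 a p hp hc with h | h
        · exact hab h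
        · exact hab' h
      rw [this, hnot a b hab p hp, hnot a b' hab' p hp, Equiv.swap_apply_of_ne_of_ne hab hab']
      simp [shiftB]

lemma swap_trans {a b c : Fin NX × Fin NY} (h1 : PermOK (Equiv.swap a b)) (h2 : PermOK (Equiv.swap b c)) :
    PermOK (Equiv.swap a c) := by
  by_cases hab : a = b
  · subst hab; exact h2
  by_cases hbc : b = c
  · subst hbc; exact h1
  by_cases hac : a = c
  · subst hac; rw [Equiv.swap_self]; exact PermOK.one
  have := Equiv.swap_mul_swap_mul_swap (x := c) (y := b) (z := a) (Ne.symm hbc) (Ne.symm hac)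
  rw [← this]
  rw [Equiv.swap_comm b c] at h2
  rw [Equiv.swap_comm a b] at h1
  exact (h1.mul h2).mul h1

lemma swap_right (i : ℕ) (hi : i + 1 < NX) (j : Fin NY) :
    PermOK (Equiv.swap ((⟨i, by omega⟩ : Fin NX), j) (⟨i + 1, hi⟩, j)) := by
  have hX : (0 : ℝ) < NX := by exact_mod_cast (by omega : 0 < NX)
  have hY : (0 : ℝ) < NY := by exact_mod_cast j.pos
  have hmem : ∀ p : ℝ × ℝ, p ∈ Rect ((cenX ((⟨i, by omega⟩ : Fin NX), j) + cenX ((⟨i + 1, hi⟩ : Fin NX), j)) / 2)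
      ((cenY ((⟨i, by omega⟩ : Fin NX), j) + cenY ((⟨i + 1, hi⟩ : Fin NX), j)) / 2) (1 / NX) (1 / (2 * NY)) ↔
      (i : ℝ) < NX * p.1 ∧ NX * p.1 < i + 2 ∧ ((j : ℕ) : ℝ) < NY * p.2 ∧ NY * p.2 < ((j : ℕ) : ℝ) + 1 := by
    intro p
    have e1 : (((i : ℝ) + 1 / 2) / NX + ((i : ℝ) + 1 + 1 / 2) / NX) / 2 - 1 / NX = i / NX := by field_simp; ring
    have e2 : (((i : ℝ) + 1 / 2) / NX + ((i : ℝ) + 1 + 1 / 2) / NX) / 2 + 1 / NX = (i + 2) / NX := by field_simp; ring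
    have e3 : ((((j : ℕ) : ℝ) + 1 / 2) / NY + (((j : ℕ) : ℝ) + 1 / 2) / NY) / 2 - 1 / (2 * NY) = ((j : ℕ) : ℝ) / NY := by field_simp; ring
    have e4 : ((((j : ℕ) : ℝ) + 1 / 2) / NY + (((j : ℕ) : ℝ) + 1 / 2) / NY) / 2 + 1 / (2 * NY) = (((j : ℕ) : ℝ) + 1) / NY := by field_simp; ring
    simp only [Rect, cenX, cenY, Set.mem_prod, Set.mem_Ioo]
    push_cast
    rw [e1, e2, e3, e4, div_lt_iff₀ hX, div_lt_iff₀ hY, lt_div_iff₀ hX, lt_div_iff₀ hY, mul_comm p.1, mul_comm p.2]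
    tauto
  refine swap_adj _ _ ?_ (1 / NX) (1 / (2 * NY)) (by positivity) (by positivity) ?_ ?_ ?_ ?_
  · simp
  · intro p hp
    obtain ⟨h1, h2, h3, h4⟩ := (hmem p).1 hp
    have a1 : (i : ℝ) + 2 ≤ NX := by exact_mod_cast (by omega : i + 2 ≤ NX)
    have a2 : ((j : ℕ) : ℝ) + 1 ≤ NY := by exact_mod_cast j.2
    have a3 : (0 : ℝ) ≤ (i : ℝ) := by positivity
    have a4 : (0 : ℝ) ≤ ((j : ℕ) : ℝ) := by positivity
    refine ⟨⟨?_, ?_⟩, ⟨?_, ?_⟩⟩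
    · exact pos_of_mul_pos_right (lt_of_le_of_lt a3 h1) hX.le
    · nlinarith
    · exact pos_of_mul_pos_right (lt_of_le_of_lt a4 h3) hY.le
    · nlinarith
  · rintro p ⟨h1, h2, h3, h4⟩
    rw [hmem]
    simp only at h1 h2 h3 h4
    exact ⟨h1, by linarith, h3, h4⟩
  · rintro p ⟨h1, h2, h3, h4⟩
    rw [hmem]
    simp only at h1 h2 h3 h4
    push_cast at h1 h2
    exact ⟨by linarith, by linarith, h3, h4⟩
  · rintro ⟨a1, a2⟩ p ⟨h1, h2, h3, h4⟩ hp
    obtain ⟨k1, k2, k3, k4⟩ := (hmem p).1 hp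
    simp only at h1 h2 h3 h4
    have e2 : a2 = j := by
      ext; exact le_antisymm (nat_unique h3 k4) (nat_unique k3 h4)
    have e3 : i ≤ (a1 : ℕ) := nat_unique k1 h2
    have e4 : (a1 : ℕ) ≤ i + 1 := nat_unique h1 (by push_cast; linarith)
    subst e2
    rcases Nat.lt_or_ge (a1 : ℕ) (i + 1) with h | h
    · left; ext <;> simp; omega
    · right; ext <;> simp; omega

lemma swap_up (i : Fin NX) (j : ℕ) (hj : j + 1 < NY) :
    PermOK (Equiv.swap (i, (⟨j, by omega⟩ : Fin NY)) (i, ⟨j + 1, hj⟩)) := by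
  have hX : (0 : ℝ) < NX := by exact_mod_cast i.pos
  have hY : (0 : ℝ) < NY := by exact_mod_cast (by omega : 0 < NY)
  have hmem : ∀ p : ℝ × ℝ, p ∈ Rect ((cenX (i, (⟨j, by omega⟩ : Fin NY)) + cenX (i, (⟨j + 1, hj⟩ : Fin NY))) / 2)
      ((cenY (i, (⟨j, by omega⟩ : Fin NY)) + cenY (i, (⟨j + 1, hj⟩ : Fin NY))) / 2) (1 / (2 * NX)) (1 / NY) ↔
      ((i : ℕ) : ℝ) < NX * p.1 ∧ NX * p.1 < ((i : ℕ) : ℝ) + 1 ∧ (j : ℝ) < NY * p.2 ∧ NY * p.2 < (j : ℝ) + 2 := by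
    intro p
    have e1 : (((j : ℝ) + 1 / 2) / NY + ((j : ℝ) + 1 + 1 / 2) / NY) / 2 - 1 / NY = j / NY := by field_simp; ring
    have e2 : (((j : ℝ) + 1 / 2) / NY + ((j : ℝ) + 1 + 1 / 2) / NY) / 2 + 1 / NY = (j + 2) / NY := by field_simp; ring
    have e3 : ((((i : ℕ) : ℝ) + 1 / 2) / NX + (((i : ℕ) : ℝ) + 1 / 2) / NX) / 2 - 1 / (2 * NX) = ((i : ℕ) : ℝ) / NX := by field_simp; ring
    have e4 : ((((i : ℕ) : ℝ) + 1 / 2) / NX + (((i : ℕ) : ℝ) + 1 / 2) / NX) / 2 + 1 / (2 * NX) = (((i : ℕ) : ℝ) + 1) / NX := by field_simp; ring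
    simp only [Rect, cenX, cenY, Set.mem_prod, Set.mem_Ioo]
    push_cast
    rw [e1, e2, e3, e4, div_lt_iff₀ hX, div_lt_iff₀ hY, lt_div_iff₀ hX, lt_div_iff₀ hY, mul_comm p.1, mul_comm p.2]
    tauto
  refine swap_adj _ _ ?_ (1 / (2 * NX)) (1 / NY) (by positivity) (by positivity) ?_ ?_ ?_ ?_
  · simp
  · intro p hp
    obtain ⟨h1, h2, h3, h4⟩ := (hmem p).1 hp
    have a1 : (j : ℝ) + 2 ≤ NY := by exact_mod_cast (by omega : j + 2 ≤ NY)
    have a2 : ((i : ℕ) : ℝ) + 1 ≤ NX := by exact_mod_cast i.2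
    have a3 : (0 : ℝ) ≤ (j : ℝ) := by positivity
    have a4 : (0 : ℝ) ≤ ((i : ℕ) : ℝ) := by positivity
    refine ⟨⟨?_, ?_⟩, ⟨?_, ?_⟩⟩
    · exact pos_of_mul_pos_right (lt_of_le_of_lt a4 h1) hX.le
    · nlinarith
    · exact pos_of_mul_pos_right (lt_of_le_of_lt a3 h3) hY.le
    · nlinarith
  · rintro p ⟨h1, h2, h3, h4⟩
    rw [hmem]
    simp only at h1 h2 h3 h4
    exact ⟨h1, h2, h3, by linarith⟩
  · rintro p ⟨h1, h2, h3, h4⟩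
    rw [hmem]
    simp only at h1 h2 h3 h4
    push_cast at h3 h4
    exact ⟨h1, h2, by linarith, by linarith⟩
  · rintro ⟨a1, a2⟩ p ⟨h1, h2, h3, h4⟩ hp
    obtain ⟨k1, k2, k3, k4⟩ := (hmem p).1 hp
    simp only at h1 h2 h3 h4
    have e2 : a1 = i := by
      ext; exact le_antisymm (nat_unique h1 k2) (nat_unique k1 h2)
    have e3 : j ≤ (a2 : ℕ) := nat_unique k3 h4
    have e4 : (a2 : ℕ) ≤ j + 1 := nat_unique h3 (by push_cast; linarith)
    subst e2
    rcases Nat.lt_or_ge (a2 : ℕ) (j + 1) with h | h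
    · left; ext <;> simp; omega
    · right; ext <;> simp; omega

lemma swap_zero (i : ℕ) (hi : i < NX) (j : ℕ) (hj : j < NY) :
    PermOK (Equiv.swap ((⟨0, by omega⟩ : Fin NX), (⟨0, by omega⟩ : Fin NY)) (⟨i, hi⟩, ⟨j, hj⟩)) := by
  induction i with
  | zero =>
    induction j with
    | zero => rw [Equiv.swap_self]; exact PermOK.one
    | succ j ih => exact swap_trans (ih (by omega)) (swap_up _ j hj)
  | succ i ih => exact swap_trans (ih (by omega)) (swap_right i hi _)

lemma PermOK_all (π : Equiv.Perm (Fin NX × Fin NY)) : PermOK π := by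
  refine Equiv.Perm.swap_induction_on π PermOK.one ?_
  intro f x y hxy hf
  refine PermOK.mul ?_ hf
  have h1 := swap_zero x.1 x.1.2 x.2 x.2.2
  have h2 := swap_zero y.1 y.1.2 y.2 y.2.2
  rw [Equiv.swap_comm] at h1
  exact swap_trans h1 h2

/-- Any permutation of the boxes is realized up to small measure by a nice map. -/
lemma perm_realize (π : Equiv.Perm (Fin NX × Fin NY)) (κ : ℝ≥0∞) (hκ : 0 < κ) :
    ∃ G : (ℝ × ℝ) ≃ₜ (ℝ × ℝ), Nice Sq G ∧
      volume {p ∈ Sq | ∃ b, p ∈ Box b ∧ G p ∉ Box (π b)} ≤ κ := by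
  obtain ⟨T, hT, hT2⟩ := PermOK_all π
  obtain ⟨G, hG, hv⟩ := hT κ hκ
  refine ⟨G, hG, (measure_mono ?_).trans hv⟩
  rintro p ⟨hp, b, hb, h⟩
  refine ⟨hp, fun he => h ?_⟩
  rw [he, hT2 b p hb]
  exact shiftB_mem hb

end grid

lemma agree_count {I D : Type*} [Fintype I] [DecidableEq I] [Fintype D] [DecidableEq D]
    (hD : Fintype.card D = 32) (k : ℕ) (hI : Fintype.card I = 64 * k) (t : I → D) :
    (((Finset.univ.filter fun x : I → D => (Finset.univ.filter fun i => x i = t i).card ≤ k).card : ℕ) : ℝ)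
      * 4 ^ k ≤ 3 ^ k * 32 ^ (64 * k) := by
  have e1 : ∑ x : I → D, ∏ i, (if x i = t i then (1 / 2 : ℝ) else 1) = (63 / 2) ^ (64 * k) := by
    rw [← hI, ← Finset.card_univ, ← Finset.prod_const]
    have := Finset.prod_univ_sum (fun _ : I => (Finset.univ : Finset D))
      (fun i d => if d = t i then (1 / 2 : ℝ) else 1)
    rw [Fintype.piFinset_univ] at this
    rw [← this]
    apply Finset.prod_congr rfl
    intro i _
    have h2 : ∀ d : D, (if d = t i then (1 / 2 : ℝ) else 1) = 1 - (if d = t i then (1 / 2 : ℝ) else 0) := by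
      intro d; split_ifs <;> norm_num
    simp only [h2]
    rw [Finset.sum_sub_distrib, Finset.sum_ite_eq' Finset.univ (t i)]
    simp [hD]
    norm_num
  have e2 : ∀ x : I → D, ∏ i, (if x i = t i then (1 / 2 : ℝ) else 1) =
      (1 / 2) ^ (Finset.univ.filter fun i => x i = t i).card := by
    intro x
    rw [Finset.prod_ite]
    simp
  have e3 : (((Finset.univ.filter fun x : I → D => (Finset.univ.filter fun i => x i = t i).card ≤ k).card : ℕ) : ℝ)
      * (1 / 2) ^ k ≤ (63 / 2) ^ (64 * k) := by
    rw [← e1, ← nsmul_eq_mul, ← Finset.sum_const]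
    refine (Finset.sum_le_sum (g := fun x => ∏ i, (if x i = t i then (1 / 2 : ℝ) else 1)) ?_).trans
      (Finset.sum_le_sum_of_subset_of_nonneg (Finset.subset_univ _) ?_)
    · intro x hx
      rw [e2]
      exact pow_le_pow_of_le_one (by norm_num) (by norm_num) (Finset.mem_filter.1 hx).2
    · intro x _ _
      apply Finset.prod_nonneg
      intro i _
      split_ifs <;> norm_num
  have e4 : ((63 : ℝ) / 2) ^ 64 * 8 ≤ 3 * 32 ^ 64 := by norm_num
  calc _ = ((((Finset.univ.filter fun x : I → D => (Finset.univ.filter fun i => x i = t i).card ≤ k).card : ℕ) : ℝ)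
      * (1 / 2) ^ k) * 8 ^ k := by
        rw [mul_assoc, ← mul_pow]; norm_num
    _ ≤ (63 / 2) ^ (64 * k) * 8 ^ k := by gcongr
    _ = (((63 : ℝ) / 2) ^ 64 * 8) ^ k := by rw [pow_mul, ← mul_pow]
    _ ≤ (3 * 32 ^ 64) ^ k := by gcongr
    _ = _ := by rw [mul_pow, pow_mul]

noncomputable def splitEquiv {I D : Type*} [Fintype I] [DecidableEq I] [Fintype D]
    (H w : ℕ) (hH : Fintype.card D ^ (Fintype.card I - 1) = H) (i : I) :
    (I → D) × Fin w ≃ D × (Fin w × Fin H) :=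
  have e : ({j // j ≠ i} → D) ≃ Fin H := Fintype.equivFinOfCardEq (by
    classical
    rw [Fintype.card_fun, Fintype.card_subtype_compl, Fintype.card_subtype_eq, hH])
  ((Equiv.funSplitAt i D).prodCongr (Equiv.refl (Fin w))).trans
    ((Equiv.prodAssoc _ _ _).trans ((Equiv.refl D).prodCongr
      ((Equiv.prodComm _ _).trans ((Equiv.refl (Fin w)).prodCongr e))))

lemma splitEquiv_fst {I D : Type*} [Fintype I] [DecidableEq I] [Fintype D]
    (H w : ℕ) (hH : Fintype.card D ^ (Fintype.card I - 1) = H) (i : I) (z : (I → D) × Fin w) :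
    (splitEquiv H w hH i z).1 = z.1 i := rfl

def cellEquiv (m w H : ℕ) : (Fin m × Fin m) × ((Fin 4 × Fin 8) × (Fin w × Fin H)) ≃
    Fin (m * 4 * w) × Fin (m * 8 * H) where
  toFun z := (finProdFinEquiv (finProdFinEquiv (z.1.1, z.2.1.1), z.2.2.1),
    finProdFinEquiv (finProdFinEquiv (z.1.2, z.2.1.2), z.2.2.2))
  invFun y :=
    let a := finProdFinEquiv.symm y.1
    let b := finProdFinEquiv.symm y.2
    let a' := finProdFinEquiv.symm a.1
    let b' := finProdFinEquiv.symm b.1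
    ((a'.1, b'.1), ((a'.2, b'.2), (a.2, b.2)))
  left_inv z := by simp
  right_inv y := by
    simp only [Prod.mk.eta, Equiv.apply_symm_apply]

lemma comb (v : ℕ) (hv : 1 ≤ v) : ∃ H : ℕ, 0 < H ∧
    ∃ (colE : Fin (8 * v * 4 * (2 * v)) ≃ Fin (8 * v) × Fin (8 * v))
      (dig : Fin (8 * v * 8 * H) → (Fin (8 * v) × Fin (8 * v)) → Fin 4 × Fin 8)
      (π : Equiv.Perm (Fin (8 * v * 4 * (2 * v)) × Fin (8 * v * 8 * H))),
      (∀ a b, ∃ k < 2 * v, ∃ l < H,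
        ((π (a, b)).1 : ℕ) = k + 2 * v * ((dig b (colE a)).1 + 4 * (colE a).1) ∧
        ((π (a, b)).2 : ℕ) = l + H * ((dig b (colE a)).2 + 8 * (colE a).2)) ∧
      ∀ t : Fin (8 * v) × Fin (8 * v) → Fin 4 × Fin 8,
        (((Finset.univ.filter fun b => (Finset.univ.filter fun i => dig b i = t i).card ≤ v ^ 2).card : ℕ) : ℝ)
          * 4 ^ (v ^ 2) ≤ 3 ^ (v ^ 2) * ((8 * v * 8 * H : ℕ) : ℝ) := by
  have hDc : Fintype.card (Fin 4 × Fin 8) = 32 := by simp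
  have hIc : Fintype.card (Fin (8 * v) × Fin (8 * v)) = 64 * v ^ 2 := by simp; ring
  have hM : 1 ≤ 64 * v ^ 2 := by nlinarith
  obtain ⟨H, hH⟩ : ∃ H, H = 32 ^ (64 * v ^ 2 - 1) := ⟨_, rfl⟩
  have hH32 : 32 * H = 32 ^ (64 * v ^ 2) := by
    rw [hH, ← pow_succ']; congr 1; omega
  let colE : Fin (8 * v * 4 * (2 * v)) ≃ Fin (8 * v) × Fin (8 * v) :=
    (Fintype.equivFinOfCardEq (by rw [hIc]; ring)).symm
  let rowE : Fin (8 * v * 8 * H) ≃ ((Fin (8 * v) × Fin (8 * v)) → Fin 4 × Fin 8) × Fin (2 * v) :=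
    (Fintype.equivFinOfCardEq (by
      rw [Fintype.card_prod, Fintype.card_fun, hDc, hIc, Fintype.card_fin, ← hH32]; ring)).symm
  have hsp : Fintype.card (Fin 4 × Fin 8) ^ (Fintype.card (Fin (8 * v) × Fin (8 * v)) - 1) = H := by
    rw [hDc, hIc, hH]
  let π : Equiv.Perm (Fin (8 * v * 4 * (2 * v)) × Fin (8 * v * 8 * H)) :=
    (colE.prodCongr rowE).trans ((Equiv.prodShear (Equiv.refl _)
      (fun i => splitEquiv H (2 * v) hsp i)).trans (cellEquiv (8 * v) (2 * v) H))
  refine ⟨H, by rw [hH]; positivity, colE, fun b => (rowE b).1, π, ?_, ?_⟩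
  · intro a b
    refine ⟨((splitEquiv H (2 * v) hsp (colE a) (rowE b)).2.1 : ℕ), Fin.is_lt _,
      ((splitEquiv H (2 * v) hsp (colE a) (rowE b)).2.2 : ℕ), Fin.is_lt _, ?_, ?_⟩
    · simp [π, cellEquiv, finProdFinEquiv, splitEquiv_fst]
    · simp [π, cellEquiv, finProdFinEquiv, splitEquiv_fst]
  · intro t
    have hc := agree_count hDc (v ^ 2) hIc t
    have h1 : (Finset.univ.filter fun b => (Finset.univ.filter fun i => (rowE b).1 i = t i).card ≤ v ^ 2).card
        = (Finset.univ.filter fun x : (Fin (8 * v) × Fin (8 * v)) → Fin 4 × Fin 8 =>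
          (Finset.univ.filter fun i => x i = t i).card ≤ v ^ 2).card * (2 * v) := by
      have h2 : (Finset.univ.filter fun x : (Fin (8 * v) × Fin (8 * v)) → Fin 4 × Fin 8 =>
          (Finset.univ.filter fun i => x i = t i).card ≤ v ^ 2).card * (2 * v) =
          ((Finset.univ.filter fun x : (Fin (8 * v) × Fin (8 * v)) → Fin 4 × Fin 8 =>
          (Finset.univ.filter fun i => x i = t i).card ≤ v ^ 2) ×ˢ (Finset.univ : Finset (Fin (2 * v)))).card := by
        rw [Finset.card_product]; simp
      rw [h2]
      apply Finset.card_equiv rowE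
      intro b
      simp
    rw [h1]
    push_cast
    have hH32' : (32 : ℝ) * H = 32 ^ (64 * v ^ 2) := by exact_mod_cast hH32
    rw [← hH32'] at hc
    have hv0 : (0 : ℝ) ≤ 2 * v := by positivity
    have := mul_le_mul_of_nonneg_right hc hv0
    refine le_trans (le_of_eq ?_) (this.trans (le_of_eq ?_))
    · ring
    · ring

def Cell (m : ℕ) (i : Fin m × Fin m) (d : Fin 4 × Fin 8) : Set (ℝ × ℝ) :=
  {q | (((d.1 : ℕ) + 4 * (i.1 : ℕ) : ℕ) : ℝ) < 4 * m * q.1 ∧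
    4 * m * q.1 < (((d.1 : ℕ) + 4 * (i.1 : ℕ) : ℕ) : ℝ) + 1 ∧
    (((d.2 : ℕ) + 8 * (i.2 : ℕ) : ℕ) : ℝ) < 8 * m * q.2 ∧
    8 * m * q.2 < (((d.2 : ℕ) + 8 * (i.2 : ℕ) : ℕ) : ℝ) + 1}

lemma Cell_open (m : ℕ) (i : Fin m × Fin m) (d : Fin 4 × Fin 8) : IsOpen (Cell m i d) := by
  have h : ∀ (f g : ℝ × ℝ → ℝ), Continuous f → Continuous g → IsOpen {q | f q < g q} :=
    fun f g hf hg => isOpen_lt hf hg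
  unfold Cell
  simp only [Set.ofPred_and]
  refine (h _ _ ?_ ?_).inter ((h _ _ ?_ ?_).inter ((h _ _ ?_ ?_).inter (h _ _ ?_ ?_))) <;> fun_prop

lemma Box_open {NX NY : ℕ} (b : Fin NX × Fin NY) : IsOpen (Box b) := by
  have h : ∀ (f g : ℝ × ℝ → ℝ), Continuous f → Continuous g → IsOpen {q | f q < g q} :=
    fun f g hf hg => isOpen_lt hf hg
  unfold Box
  simp only [Set.ofPred_and]
  refine (h _ _ ?_ ?_).inter ((h _ _ ?_ ?_).inter ((h _ _ ?_ ?_).inter (h _ _ ?_ ?_))) <;> fun_prop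

def Tdig (d : Fin 4 × Fin 8) : Fin 4 × Fin 8 := if (d.2 : ℕ) < 4 then (1, 5) else (1, 2)

lemma Tdig_fst (d : Fin 4 × Fin 8) : ((Tdig d).1 : ℕ) = 1 := by
  unfold Tdig; split_ifs <;> rfl

lemma Tdig_snd (d : Fin 4 × Fin 8) :
    ((d.2 : ℕ) < 4 ∧ ((Tdig d).2 : ℕ) = 5) ∨ (4 ≤ (d.2 : ℕ) ∧ ((Tdig d).2 : ℕ) = 2) := by
  unfold Tdig
  split_ifs with h
  · exact Or.inl ⟨h, rfl⟩
  · exact Or.inr ⟨by omega, rfl⟩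

lemma cell_sep {m : ℕ} (hm : 0 < m) (D : Fin m × Fin m → Fin 4 × Fin 8) (i i' : Fin m × Fin m)
    (q q' : ℝ × ℝ) (hq : q ∈ Cell m i (D i)) (hq' : q' ∈ Cell m i' (Tdig (D i'))) (N : ℤ)
    (h2 : |q.2 - q'.2| < 1 / (8 * m)) : 1 / (4 * m) ≤ |q.1 - q'.1 - N| := by
  by_contra! h1
  have hmR : (0 : ℝ) < m := by exact_mod_cast hm
  obtain ⟨a1, a2, a3, a4⟩ := hq
  obtain ⟨b1, b2, b3, b4⟩ := hq'
  rw [lt_div_iff₀ (by positivity), ← abs_of_pos (show (0 : ℝ) < 8 * m by positivity), ← abs_mul,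
    abs_lt] at h2
  rw [lt_div_iff₀ (by positivity), ← abs_of_pos (show (0 : ℝ) < 4 * m by positivity), ← abs_mul,
    abs_lt] at h1
  obtain ⟨A, hA⟩ : ∃ A, A = ((D i).1 : ℕ) + 4 * (i.1 : ℕ) := ⟨_, rfl⟩
  obtain ⟨B, hB⟩ : ∃ A, A = ((D i).2 : ℕ) + 8 * (i.2 : ℕ) := ⟨_, rfl⟩
  obtain ⟨A', hA'⟩ : ∃ A, A = ((Tdig (D i')).1 : ℕ) + 4 * (i'.1 : ℕ) := ⟨_, rfl⟩
  obtain ⟨B', hB'⟩ : ∃ A, A = ((Tdig (D i')).2 : ℕ) + 8 * (i'.2 : ℕ) := ⟨_, rfl⟩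
  rw [← hA] at a1 a2
  rw [← hB] at a3 a4
  rw [← hA'] at b1 b2
  rw [← hB'] at b3 b4
  have c1 : ((B : ℤ) : ℝ) < ((B' + 2 : ℤ) : ℝ) := by push_cast; linarith
  have c2 : ((B' : ℤ) : ℝ) < ((B + 2 : ℤ) : ℝ) := by push_cast; linarith
  have c3 : ((A : ℤ) : ℝ) < ((A' + 4 * (m * N) + 2 : ℤ) : ℝ) := by push_cast; linarith
  have c4 : ((A' + 4 * (m * N) : ℤ) : ℝ) < ((A + 2 : ℤ) : ℝ) := by push_cast; linarith
  have c1' := Int.cast_lt.1 c1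
  have c2' := Int.cast_lt.1 c2
  have c3' := Int.cast_lt.1 c3
  have c4' := Int.cast_lt.1 c4
  have e1 := Tdig_fst (D i')
  have l1 := (D i).1.2
  have l2 := (D i).2.2
  have l3 := i.1.2
  have l4 := i'.1.2
  have hN : N = 0 := by
    by_contra hN
    rcases lt_or_gt_of_ne hN with hN | hN
    · have : (m : ℤ) * N ≤ -m := by nlinarith
      omega
    · have : (m : ℤ) ≤ m * N := by nlinarith
      omega
  subst hN
  rcases Tdig_snd (D i') with ⟨e2, e3⟩ | ⟨e2, e3⟩
  · have k1 : (i.1 : ℕ) = i'.1 := by omega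
    have k2 : (i.2 : ℕ) = i'.2 := by omega
    have : i = i' := Prod.ext (Fin.ext k1) (Fin.ext k2)
    subst this
    omega
  · have k1 : (i.1 : ℕ) = i'.1 := by omega
    have k2 : (i.2 : ℕ) = i'.2 := by omega
    have : i = i' := Prod.ext (Fin.ext k1) (Fin.ext k2)
    subst this
    omega

def SepG (G : (ℝ × ℝ) ≃ₜ (ℝ × ℝ)) (m : ℕ) (u u' : ℝ) : Prop :=
  ∃ X0 X1 : Set ℝ, MeasurableSet X0 ∧ MeasurableSet X1 ∧ X0 ⊆ Set.Ioo 0 1 ∧ X1 ⊆ Set.Ioo 0 1 ∧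
    volume (Set.Ioo 0 1 \ X0) ≤ ENNReal.ofReal (1 / 1024) ∧ ENNReal.ofReal (1 / 128) ≤ volume X1 ∧
    ∀ x0 ∈ X0, ∀ x1 ∈ X1, ∀ N : ℤ, |(G (x0, u)).2 - (G (x1, u')).2| < 1 / (8 * m) →
      1 / (4 * m) ≤ |(G (x0, u)).1 - (G (x1, u')).1 - N|

/-- The open column with index `a` among `N`. -/
def Col (N : ℕ) (a : Fin N) : Set ℝ := Set.Ioo (((a : ℕ) : ℝ) / N) ((((a : ℕ) : ℝ) + 1) / N)

lemma mem_Col {N : ℕ} (a : Fin N) (x : ℝ) :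
    x ∈ Col N a ↔ ((a : ℕ) : ℝ) < N * x ∧ N * x < ((a : ℕ) : ℝ) + 1 := by
  have hN : (0 : ℝ) < N := by exact_mod_cast a.pos
  rw [Col, Set.mem_Ioo, div_lt_iff₀ hN, lt_div_iff₀ hN, mul_comm]

lemma Col_vol {N : ℕ} (a : Fin N) : volume (Col N a) = ENNReal.ofReal (1 / N) := by
  rw [Col, Real.volume_Ioo]; congr 1; ring

lemma Col_sub {N : ℕ} (a : Fin N) : Col N a ⊆ Set.Ioo 0 1 := by
  intro x hx
  have hN : (0 : ℝ) < N := by exact_mod_cast a.pos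
  have h2 : ((a : ℕ) : ℝ) + 1 ≤ N := by exact_mod_cast a.2
  have h3 : (0 : ℝ) ≤ ((a : ℕ) : ℝ) := by positivity
  obtain ⟨h4, h5⟩ := (mem_Col a x).1 hx
  constructor <;> nlinarith

lemma Col_disj {N : ℕ} : Pairwise (Function.onFun Disjoint (Col N)) := by
  intro a b hab
  rw [Function.onFun, Set.disjoint_left]
  intro x hx hx'
  rw [mem_Col] at hx hx'
  apply hab
  ext
  exact le_antisymm (nat_unique hx.1 hx'.2) (nat_unique hx'.1 hx.2)

lemma Col_biUnion_vol {N : ℕ} (T : Finset (Fin N)) :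
    volume (⋃ a ∈ T, Col N a) = ENNReal.ofReal (T.card / N) := by
  rw [measure_biUnion_finset (fun a _ b _ h => Col_disj h) (fun a _ => measurableSet_Ioo)]
  simp only [Col_vol]
  rw [Finset.sum_const, nsmul_eq_mul, div_eq_mul_one_div (T.card : ℝ) (N : ℝ),
    ENNReal.ofReal_mul (by positivity), ENNReal.ofReal_natCast]

lemma Col_compl_null (N : ℕ) (hN : 0 < N) : volume (Set.Ioo 0 1 \ ⋃ a, Col N a) = 0 := by
  have h0 : (0 : ℝ) < N := by exact_mod_cast hN
  have h1 : volume (⋃ a, Col N a) = 1 := by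
    have := Col_biUnion_vol (Finset.univ : Finset (Fin N))
    simp only [Finset.mem_univ, Set.iUnion_true] at this
    rw [this]; simp [h0.ne']
  rw [measure_sdiff (Set.iUnion_subset fun a => Col_sub a)
    (MeasurableSet.iUnion fun a => measurableSet_Ioo).nullMeasurableSet (by rw [h1]; simp), h1]
  simp

lemma planar_aux {NX NY m k : ℕ} (hm : 0 < m) (hX : 0 < NX) (hY : 0 < NY)
    (colE : Fin NX ≃ Fin m × Fin m) (dig : Fin NY → (Fin m × Fin m) → Fin 4 × Fin 8)
    (π : Equiv.Perm (Fin NX × Fin NY))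
    (hcell : ∀ a b q, q ∈ Box (π (a, b)) → q ∈ Cell m (colE a) (dig b (colE a)))
    (hk : (1 : ℝ) / 64 ≤ k / NX) (δ : ℝ)
    (hcount : ∀ t : Fin m × Fin m → Fin 4 × Fin 8,
      ((Finset.univ.filter fun b => (Finset.univ.filter fun i => dig b i = t i).card ≤ k).card : ℝ)
        / NY ≤ δ) (κ : ℝ≥0∞) (hκ : 0 < κ) :
    ∃ (G : (ℝ × ℝ) ≃ₜ (ℝ × ℝ)) (Bad : Set ℝ), Nice Sq G ∧ volume Bad ≤ κ ∧
      ∀ u ∈ Set.Ioo (0 : ℝ) 1, u ∉ Bad →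
        volume {u' | u' ∈ Set.Ioo (0 : ℝ) 1 ∧ u' ∉ Bad ∧ ¬ SepG G m u u'} ≤ ENNReal.ofReal δ := by
  classical
  have hc0 : ENNReal.ofReal (1 / 1024) ≠ 0 := by simp
  obtain ⟨G, hG, hvol⟩ := perm_realize π (κ * ENNReal.ofReal (1 / 1024))
    (pos_iff_ne_zero.2 (mul_ne_zero hκ.ne' hc0))
  obtain ⟨B, hB⟩ : ∃ B : Set (ℝ × ℝ), B = {p ∈ Sq | ∃ b, p ∈ Box b ∧ G p ∉ Box (π b)} := ⟨_, rfl⟩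
  rw [← hB] at hvol
  have hBm : MeasurableSet B := by
    have : B = Sq ∩ ⋃ b, (Box b ∩ (G ⁻¹' (Box (π b)))ᶜ) := by
      rw [hB]; ext p; simp
    rw [this]
    refine (measurableSet_Ioo.prod measurableSet_Ioo).inter (MeasurableSet.iUnion fun b => ?_)
    exact (Box_open b).measurableSet.inter
      ((Box_open _).preimage G.continuous).measurableSet.compl
  obtain ⟨sec, hsec⟩ : ∃ sec : ℝ → Set ℝ, ∀ u, sec u = (fun x => (x, u)) ⁻¹' B :=
    ⟨fun u => (fun x => (x, u)) ⁻¹' B, fun _ => rfl⟩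
  have hsecm : ∀ u, MeasurableSet (sec u) := fun u => by
    rw [hsec]; exact hBm.preimage (by fun_prop)
  obtain ⟨Bad, hBad⟩ : ∃ Bad : Set ℝ, Bad = (Set.Ioo 0 1 \ ⋃ b, Col NY b) ∪
      {u | ENNReal.ofReal (1 / 1024) ≤ volume (sec u)} := ⟨_, rfl⟩
  have hbv : volume Bad ≤ κ := by
    rw [hBad]
    refine (measure_union_le _ _).trans ?_
    rw [Col_compl_null NY hY, zero_add]
    have h1 : ∫⁻ u, volume (sec u) = volume B := by
      rw [Measure.volume_eq_prod, Measure.prod_apply_symm hBm]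
      simp only [hsec]
    have h2 : Measurable fun u => volume (sec u) := by
      simp only [hsec]
      exact measurable_measure_prodMk_right hBm
    have h3 := mul_meas_ge_le_lintegral h2 (ENNReal.ofReal (1 / 1024)) (μ := volume)
    rw [h1] at h3
    have h4 := h3.trans hvol
    rw [mul_comm] at h4
    exact (ENNReal.mul_le_mul_iff_left hc0 ENNReal.ofReal_ne_top).1 h4
  have hnb : ∀ u ∈ Set.Ioo (0 : ℝ) 1, u ∉ Bad → ∃ b, u ∈ Col NY b ∧
      volume (sec u) ≤ ENNReal.ofReal (1 / 1024) := by
    intro u hu hub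
    rw [hBad] at hub
    simp only [Set.mem_union, Set.mem_sdiff, Set.mem_iUnion, Set.mem_ofPred_eq, not_or, not_and,
      not_not, not_le] at hub
    obtain ⟨b, hb⟩ := hub.1 hu
    exact ⟨b, hb, hub.2.le⟩
  have hkey : ∀ u b a x, u ∈ Col NY b → x ∈ Col NX a → x ∉ sec u →
      G (x, u) ∈ Cell m (colE a) (dig b (colE a)) := by
    intro u b a x hu hx hxs
    rw [mem_Col] at hu hx
    have hbox : (x, u) ∈ Box (a, b) := ⟨hx.1, hx.2, hu.1, hu.2⟩
    apply hcell
    by_contra hcon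
    apply hxs
    rw [hsec, hB]
    exact ⟨Box_sub _ hbox, (a, b), hbox, hcon⟩
  refine ⟨G, Bad, hG, hbv, ?_⟩
  intro u hu hub
  obtain ⟨b, hb, hbs⟩ := hnb u hu hub
  have hsub : {u' | u' ∈ Set.Ioo (0 : ℝ) 1 ∧ u' ∉ Bad ∧ ¬ SepG G m u u'} ⊆
      ⋃ b' ∈ Finset.univ.filter fun b' =>
        (Finset.univ.filter fun i => dig b' i = Tdig (dig b i)).card ≤ k, Col NY b' := by
    rintro u' ⟨hu', hub', hns⟩
    obtain ⟨b', hb', hbs'⟩ := hnb u' hu' hub'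
    simp only [Set.mem_iUnion, Finset.mem_filter, Finset.mem_univ, true_and, exists_prop]
    refine ⟨b', ?_, hb'⟩
    by_contra hcard
    rw [not_le] at hcard
    apply hns
    obtain ⟨T, hT⟩ : ∃ T : Finset (Fin NX), T = Finset.univ.filter fun a =>
        dig b' (colE a) = Tdig (dig b (colE a)) := ⟨_, rfl⟩
    have hTc : T.card = (Finset.univ.filter fun i => dig b' i = Tdig (dig b i)).card := by
      rw [hT]
      apply Finset.card_equiv colE
      intro a; simp
    refine ⟨(⋃ a, Col NX a) \ sec u, (⋃ a ∈ T, Col NX a) \ sec u', ?_, ?_, ?_, ?_, ?_, ?_, ?_⟩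
    · exact (MeasurableSet.iUnion fun a => measurableSet_Ioo).diff (hsecm u)
    · exact (Finset.measurableSet_biUnion _ fun a _ => measurableSet_Ioo).diff (hsecm u')
    · exact Set.sdiff_subset.trans (Set.iUnion_subset fun a => Col_sub a)
    · exact Set.sdiff_subset.trans (Set.iUnion₂_subset fun a _ => Col_sub a)
    · have : Set.Ioo (0 : ℝ) 1 \ ((⋃ a, Col NX a) \ sec u) ⊆
          (Set.Ioo 0 1 \ ⋃ a, Col NX a) ∪ sec u := by
        intro x hx
        by_cases h : x ∈ sec u
        · exact Or.inr h
        · exact Or.inl ⟨hx.1, fun h' => hx.2 ⟨h', h⟩⟩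
      refine (measure_mono this).trans ((measure_union_le _ _).trans ?_)
      rw [Col_compl_null NX hX, zero_add]
      exact hbs
    · have h1 : ENNReal.ofReal (1 / 64) ≤ volume (⋃ a ∈ T, Col NX a) := by
        rw [Col_biUnion_vol]
        apply ENNReal.ofReal_le_ofReal
        refine hk.trans ?_
        gcongr
        rw [hTc]; exact hcard.le
      have h2 : volume (⋃ a ∈ T, Col NX a) ≤ volume ((⋃ a ∈ T, Col NX a) \ sec u') + volume (sec u') := by
        rw [← tsub_le_iff_right]
        exact le_measure_sdiff
      have h3 := h1.trans (h2.trans (add_le_add_right hbs' _))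
      have h4 : ENNReal.ofReal (1 / 128) + ENNReal.ofReal (1 / 1024) ≤ ENNReal.ofReal (1 / 64) := by
        rw [← ENNReal.ofReal_add (by norm_num) (by norm_num)]
        apply ENNReal.ofReal_le_ofReal; norm_num
      exact (ENNReal.add_le_add_iff_right ENNReal.ofReal_ne_top).1 (h4.trans h3)
    · rintro x0 ⟨hx0, hx0'⟩ x1 ⟨hx1, hx1'⟩ N hlt
      simp only [Set.mem_iUnion] at hx0 hx1
      obtain ⟨a0, ha0⟩ := hx0
      obtain ⟨a1, ha1T, ha1⟩ := hx1
      have q0 := hkey u b a0 x0 hb ha0 hx0'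
      have q1 := hkey u' b' a1 x1 hb' ha1 hx1'
      have e : dig b' (colE a1) = Tdig (dig b (colE a1)) := by
        rw [hT] at ha1T; exact (Finset.mem_filter.1 ha1T).2
      rw [e] at q1
      exact cell_sep hm (dig b) _ _ _ _ q0 q1 N hlt
  refine (measure_mono hsub).trans ?_
  rw [Col_biUnion_vol]
  exact ENNReal.ofReal_le_ofReal (hcount _)

lemma planar (v : ℕ) (hv : 1 ≤ v) (κ : ℝ≥0∞) (hκ : 0 < κ) :
    ∃ (G : (ℝ × ℝ) ≃ₜ (ℝ × ℝ)) (Bad : Set ℝ), Nice Sq G ∧ volume Bad ≤ κ ∧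
      ∀ u ∈ Set.Ioo (0 : ℝ) 1, u ∉ Bad →
        volume {u' | u' ∈ Set.Ioo (0 : ℝ) 1 ∧ u' ∉ Bad ∧ ¬ SepG G (8 * v) u u'} ≤
          ENNReal.ofReal ((3 / 4) ^ (v ^ 2)) := by
  obtain ⟨H, hH, colE, dig, π, hπ, hcount⟩ := comb v hv
  have hvR : (0 : ℝ) < v := by exact_mod_cast hv
  have hHR : (0 : ℝ) < H := by exact_mod_cast hH
  refine planar_aux (k := v ^ 2) (by omega) (by positivity) (by positivity) colE dig π ?_ ?_ _ ?_ κ hκ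
  · intro a b q hq
    obtain ⟨k, hk, l, hl, e1, e2⟩ := hπ a b
    obtain ⟨h1, h2, h3, h4⟩ := hq
    rw [e1] at h1 h2
    rw [e2] at h3 h4
    have hk' : (k : ℝ) + 1 ≤ 2 * v := by exact_mod_cast hk
    have hl' : (l : ℝ) + 1 ≤ H := by exact_mod_cast hl
    have hk0 : (0 : ℝ) ≤ k := by positivity
    have hl0 : (0 : ℝ) ≤ l := by positivity
    obtain ⟨A, hA⟩ : ∃ A, A = ((dig b (colE a)).1 : ℕ) + 4 * ((colE a).1 : ℕ) := ⟨_, rfl⟩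
    obtain ⟨B, hB⟩ : ∃ A, A = ((dig b (colE a)).2 : ℕ) + 8 * ((colE a).2 : ℕ) := ⟨_, rfl⟩
    rw [← hA] at h1 h2
    rw [← hB] at h3 h4
    unfold Cell
    rw [Set.mem_ofPred_eq, ← hA, ← hB]
    push_cast at h1 h2 h3 h4 ⊢
    have hvv : (0 : ℝ) < 2 * v := by positivity
    refine ⟨?_, ?_, ?_, ?_⟩
    · apply lt_of_mul_lt_mul_left _ hvv.le; nlinarith
    · apply lt_of_mul_lt_mul_left _ hvv.le; nlinarith
    · apply lt_of_mul_lt_mul_left _ hHR.le; nlinarith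
    · apply lt_of_mul_lt_mul_left _ hHR.le; nlinarith
  · push_cast
    apply le_of_eq
    field_simp
    norm_num
  · intro t
    have h := hcount t
    have hNY : (0 : ℝ) < ((8 * v * 8 * H : ℕ) : ℝ) := by positivity
    rw [div_le_iff₀ hNY, div_pow, div_mul_eq_mul_div, le_div_iff₀ (by positivity)]
    exact h

noncomputable def cmap (θ k a h : ℝ) (p : ℝ × ℝ) : S2 := sph (θ + k * p.1, a + h * p.2)

noncomputable def cz (x : E3) : ℂ := (x 0 : ℂ) + (x 1 : ℂ) * Complex.I

noncomputable def wz (θ k : ℝ) (x : E3) : ℂ :=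
  cz x * Complex.exp (((-(2 * Real.pi * (θ + k / 2)) : ℝ) : ℂ) * Complex.I)

noncomputable def cinv (θ k a h : ℝ) (x : S2) : ℝ × ℝ :=
  (1 / 2 + (Complex.log (wz θ k x)).im / (2 * Real.pi * k), ((x : E3) 2 - a) / h)

lemma cz_piS (θ y : ℝ) : cz (piS θ y) =
    (Real.sqrt (1 - y ^ 2) : ℂ) * Complex.exp (((2 * Real.pi * θ : ℝ) : ℂ) * Complex.I) := by
  rw [cz, piS_zero, piS_one, Complex.exp_mul_I, ← Complex.ofReal_cos, ← Complex.ofReal_sin]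
  push_cast
  ring

lemma cz_inj {x y : E3} (h : cz x = cz y) (h2 : x 2 = y 2) : x = y := by
  have h0 := congrArg Complex.re h
  have h1 := congrArg Complex.im h
  simp [cz] at h0 h1
  ext i
  fin_cases i
  · exact h0
  · exact h1
  · exact h2

lemma norm_cz (x : S2) : ‖cz (x : E3)‖ = Real.sqrt (1 - (x : E3) 2 ^ 2) := by
  have hx := (mem_S2_iff x).1 x.2
  rw [cz, Complex.norm_add_mul_I]
  congr 1
  linarith

lemma norm_wz (θ k : ℝ) (x : E3) : ‖wz θ k x‖ = ‖cz x‖ := by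
  rw [wz, norm_mul, Complex.norm_exp_ofReal_mul_I, mul_one]

lemma wz_piS (θ k t y : ℝ) : wz θ k (piS t y) = (Real.sqrt (1 - y ^ 2) : ℂ) *
    Complex.exp (((2 * Real.pi * (t - (θ + k / 2)) : ℝ) : ℂ) * Complex.I) := by
  rw [wz, cz_piS, mul_assoc, ← Complex.exp_add]
  congr 2
  push_cast
  ring

lemma wz_inj {θ k : ℝ} {x y : E3} (h : wz θ k x = wz θ k y) (h2 : x 2 = y 2) : x = y := by
  apply cz_inj _ h2
  unfold wz at h
  exact mul_right_cancel₀ (Complex.exp_ne_zero _) h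

lemma arg_wz (θ k t y : ℝ) (hy : y ∈ Set.Ioo (-1 : ℝ) 1)
    (ht : 2 * Real.pi * (t - (θ + k / 2)) ∈ Set.Ioc (-Real.pi) Real.pi) :
    (Complex.log (wz θ k (piS t y))).im = 2 * Real.pi * (t - (θ + k / 2)) := by
  rw [Complex.log_im, wz_piS, Complex.exp_mul_I]
  exact Complex.arg_mul_cos_add_sin_mul_I (sqrt_pos_of_Ioo hy) ht

lemma cz_smooth : ContDiff ℝ (⊤ : ℕ∞) cz := by
  have h : ∀ i : Fin 3, ContDiff ℝ (⊤ : ℕ∞) fun x : E3 => ((x i : ℝ) : ℂ) := fun i =>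
    Complex.ofRealCLM.contDiff.comp (by fun_prop)
  exact (h 0).add ((h 1).mul contDiff_const)

lemma wz_smooth (θ k : ℝ) : ContDiff ℝ (⊤ : ℕ∞) (wz θ k) := cz_smooth.mul contDiff_const

def cdom (θ k a h : ℝ) : Set S2 := {x | wz θ k x ∈ Complex.slitPlane} ∩ cinv θ k a h ⁻¹' Sq

lemma slit_open (θ k : ℝ) : IsOpen {x : S2 | wz θ k x ∈ Complex.slitPlane} :=
  Complex.isOpen_slitPlane.preimage ((wz_smooth θ k).continuous.comp continuous_subtype_val)

lemma cinv_smooth (θ k a h : ℝ) : ContMDiffOn (𝓡 2) 𝓘(ℝ, ℝ × ℝ) (⊤ : ℕ∞) (cinv θ k a h)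
    {x : S2 | wz θ k x ∈ Complex.slitPlane} := by
  intro x hx
  apply ContMDiffAt.contMDiffWithinAt
  have h1 : ContDiffAt ℝ (⊤ : ℕ∞) (fun z : E3 =>
      ((1 / 2 + (Complex.log (wz θ k z)).im / (2 * Real.pi * k), (z 2 - a) / h) : ℝ × ℝ)) (x : E3) := by
    apply ContDiffAt.prodMk
    · apply contDiffAt_const.add
      apply ContDiffAt.div_const
      have hl : ContDiffAt ℝ (⊤ : ℕ∞) Complex.log (wz θ k x) :=
        (Complex.contDiffAt_log hx).restrict_scalars ℝ
      exact Complex.imCLM.contDiff.contDiffAt.comp _ (hl.comp _ (wz_smooth θ k).contDiffAt)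
    · have h2 : ContDiff ℝ (⊤ : ℕ∞) fun z : E3 => z 2 := by fun_prop
      exact ((h2.sub contDiff_const).div_const h).contDiffAt
  exact h1.contMDiffAt.comp x coe_smooth.contMDiffAt

lemma cdom_open (θ k a h : ℝ) : IsOpen (cdom θ k a h) :=
  (cinv_smooth θ k a h).continuousOn.isOpen_inter_preimage (slit_open θ k)
    (isOpen_Ioo.prod isOpen_Ioo)

lemma range_of_Sq {a h : ℝ} (hh : 0 < h) (ha : -1 ≤ a) (hah : a + h ≤ 1)
    {p : ℝ × ℝ} (hp : p ∈ Sq) : a + h * p.2 ∈ Set.Ioo (-1 : ℝ) 1 := by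
  obtain ⟨-, h1, h2⟩ := hp
  constructor <;> nlinarith

lemma cmap_coe {θ k a h : ℝ} (hh : 0 < h) (ha : -1 ≤ a) (hah : a + h ≤ 1)
    {p : ℝ × ℝ} (hp : p ∈ Sq) : (cmap θ k a h p : E3) = piS (θ + k * p.1) (a + h * p.2) := by
  have := range_of_Sq hh ha hah hp
  exact sph_coe _ ⟨this.1.le, this.2.le⟩

lemma cmap_facts {θ k a h : ℝ} (hk : 0 < k) (hk1 : k ≤ 1) (hh : 0 < h) (ha : -1 ≤ a) (hah : a + h ≤ 1)
    {p : ℝ × ℝ} (hp : p ∈ Sq) : wz θ k (cmap θ k a h p) ∈ Complex.slitPlane ∧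
      cinv θ k a h (cmap θ k a h p) = p := by
  have hy := range_of_Sq hh ha hah hp
  have hp1 := hp.1
  have hpi := Real.pi_pos
  have e : 2 * Real.pi * (θ + k * p.1 - (θ + k / 2)) = Real.pi * (k * (2 * p.1 - 1)) := by ring
  have b1 : -1 < k * (2 * p.1 - 1) := by nlinarith [hp1.1, hp1.2]
  have b2 : k * (2 * p.1 - 1) < 1 := by nlinarith [hp1.1, hp1.2]
  have hr1 : -Real.pi < 2 * Real.pi * (θ + k * p.1 - (θ + k / 2)) := by rw [e]; nlinarith
  have hr2 : 2 * Real.pi * (θ + k * p.1 - (θ + k / 2)) < Real.pi := by rw [e]; nlinarith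
  have harg := arg_wz θ k (θ + k * p.1) (a + h * p.2) hy ⟨hr1, hr2.le⟩
  constructor
  · rw [Complex.mem_slitPlane_iff_arg, cmap_coe hh ha hah hp]
    constructor
    · rw [← Complex.log_im, harg]; exact hr2.ne
    · rw [wz_piS]
      exact mul_ne_zero (by exact_mod_cast (sqrt_pos_of_Ioo hy).ne') (Complex.exp_ne_zero _)
  · rw [cinv, cmap_coe hh ha hah hp, harg, piS_two]
    ext
    · simp only; field_simp; ring
    · simp only; field_simp; ring

lemma cmap_cinv {θ k a h : ℝ} (hk : 0 < k) (hh : 0 < h) (ha : -1 ≤ a) (hah : a + h ≤ 1)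
    {x : S2} (hx : x ∈ cdom θ k a h) : cmap θ k a h (cinv θ k a h x) = x := by
  have hS : cinv θ k a h x ∈ Sq := hx.2
  have hpi := Real.pi_pos
  ext1
  rw [cmap_coe hh ha hah hS]
  have e2 : a + h * (cinv θ k a h x).2 = (x : E3) 2 := by
    simp only [cinv]; field_simp; ring
  have e1 : 2 * Real.pi * (θ + k * (cinv θ k a h x).1 - (θ + k / 2)) = (Complex.log (wz θ k x)).im := by
    simp only [cinv]; field_simp; ring
  rw [e2]
  apply wz_inj (θ := θ) (k := k) _ (piS_two _ _)
  rw [wz_piS, e1, Complex.log_im, ← norm_cz, ← norm_wz θ k]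
  exact Complex.norm_mul_exp_arg_mul_I _

lemma cmap_smooth {θ k a h : ℝ} (hh : 0 < h) (ha : -1 ≤ a) (hah : a + h ≤ 1) :
    ContMDiffOn 𝓘(ℝ, ℝ × ℝ) (𝓡 2) (⊤ : ℕ∞) (cmap θ k a h) Sq := by
  intro p hp
  have hy := range_of_Sq hh ha hah hp
  apply ContMDiffAt.contMDiffWithinAt
  have h1 : ContDiffAt ℝ (⊤ : ℕ∞) (fun p : ℝ × ℝ =>
      ((θ + k * p.1, Real.arcsin (a + h * p.2)) : ℝ × ℝ)) p := by
    apply ContDiffAt.prodMk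
    · fun_prop
    · have h2 : ContDiffAt ℝ (⊤ : ℕ∞) (fun p : ℝ × ℝ => a + h * p.2) p := by fun_prop
      have h3 : ContDiffAt ℝ (⊤ : ℕ∞) Real.arcsin (a + h * p.2) :=
        Real.contDiffAt_arcsin hy.1.ne' hy.2.ne
      exact ContDiffAt.comp (g := Real.arcsin) p h3 h2
  exact (Gam_contMDiff _).comp p h1.contMDiffAt

lemma cmap_vol : ∃ c : ℝ≥0∞, ∀ {θ k a h : ℝ} (_ : 0 < k) (_ : k ≤ 1) (_ : 0 < h) (_ : -1 ≤ a)
    (_ : a + h ≤ 1) (A : Set (ℝ × ℝ)), A ⊆ Sq → MeasurableSet A →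
    MeasurableSet (cmap θ k a h '' A) →
    sphereMeasure (cmap θ k a h '' A) = c * ENNReal.ofReal (k * h) * volume A := by
  obtain ⟨c, hc⟩ := sphereMeasure_eq
  refine ⟨c * (3 * ∫⁻ t in Set.Ioo (0:ℝ) 1, ENNReal.ofReal (2 * Real.pi * t ^ 2)), ?_⟩
  intro θ k a h hk hk1 hh ha hah A hA hAm hm
  have e : cmap θ k a h '' A = sph '' ((fun p : ℝ × ℝ => (θ + k * p.1, a + h * p.2)) '' A) := by
    rw [Set.image_image]; rfl
  have hd : ∀ p : ℝ × ℝ, HasFDerivAt (fun p : ℝ × ℝ => (θ + k * p.1, a + h * p.2)) (mat2 k 0 0 h) p := by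
    intro p
    have h1 : HasFDerivAt (fun p : ℝ × ℝ => θ + k * p.1) (k • ContinuousLinearMap.fst ℝ ℝ ℝ) p :=
      (hasFDerivAt_fst.const_mul k).const_add θ
    have h2 : HasFDerivAt (fun p : ℝ × ℝ => a + h * p.2) (h • ContinuousLinearMap.snd ℝ ℝ ℝ) p :=
      (hasFDerivAt_snd.const_mul h).const_add a
    have h3 := h1.prodMk h2
    simpa [mat2] using h3
  have hinj : Function.Injective (fun p : ℝ × ℝ => (θ + k * p.1, a + h * p.2)) := by
    intro p q hpq
    simp only [Prod.mk.injEq] at hpq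
    ext
    · have := hpq.1; nlinarith [mul_left_cancel₀ hk.ne' (add_left_cancel this)]
    · have := hpq.2; nlinarith [mul_left_cancel₀ hh.ne' (add_left_cancel this)]
  have hcont : Continuous (fun p : ℝ × ℝ => (θ + k * p.1, a + h * p.2)) := by fun_prop
  have hvol := lintegral_abs_det_fderiv_eq_addHaar_image volume hAm
      (fun p _ => (hd p).hasFDerivWithinAt) hinj.injOn
  rw [e, hc, Measure.smul_apply, toSphere_sph θ, ← hvol]
  · simp only [mat2_det, mul_zero, sub_zero, lintegral_const, Measure.restrict_apply_univ,
      smul_eq_mul]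
    rw [abs_of_pos (mul_pos hk hh)]
    ring
  · exact hAm.image_of_continuousOn_injOn hcont.continuousOn hinj.injOn
  · rintro _ ⟨p, hp, rfl⟩
    have hp' := hA hp
    have hy := range_of_Sq hh ha hah hp'
    refine ⟨⟨?_, ?_⟩, hy⟩
    · have := hp'.1.1; simp only; nlinarith
    · have := hp'.1.1; have := hp'.1.2; simp only; nlinarith
  · rw [← e]; exact hm

lemma cell_map {θ k a h : ℝ} (hk : 0 < k) (hk1 : k ≤ 1) (hh : 0 < h) (ha : -1 ≤ a) (hah : a + h ≤ 1)
    (G : (ℝ × ℝ) ≃ₜ (ℝ × ℝ)) (hG : Nice Sq G) :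
    ∃ g : S2 ≃ₜ S2, ContMDiff (𝓡 2) (𝓡 2) (⊤ : ℕ∞) g ∧ ContMDiff (𝓡 2) (𝓡 2) (⊤ : ℕ∞) g.symm ∧
      MeasurePreserving g sphereMeasure sphereMeasure ∧
      (∀ p ∈ Sq, g (cmap θ k a h p) = cmap θ k a h (G p)) ∧
      ∀ x, x ∉ cmap θ k a h '' Sq → g x = x := by
  obtain ⟨c, hc⟩ := cmap_vol
  obtain ⟨g, h1, h2, h3, h4, K, hK, -, h5⟩ := transport (𝓡 2) sphereMeasure (cmap θ k a h) (cinv θ k a h) Sq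
    (cdom θ k a h) (isOpen_Ioo.prod isOpen_Ioo) (cdom_open θ k a h)
    (fun p hp => ⟨(cmap_facts hk hk1 hh ha hah hp).1, by
      rw [Set.mem_preimage, (cmap_facts hk hk1 hh ha hah hp).2]; exact hp⟩)
    (fun x hx => hx.2) (fun p hp => (cmap_facts hk hk1 hh ha hah hp).2)
    (fun x hx => cmap_cinv hk hh ha hah hx) (cmap_smooth hh ha hah)
    ((cinv_smooth θ k a h).mono Set.inter_subset_left) (c * ENNReal.ofReal (k * h))
    (fun A hA hAm hm => hc hk hk1 hh ha hah A hA hAm hm) G hG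
  refine ⟨g, h1, h2, h3, h4, fun x hx => h5 x fun hxK => hx ?_⟩
  exact ⟨_, (hK hxK).2, cmap_cinv hk hh ha hah (hK hxK)⟩

structure SMP (g : S2 ≃ₜ S2) : Prop where
  smooth : ContMDiff (𝓡 2) (𝓡 2) (⊤ : ℕ∞) g
  smooth_symm : ContMDiff (𝓡 2) (𝓡 2) (⊤ : ℕ∞) g.symm
  mp : MeasurePreserving g sphereMeasure sphereMeasure

lemma SMP.refl : SMP (Homeomorph.refl S2) :=
  ⟨contMDiff_id, contMDiff_id, MeasurePreserving.id _⟩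

lemma SMP.trans {g g' : S2 ≃ₜ S2} (h : SMP g) (h' : SMP g') : SMP (g.trans g') :=
  ⟨h'.smooth.comp h.smooth, h.smooth_symm.comp h'.smooth_symm, h'.mp.comp h.mp⟩

lemma glue {ι : Type*} [DecidableEq ι] (V : ι → Set S2) (γ : ι → S2 ≃ₜ S2)
    (hd : ∀ i j x, x ∈ V i → x ∈ V j → i = j) (hγ : ∀ i, SMP (γ i))
    (hm : ∀ i x, x ∈ V i → γ i x ∈ V i) (hf : ∀ i x, x ∉ V i → γ i x = x) (T : Finset ι) :
    ∃ g : S2 ≃ₜ S2, SMP g ∧ (∀ i ∈ T, ∀ x ∈ V i, g x = γ i x) ∧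
      ∀ x, (∀ i ∈ T, x ∉ V i) → g x = x := by
  induction T using Finset.induction_on with
  | empty => exact ⟨Homeomorph.refl S2, SMP.refl, by simp, fun x _ => rfl⟩
  | insert i T hi ih =>
    obtain ⟨g, h1, h2, h3⟩ := ih
    refine ⟨g.trans (γ i), h1.trans (hγ i), ?_, ?_⟩
    · intro j hj x hx
      rw [Homeomorph.trans_apply]
      rcases Finset.mem_insert.1 hj with rfl | hj
      · rw [h3 x (fun k hk hxk => hi (hd _ _ x hx hxk ▸ hk))]
      · rw [h2 j hj x hx]
        apply hf
        intro hc
        exact hi ((hd _ _ _ hc (hm j x hx)) ▸ hj)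
    · intro x hx
      rw [Homeomorph.trans_apply, h3 x (fun j hj => hx j (Finset.mem_insert_of_mem hj))]
      exact hf i x (hx i (Finset.mem_insert_self _ _))

noncomputable def phi (P : ℕ) (a h : ℝ) (j : ℤ) (s : ℕ) (p : ℝ × ℝ) : S2 :=
  sph ((j + p.1) / P, a + h * (s + p.2))

lemma phi_eq (P : ℕ) (a h : ℝ) (j : ℤ) (s : ℕ) :
    phi P a h j s = cmap (j / P) (1 / P) (a + h * s) h := by
  funext p
  rw [phi, cmap]
  congr 2 <;> ring

lemma phi_add (P : ℕ) (hP : 0 < P) (a h : ℝ) (j n : ℤ) (s : ℕ) (p : ℝ × ℝ) :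
    phi P a h (j + n * P) s p = phi P a h j s p := by
  have hP' : (P : ℝ) ≠ 0 := by exact_mod_cast hP.ne'
  rw [phi, phi, ← sph_add_int ((j + p.1) / P) _ n]
  congr 2
  push_cast
  field_simp
  ring

lemma slab_bd {a h : ℝ} {L s : ℕ} (hh : 0 < h) (ha : -1 ≤ a) (haL : a + h * L ≤ 1) (hs : s < L) :
    -1 ≤ a + h * s ∧ a + h * s + h ≤ 1 := by
  have h1 : (s : ℝ) + 1 ≤ L := by exact_mod_cast hs
  have h2 : (0 : ℝ) ≤ s := by positivity
  constructor <;> nlinarith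

lemma phi_coe {P : ℕ} {a h : ℝ} {L s : ℕ} (hh : 0 < h) (ha : -1 ≤ a) (haL : a + h * L ≤ 1) (hs : s < L)
    (j : ℤ) {p : ℝ × ℝ} (hp : p ∈ Sq) :
    (phi P a h j s p : E3) = piS ((j + p.1) / P) (a + h * (s + p.2)) := by
  have hb := slab_bd hh ha haL hs
  have := range_of_Sq hh hb.1 hb.2 hp
  rw [phi]
  apply sph_coe
  have e : a + h * (s + p.2) = a + h * s + h * p.2 := by ring
  simp only [e]
  exact ⟨this.1.le, this.2.le⟩

lemma phi_inj {P : ℕ} (hP : 0 < P) {a h : ℝ} {L s s' : ℕ} (hh : 0 < h) (ha : -1 ≤ a) (haL : a + h * L ≤ 1)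
    (hs : s < L) (hs' : s' < L) {j j' : ℤ} {p p' : ℝ × ℝ} (hp : p ∈ Sq) (hp' : p' ∈ Sq)
    (heq : phi P a h j s p = phi P a h j' s' p') : s = s' ∧ ∃ n : ℤ, j = j' + n * P := by
  have hP' : (0 : ℝ) < P := by exact_mod_cast hP
  have hb := slab_bd hh ha haL hs
  have hy := range_of_Sq hh hb.1 hb.2 hp
  have heq := congrArg Subtype.val heq
  rw [phi_coe hh ha haL hs j hp, phi_coe hh ha haL hs' j' hp'] at heq
  obtain ⟨e1, n, e2⟩ := piS_inj (by
    have e : a + h * (s + p.2) = a + h * s + h * p.2 := by ring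
    rw [e]; exact hy) heq
  constructor
  · have e3 := mul_left_cancel₀ hh.ne' (add_left_cancel e1)
    have b1 := hp.2.1
    have b2 := hp.2.2
    have b3 := hp'.2.1
    have b4 := hp'.2.2
    have c1 : (s : ℝ) < ((s' + 1 : ℕ) : ℝ) := by push_cast; linarith
    have c2 : (s' : ℝ) < ((s + 1 : ℕ) : ℝ) := by push_cast; linarith
    have := Nat.cast_lt.1 c1
    have := Nat.cast_lt.1 c2
    omega
  · refine ⟨n, ?_⟩
    have e3 : (j : ℝ) + p.1 = j' + p'.1 + n * P := by
      field_simp at e2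
      linarith
    have b1 := hp.1.1
    have b2 := hp.1.2
    have b3 := hp'.1.1
    have b4 := hp'.1.2
    have c1 : (j : ℝ) < ((j' + n * P + 1 : ℤ) : ℝ) := by push_cast; linarith
    have c2 : ((j' + n * P : ℤ) : ℝ) < ((j + 1 : ℤ) : ℝ) := by push_cast; linarith
    have := Int.cast_lt.1 c1
    have := Int.cast_lt.1 c2
    omega

lemma global_map {P : ℕ} (hP : 0 < P) {a h : ℝ} {L : ℕ} (hh : 0 < h) (ha : -1 ≤ a) (haL : a + h * L ≤ 1)
    (G : (ℝ × ℝ) ≃ₜ (ℝ × ℝ)) (hG : Nice Sq G) :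
    ∃ g : S2 ≃ₜ S2, SMP g ∧
      (∀ (j : ℤ) (s : ℕ), s < L → ∀ p ∈ Sq, g (phi P a h j s p) = phi P a h j s (G p)) ∧
      ∀ x, (∀ (j : ℤ) (s : ℕ), s < L → ∀ p ∈ Sq, x ≠ phi P a h j s p) → g x = x := by
  have hP' : (0 : ℝ) < P := by exact_mod_cast hP
  have hP1 : (1 : ℝ) ≤ P := by exact_mod_cast hP
  have key : ∀ i : Fin P × Fin L, ∃ g : S2 ≃ₜ S2, SMP g ∧
      (∀ p ∈ Sq, g (phi P a h (i.1 : ℕ) i.2 p) = phi P a h (i.1 : ℕ) i.2 (G p)) ∧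
      ∀ x, x ∉ phi P a h (i.1 : ℕ) i.2 '' Sq → g x = x := by
    intro i
    have hb := slab_bd hh ha haL i.2.2
    rw [phi_eq]
    obtain ⟨g, h1, h2, h3, h4, h5⟩ := cell_map (θ := (((i.1 : ℕ) : ℤ) : ℝ) / P) (k := 1 / P)
      (by positivity) (by rw [div_le_one hP']; exact hP1) hh hb.1 hb.2 G hG
    exact ⟨g, ⟨h1, h2, h3⟩, h4, h5⟩
  choose γ h1 h2 h3 using key
  obtain ⟨g, g1, g2, g3⟩ := glue (fun i : Fin P × Fin L => phi P a h (i.1 : ℕ) i.2 '' Sq) γ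
    (by
      rintro i j x ⟨p, hp, rfl⟩ ⟨p', hp', e⟩
      obtain ⟨e1, n, e2⟩ := phi_inj hP hh ha haL j.2.2 i.2.2 hp' hp e
      have i1 : ((i.1 : ℕ) : ℤ) < P := by exact_mod_cast i.1.2
      have j1 : ((j.1 : ℕ) : ℤ) < P := by exact_mod_cast j.1.2
      have hPz : (0 : ℤ) < P := by exact_mod_cast hP
      have hn : n = 0 := by
        by_contra hn
        rcases lt_or_gt_of_ne hn with hn | hn
        · have : n * (P : ℤ) ≤ -P := by nlinarith
          omega
        · have : (P : ℤ) ≤ n * P := by nlinarith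
          omega
      subst hn
      refine Prod.ext (Fin.ext ?_) (Fin.ext e1.symm)
      omega)
    h1
    (by
      rintro i x ⟨p, hp, rfl⟩
      rw [h2 i p hp]
      exact ⟨G p, hG.mem hp, rfl⟩) h3 Finset.univ
  refine ⟨g, g1, ?_, ?_⟩
  · intro j s hs p hp
    have hPz : (0 : ℤ) < P := by exact_mod_cast hP
    obtain ⟨j0, hj0⟩ : ∃ j0 : ℕ, (j0 : ℤ) = j % P := ⟨(j % P).toNat, Int.toNat_of_nonneg (Int.emod_nonneg _ hPz.ne')⟩
    have hlt : j0 < P := by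
      have := Int.emod_lt_of_pos j hPz
      omega
    have e : j = (j0 : ℤ) + (j / P) * P := by
      rw [hj0]
      have := Int.emod_add_mul_ediv j P
      linarith
    rw [e, phi_add P hP, phi_add P hP]
    have := g2 (⟨j0, hlt⟩, ⟨s, hs⟩) (Finset.mem_univ _) _ ⟨p, hp, rfl⟩
    rw [this]
    exact h2 (⟨j0, hlt⟩, ⟨s, hs⟩) p hp
  · intro x hx
    apply g3
    rintro i - ⟨p, hp, rfl⟩
    exact hx _ _ i.2.2 p hp rfl

lemma dist_sq_E3 (x y : E3) : dist x y ^ 2 = (x 0 - y 0) ^ 2 + (x 1 - y 1) ^ 2 + (x 2 - y 2) ^ 2 := by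
  rw [EuclideanSpace.dist_eq, Real.sq_sqrt (by positivity), Fin.sum_univ_three]
  simp only [Real.dist_eq, sq_abs]

lemma abs_sub_le_dist_E3 (x y : E3) : |x 2 - y 2| ≤ dist x y := by
  apply abs_le_of_sq_le_sq _ dist_nonneg
  rw [dist_sq_E3]
  nlinarith [sq_nonneg (x 0 - y 0), sq_nonneg (x 1 - y 1)]

lemma dist_piS (θ θ' y y' : ℝ) : dist (piS θ y) (piS θ' y') ^ 2 =
    (√(1 - y ^ 2) - √(1 - y' ^ 2)) ^ 2 + (y - y') ^ 2 +
      4 * √(1 - y ^ 2) * √(1 - y' ^ 2) * Real.sin (Real.pi * (θ - θ')) ^ 2 := by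
  rw [dist_sq_E3, piS_zero, piS_one, piS_two, piS_zero, piS_one, piS_two]
  have e : Real.cos (2 * Real.pi * (θ - θ')) = 1 - 2 * Real.sin (Real.pi * (θ - θ')) ^ 2 := by
    have := Real.cos_two_mul (Real.pi * (θ - θ'))
    have h2 := Real.sin_sq_add_cos_sq (Real.pi * (θ - θ'))
    rw [mul_assoc, this]; linarith
  have e2 : Real.cos (2 * Real.pi * (θ - θ')) = Real.cos (2 * Real.pi * θ) * Real.cos (2 * Real.pi * θ') +
      Real.sin (2 * Real.pi * θ) * Real.sin (2 * Real.pi * θ') := by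
    rw [mul_sub, Real.cos_sub]
  rw [e] at e2
  have s1 := Real.sin_sq_add_cos_sq (2 * Real.pi * θ)
  have s2 := Real.sin_sq_add_cos_sq (2 * Real.pi * θ')
  linear_combination (√(1 - y ^ 2)) ^ 2 * s1 + (√(1 - y' ^ 2)) ^ 2 * s2 +
    2 * √(1 - y ^ 2) * √(1 - y' ^ 2) * e2

lemma sqrt_diff_sq {u w : ℝ} (hu : 0 ≤ u) (hw : 0 ≤ w) : (√u - √w) ^ 2 ≤ |u - w| := by
  have h1 := Real.sq_sqrt hu
  have h2 := Real.sq_sqrt hw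
  have h3 := Real.sqrt_nonneg u
  have h4 := Real.sqrt_nonneg w
  rcases le_total (√w) (√u) with h | h
  · refine le_trans ?_ (le_abs_self _); nlinarith
  · refine le_trans ?_ (neg_le_abs _); nlinarith

lemma dist_piS_le {ε h k θ θ' y y' : ℝ} (hε : 0 < ε) (hy : y ∈ Set.Icc (-1 : ℝ) 1) (hy' : y' ∈ Set.Icc (-1 : ℝ) 1)
    (hyy : |y - y'| ≤ h) (hθ : |θ - θ'| ≤ k) (hh : h ≤ ε ^ 2 / 400) (hh1 : h ≤ 1) (hk : k ≤ ε / 100) :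
    dist (piS θ y) (piS θ' y') ≤ ε / 8 := by
  apply le_of_sq_le_sq _ (by positivity)
  rw [dist_piS]
  have a1 : (√(1 - y ^ 2) - √(1 - y' ^ 2)) ^ 2 ≤ 2 * h := by
    refine (sqrt_diff_sq (by nlinarith [hy.1, hy.2]) (by nlinarith [hy'.1, hy'.2])).trans ?_
    have : (1 - y ^ 2) - (1 - y' ^ 2) = (y - y') * (-(y + y')) := by ring
    rw [this, abs_mul, abs_neg]
    have h2 : |y + y'| ≤ 2 := by rw [abs_le]; constructor <;> linarith [hy.1, hy.2, hy'.1, hy'.2]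
    nlinarith [abs_nonneg (y - y'), abs_nonneg (y + y')]
  have a2 : (y - y') ^ 2 ≤ h := by
    rw [← sq_abs]; nlinarith [abs_nonneg (y - y')]
  have a3 : Real.sin (Real.pi * (θ - θ')) ^ 2 ≤ 16 * k ^ 2 / 1 := by
    have h1 : |Real.sin (Real.pi * (θ - θ'))| ≤ |Real.pi * (θ - θ')| := Real.abs_sin_le_abs
    rw [abs_mul, abs_of_pos Real.pi_pos] at h1
    have h2 : Real.pi * |θ - θ'| ≤ 4 * k := by
      nlinarith [Real.pi_le_four, Real.pi_pos, abs_nonneg (θ - θ')]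
    rw [← sq_abs]
    nlinarith [abs_nonneg (Real.sin (Real.pi * (θ - θ')))]
  have b1 : √(1 - y ^ 2) ≤ 1 := by rw [Real.sqrt_le_left (by norm_num)]; nlinarith
  have b2 : √(1 - y' ^ 2) ≤ 1 := by rw [Real.sqrt_le_left (by norm_num)]; nlinarith
  have c1 := Real.sqrt_nonneg (1 - y ^ 2)
  have c2 := Real.sqrt_nonneg (1 - y' ^ 2)
  have d1 : 4 * √(1 - y ^ 2) * √(1 - y' ^ 2) * Real.sin (Real.pi * (θ - θ')) ^ 2 ≤
      4 * (16 * k ^ 2 / 1) := by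
    have : √(1 - y ^ 2) * √(1 - y' ^ 2) ≤ 1 := by nlinarith
    have h5 := sq_nonneg (Real.sin (Real.pi * (θ - θ')))
    calc _ = 4 * ((√(1 - y ^ 2) * √(1 - y' ^ 2)) * Real.sin (Real.pi * (θ - θ')) ^ 2) := by ring
      _ ≤ 4 * (1 * (16 * k ^ 2 / 1)) := by gcongr
      _ = _ := by ring
  have hk0 : 0 ≤ k := (abs_nonneg _).trans hθ
  have hk2 : k ^ 2 ≤ (ε / 100) ^ 2 := by gcongr
  nlinarith

lemma abs_sin_pi_ge {t : ℝ} (ht : |t| ≤ 1 / 2) : 2 * |t| ≤ |Real.sin (Real.pi * t)| := by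
  have hpi := Real.pi_pos
  have key : ∀ s : ℝ, 0 ≤ s → s ≤ 1 / 2 → 2 * s ≤ Real.sin (Real.pi * s) := by
    intro s h0 h1
    have := Real.mul_le_sin (x := Real.pi * s) (by positivity) (by nlinarith)
    have e : 2 / Real.pi * (Real.pi * s) = 2 * s := by field_simp
    linarith
  rcases le_total 0 t with h | h
  · rw [abs_of_nonneg h] at *
    exact (key t h ht).trans (le_abs_self _)
  · rw [abs_of_nonpos h] at *
    have := key (-t) (by linarith) ht
    have e : Real.pi * -t = -(Real.pi * t) := by ring
    rw [e, Real.sin_neg] at this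
    exact this.trans (neg_le_abs _)

lemma dist_piS_ge {ε θ θ' y y' : ℝ} (hε : 0 < ε) (hε1 : ε < 1) (hy : |y| ≤ 1 - ε / 2) (hy' : |y'| ≤ 1 - ε / 2) :
    2 * ε * |θ - θ' - round (θ - θ')| ≤ dist (piS θ y) (piS θ' y') := by
  apply le_of_sq_le_sq _ dist_nonneg
  rw [dist_piS]
  obtain ⟨t, ht⟩ : ∃ t, t = θ - θ' - round (θ - θ') := ⟨_, rfl⟩
  have ht2 : |t| ≤ 1 / 2 := by rw [ht]; exact abs_sub_round _
  have hs : 4 * t ^ 2 ≤ Real.sin (Real.pi * (θ - θ')) ^ 2 := by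
    have e : Real.pi * (θ - θ') = Real.pi * t + (round (θ - θ') : ℤ) * Real.pi := by rw [ht]; ring
    rw [e, Real.sin_add_int_mul_pi, mul_pow, show ((-1 : ℝ) ^ (round (θ - θ'))) ^ 2 = 1 by
      rw [← zpow_natCast, ← zpow_mul, mul_comm, zpow_mul]; simp, one_mul, ← sq_abs (Real.sin _)]
    have := abs_sin_pi_ge ht2
    rw [← sq_abs t]
    nlinarith [abs_nonneg t]
  rw [← ht]
  have key : ∀ z : ℝ, |z| ≤ 1 - ε / 2 → √(3 * ε / 4) ≤ √(1 - z ^ 2) := by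
    intro z hz
    apply Real.sqrt_le_sqrt
    rw [← sq_abs]
    nlinarith [abs_nonneg z]
  have k1 := key y hy
  have k2 := key y' hy'
  have k3 : 3 * ε / 4 ≤ √(1 - y ^ 2) * √(1 - y' ^ 2) := by
    rw [← Real.mul_self_sqrt (show 0 ≤ 3 * ε / 4 by positivity)]
    gcongr
  have k4 : (3 * ε / 4) * (4 * t ^ 2) ≤ (√(1 - y ^ 2) * √(1 - y' ^ 2)) * Real.sin (Real.pi * (θ - θ')) ^ 2 := by
    gcongr
  have k5 : (2 * ε * |t|) ^ 2 = 4 * ε ^ 2 * t ^ 2 := by rw [mul_pow, sq_abs]; ring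
  rw [k5]
  have k6 : ε ^ 2 * t ^ 2 ≤ ε * t ^ 2 := by
    have := sq_nonneg t
    gcongr
    nlinarith
  nlinarith [sq_nonneg (√(1 - y ^ 2) - √(1 - y' ^ 2)), sq_nonneg (y - y'), mul_nonneg hε.le (sq_nonneg t)]

lemma rotZ_piS (α θ y : ℝ) : rotZ α (piS θ y) = piS (θ + α) y := by
  have e : 2 * Real.pi * (θ + α) = 2 * Real.pi * θ + 2 * Real.pi * α := by ring
  ext i
  fin_cases i
  · simp only [rotZ, piS, e, Real.cos_add, Real.sin_add]
    simp
    ring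
  · simp only [rotZ, piS, e, Real.cos_add, Real.sin_add]
    simp
    ring
  · simp [rotZ, piS]

lemma rotZ_neg (α : ℝ) (x : S2) : rotZ (-α) (rotZ α (x : E3)) = x := by
  obtain ⟨p, -, -, hp2, hp⟩ := sph_surj x
  rw [← hp, sph_coe p hp2, rotZ_piS, rotZ_piS]
  congr 1
  ring

structure Cfg (P L : ℕ) (a h ε : ℝ) : Prop where
  hP : 0 < P
  hε : 0 < ε
  hε1 : ε < 1
  hh : 0 < h
  ha : a = -1 + ε / 2
  haL : a + h * L = 1 - ε / 2
  hh2 : h ≤ ε ^ 2 / 400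
  hk : 1 / P ≤ ε / 100

lemma Cfg.ha' {P L a h ε} (c : Cfg P L a h ε) : -1 ≤ a := by rw [c.ha]; linarith [c.hε]
lemma Cfg.haL' {P L a h ε} (c : Cfg P L a h ε) : a + h * L ≤ 1 := by rw [c.haL]; linarith [c.hε]

structure IsMap (P L : ℕ) (a h : ℝ) (G : (ℝ × ℝ) ≃ₜ (ℝ × ℝ)) (g : S2 ≃ₜ S2) : Prop where
  nice : Nice Sq G
  on : ∀ (j : ℤ) (s : ℕ), s < L → ∀ p ∈ Sq, g (phi P a h j s p) = phi P a h j s (G p)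
  off : ∀ x, (∀ (j : ℤ) (s : ℕ), s < L → ∀ p ∈ Sq, x ≠ phi P a h j s p) → g x = x

lemma Cfg.height {P L a h ε} (c : Cfg P L a h ε) {s : ℕ} (hs : s < L) {t : ℝ}
    (ht : t ∈ Set.Ioo (0:ℝ) 1) : |a + h * (s + t)| < 1 - ε / 2 := by
  have h1 : (s : ℝ) + 1 ≤ L := by exact_mod_cast hs
  have h2 : (0 : ℝ) ≤ s := by positivity
  have h3 := c.hh
  have h4 := c.haL
  have h5 := c.ha
  have h6 : h * (s + t) < h * L := by
    apply mul_lt_mul_of_pos_left _ h3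
    linarith [ht.2]
  have h7 : 0 < h * (s + t) := by
    apply mul_pos h3
    linarith [ht.1]
  rw [abs_lt]
  constructor <;> linarith

lemma Cfg.mem_Icc {P L a h ε} (c : Cfg P L a h ε) {s : ℕ} (hs : s < L) {t : ℝ}
    (ht : t ∈ Set.Ioo (0:ℝ) 1) : a + h * (s + t) ∈ Set.Icc (-1 : ℝ) 1 := by
  have := c.height hs ht
  have h1 := c.hε
  rw [abs_lt] at this
  constructor <;> linarith [this.1, this.2]

lemma Cfg.cell_dist {P L a h ε} (c : Cfg P L a h ε) (j : ℤ) {s : ℕ} (hs : s < L) {p p' : ℝ × ℝ}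
    (hp : p ∈ Sq) (hp' : p' ∈ Sq) : dist (phi P a h j s p) (phi P a h j s p') ≤ ε / 8 := by
  have hP' : (0 : ℝ) < P := by exact_mod_cast c.hP
  rw [Subtype.dist_eq, phi_coe c.hh c.ha' c.haL' hs j hp, phi_coe c.hh c.ha' c.haL' hs j hp']
  have hh := c.hh
  refine dist_piS_le (h := h) (k := 1 / P) c.hε (c.mem_Icc hs hp.2) (c.mem_Icc hs hp'.2) ?_ ?_ c.hh2
    (c.hh2.trans (by nlinarith [c.hε, c.hε1])) c.hk
  · have e : a + h * (s + p.2) - (a + h * (s + p'.2)) = h * (p.2 - p'.2) := by ring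
    rw [e, abs_mul, abs_of_pos hh]
    have : |p.2 - p'.2| ≤ 1 := by
      rw [abs_le]; constructor <;> linarith [hp.2.1, hp.2.2, hp'.2.1, hp'.2.2]
    nlinarith
  · have e : (j + p.1) / P - (j + p'.1) / P = (p.1 - p'.1) / P := by ring
    rw [e, abs_div, abs_of_pos hP']
    gcongr
    rw [abs_le]; constructor <;> linarith [hp.1.1, hp.1.2, hp'.1.1, hp'.1.2]

lemma IsMap.dist_le {P L a h ε G g} (c : Cfg P L a h ε) (hg : IsMap P L a h G g) (x : S2) :
    dist (g x) x ≤ ε / 8 := by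
  by_cases hx : ∃ (j : ℤ) (s : ℕ), s < L ∧ ∃ p ∈ Sq, x = phi P a h j s p
  · obtain ⟨j, s, hs, p, hp, rfl⟩ := hx
    rw [hg.on j s hs p hp]
    exact c.cell_dist j hs (hg.nice.mem hp) hp
  · rw [hg.off x (fun j s hs p hp h => hx ⟨j, s, hs, p, hp, h⟩), dist_self]
    linarith [c.hε]

lemma IsMap.dist_le_symm {P L a h ε G g} (c : Cfg P L a h ε) (hg : IsMap P L a h G g) (x : S2) :
    dist (g.symm x) x ≤ ε / 8 := by
  have := hg.dist_le c (g.symm x)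
  rw [g.apply_symm_apply, dist_comm] at this
  exact this

lemma IsMap.pole {P L a h ε G g} (c : Cfg P L a h ε) (hg : IsMap P L a h G g) (x : S2)
    (hx : 1 - ε / 2 < |(x : E3) 2|) : g x = x := by
  apply hg.off
  rintro j s hs p hp rfl
  rw [phi_coe c.hh c.ha' c.haL' hs j hp, piS_two] at hx
  linarith [c.height hs hp.2]

lemma IsMap.comm {P L a h ε G g} (c : Cfg P L a h ε) (hg : IsMap P L a h G g) (q P' : ℕ) (hq : 1 ≤ q)
    (hPq : P = q * P') (x y : S2) (hxy : (y : E3) = rotZ (1 / q) x) :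
    (g y : E3) = rotZ (1 / q) (g x) := by
  have hP : (0 : ℝ) < P := by exact_mod_cast c.hP
  have hq' : (0 : ℝ) < q := by exact_mod_cast hq
  have hPR : (P : ℝ) = q * P' := by exact_mod_cast hPq
  have hrot : ∀ (j : ℤ) (n : ℤ) (s : ℕ), s < L → ∀ p ∈ Sq,
      rotZ ((n : ℝ) / q) (phi P a h j s p) = phi P a h (j + n * P') s p := by
    intro j n s hs p hp
    rw [phi_coe c.hh c.ha' c.haL' hs j hp, phi_coe c.hh c.ha' c.haL' hs _ hp, rotZ_piS]
    congr 1
    push_cast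
    have hP'0 : (P' : ℝ) ≠ 0 := by rintro h0; rw [h0, mul_zero] at hPR; exact hP.ne' hPR
    rw [hPR]
    field_simp
    ring
  by_cases hx : ∃ (j : ℤ) (s : ℕ), s < L ∧ ∃ p ∈ Sq, x = phi P a h j s p
  · obtain ⟨j, s, hs, p, hp, rfl⟩ := hx
    have h1 := hrot j 1 s hs p hp
    have h2 := hrot j 1 s hs (G p) (hg.nice.mem hp)
    push_cast at h1 h2
    rw [h1] at hxy
    rw [Subtype.ext hxy, hg.on _ s hs p hp, hg.on _ s hs p hp, h2]
  · rw [hg.off x (fun j s hs p hp h => hx ⟨j, s, hs, p, hp, h⟩), hg.off y, hxy]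
    rintro j s hs p hp rfl
    apply hx
    refine ⟨j + (-1) * P', s, hs, p, hp, Subtype.ext ?_⟩
    have h1 := hrot j (-1) s hs p hp
    push_cast at h1
    rw [hxy, neg_div, rotZ_neg] at h1
    exact h1

lemma sph_cont (y : ℝ) : Continuous fun θ : ℝ => sph (θ, y) := by
  unfold sph
  exact Gam_contMDiff.continuous.comp (by fun_prop)

lemma lat_eq {y : ℝ} (hy : y ∈ Set.Icc (-1 : ℝ) 1) :
    latitudeMeasure y = Measure.map (fun θ => sph (θ, y)) (volume.restrict (Set.Icc (0 : ℝ) 1)) := by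
  have e : (fun θ => piS θ y) = Subtype.val ∘ fun θ : ℝ => sph (θ, y) := by
    funext θ
    exact (sph_coe (θ, y) hy).symm
  have hm : MeasurableEmbedding (Subtype.val : S2 → E3) :=
    MeasurableEmbedding.subtype_coe isClosed_sphere.measurableSet
  rw [latitudeMeasure, e, ← Measure.map_map hm.measurable (sph_cont y).measurable, hm.comap_map]

lemma lat_integral (g : S2 ≃ₜ S2) {y : ℝ} (hy : y ∈ Set.Icc (-1 : ℝ) 1) (f : S2 → ℝ) (hf : Continuous f) :
    ∫ x, f x ∂(Measure.map g (latitudeMeasure y)) = ∫ θ in Set.Icc (0 : ℝ) 1, f (g (sph (θ, y))) := by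
  rw [lat_eq hy, integral_map g.measurable.aemeasurable hf.aestronglyMeasurable,
    integral_map (sph_cont y).measurable.aemeasurable]
  exact (hf.comp g.continuous).aestronglyMeasurable

lemma int_lower {F : ℝ → ℝ} (hF : Continuous F) (h0 : ∀ x, 0 ≤ F x) {Θ : Set ℝ} (hΘ : MeasurableSet Θ)
    (hs : Θ ⊆ Set.Icc 0 1) {r b : ℝ} (hr : ∀ x ∈ Θ, F x = r) (hr0 : 0 ≤ r)
    (hb : ENNReal.ofReal b ≤ volume Θ) : r * b ≤ ∫ θ in Set.Icc (0 : ℝ) 1, F θ := by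
  have hi : IntegrableOn F (Set.Icc 0 1) := hF.integrableOn_Icc
  have h1 : ∫ θ in Θ, F θ ≤ ∫ θ in Set.Icc (0 : ℝ) 1, F θ :=
    setIntegral_mono_set hi (Filter.Eventually.of_forall h0) hs.eventuallyLE
  have hfin : volume Θ ≠ ∞ := ((measure_mono hs).trans_lt (by simp)).ne
  have h2 : ∫ θ in Θ, F θ = r * volume.real Θ := by
    rw [setIntegral_congr_fun hΘ hr, setIntegral_const, smul_eq_mul, mul_comm]
  have h3 : b ≤ volume.real Θ := (ENNReal.ofReal_le_iff_le_toReal hfin).1 hb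
  rw [h2] at h1
  exact (mul_le_mul_of_nonneg_left h3 hr0).trans h1

lemma int_upper {F : ℝ → ℝ} (hF : Continuous F) {Θ : Set ℝ} (hΘ : MeasurableSet Θ)
    (hs : Θ ⊆ Set.Icc 0 1) {r b : ℝ} (h0 : ∀ x, F x ≤ r) (hr : ∀ x ∈ Θ, F x = 0) (hr0 : 0 ≤ r)
    (hb0 : 0 ≤ b)
    (hb : volume (Set.Icc 0 1 \ Θ) ≤ ENNReal.ofReal b) : ∫ θ in Set.Icc (0 : ℝ) 1, F θ ≤ r * b := by
  have hi : IntegrableOn F (Set.Icc 0 1) := hF.integrableOn_Icc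
  have h1 := integral_inter_add_sdiff (f := F) (μ := volume) (s := Set.Icc 0 1) hΘ hi
  rw [Set.inter_eq_self_of_subset_right hs, setIntegral_congr_fun hΘ hr] at h1
  simp only [integral_zero, zero_add] at h1
  rw [← h1]
  have hfin : volume (Set.Icc (0:ℝ) 1 \ Θ) ≠ ∞ := ((measure_mono Set.sdiff_subset).trans_lt (by simp)).ne
  have h2 : ∫ θ in Set.Icc (0 : ℝ) 1 \ Θ, F θ ≤ ∫ θ in Set.Icc (0 : ℝ) 1 \ Θ, r :=
    setIntegral_mono (hi.mono_set Set.sdiff_subset) (integrableOn_const hfin) h0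
  rw [setIntegral_const, smul_eq_mul, mul_comm] at h2
  refine h2.trans (mul_le_mul_of_nonneg_left ?_ hr0)
  exact ENNReal.toReal_le_of_le_ofReal hb0 hb

/-- Periodized copies of `X`. -/
def Per (P : ℕ) (X : Set ℝ) : Set ℝ := ⋃ j : Fin P, {θ | P * θ - (j : ℕ) ∈ X}

lemma Per_piece (P : ℕ) {X : Set ℝ} (hX : X ⊆ Set.Ioo 0 1) (j : Fin P) :
    {θ : ℝ | P * θ - (j : ℕ) ∈ X} ⊆ Col P j := by
  intro θ hθ
  have := hX hθ
  rw [mem_Col]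
  constructor <;> linarith [this.1, this.2]

lemma Per_sub (P : ℕ) {X : Set ℝ} (hX : X ⊆ Set.Ioo 0 1) : Per P X ⊆ Set.Icc 0 1 :=
  Set.iUnion_subset fun j => ((Per_piece P hX j).trans (Col_sub j)).trans Set.Ioo_subset_Icc_self

lemma Per_piece_meas (P : ℕ) {X : Set ℝ} (hXm : MeasurableSet X) (j : Fin P) :
    MeasurableSet {θ : ℝ | P * θ - (j : ℕ) ∈ X} :=
  hXm.preimage (f := fun θ : ℝ => P * θ - (j : ℕ)) (by fun_prop)

lemma Per_vol (P : ℕ) (hP : 0 < P) {X : Set ℝ} (hX : X ⊆ Set.Ioo 0 1) (hXm : MeasurableSet X) :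
    MeasurableSet (Per P X) ∧ volume (Per P X) = volume X := by
  have hP' : (0 : ℝ) < P := by exact_mod_cast hP
  refine ⟨MeasurableSet.iUnion fun j => Per_piece_meas P hXm j, ?_⟩
  rw [Per, measure_iUnion (fun i j hij => (Col_disj hij).mono (Per_piece P hX i) (Per_piece P hX j))
    (fun j => Per_piece_meas P hXm j), tsum_fintype]
  have h1 : ∀ j : Fin P, volume {θ : ℝ | P * θ - (j : ℕ) ∈ X} = ENNReal.ofReal (P : ℝ)⁻¹ * volume X := by
    intro j
    have e : {θ : ℝ | P * θ - (j : ℕ) ∈ X} = (fun θ => (P : ℝ) * θ) ⁻¹' ((fun x => x + -((j : ℕ) : ℝ)) ⁻¹' X) := by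
      ext θ; simp [sub_eq_add_neg]
    rw [e, Real.volume_preimage_mul_left hP'.ne', measure_preimage_add_right, abs_of_pos (by positivity)]
  simp only [h1, Finset.sum_const, Finset.card_univ, Fintype.card_fin, nsmul_eq_mul]
  rw [← mul_assoc, ← ENNReal.ofReal_natCast, ← ENNReal.ofReal_mul hP'.le, mul_inv_cancel₀ hP'.ne']
  simp

lemma IsMap.per_pt {P L a h ε G g} (c : Cfg P L a h ε) (hg : IsMap P L a h G g) {s : ℕ} (hs : s < L)
    {u : ℝ} (hu : u ∈ Set.Ioo (0 : ℝ) 1) {X : Set ℝ} (hX : X ⊆ Set.Ioo 0 1) {θ : ℝ} (hθ : θ ∈ Per P X) :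
    ∃ (j : ℤ), ∃ x ∈ X, (g (sph (θ, a + h * (s + u))) : E3) =
      piS ((j + (G (x, u)).1) / P) (a + h * (s + (G (x, u)).2)) ∧ G (x, u) ∈ Sq := by
  have hP : (0 : ℝ) < P := by exact_mod_cast c.hP
  obtain ⟨j, hj⟩ := Set.mem_iUnion.1 hθ
  have hx : P * θ - (j : ℕ) ∈ X := hj
  have hxS : (P * θ - (j : ℕ), u) ∈ Sq := ⟨hX hx, hu⟩
  refine ⟨(j : ℕ), _, hx, ?_, hg.nice.mem hxS⟩
  have e : sph (θ, a + h * (s + u)) = phi P a h (j : ℕ) s (P * θ - (j : ℕ), u) := by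
    rw [phi]
    congr 2
    push_cast
    field_simp
    ring
  rw [e, hg.on _ s hs _ hxS, phi_coe c.hh c.ha' c.haL' hs _ (hg.nice.mem hxS)]

lemma sep_test {P L a h ε G g} (c : Cfg P L a h ε) (hg : IsMap P L a h G g) {m : ℕ} (hm : 0 < m)
    {r : ℝ} (hr : 0 < r) (hr1 : r ≤ h / (8 * m)) (hr2 : r ≤ ε / (2 * m * P)) {s : ℕ} (hs : s < L)
    {u u' : ℝ} (hu : u ∈ Set.Ioo (0 : ℝ) 1) (hu' : u' ∈ Set.Ioo (0 : ℝ) 1) (hsep : SepG G m u u') :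
    ∃ f : S2 → ℝ, LipschitzWith 1 f ∧ r * (7 / 1024) ≤
      (∫ x, f x ∂(Measure.map g (latitudeMeasure (a + h * (s + u'))))) -
      (∫ x, f x ∂(Measure.map g (latitudeMeasure (a + h * (s + u))))) := by
  have hP : (0 : ℝ) < P := by exact_mod_cast c.hP
  have hmR : (0 : ℝ) < m := by exact_mod_cast hm
  have hε := c.hε
  have hh := c.hh
  obtain ⟨X0, X1, m0, m1, s0, s1, v0, v1, hX⟩ := hsep
  obtain ⟨pm0, pv0⟩ := Per_vol P c.hP s0 m0
  obtain ⟨pm1, pv1⟩ := Per_vol P c.hP s1 m1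
  have ps0 := Per_sub P s0
  have ps1 := Per_sub P s1
  have hfar : ∀ θ ∈ Per P X0, ∀ θ' ∈ Per P X1,
      r ≤ dist (g (sph (θ, a + h * (s + u)))) (g (sph (θ', a + h * (s + u')))) := by
    intro θ hθ θ' hθ'
    obtain ⟨j, x, hx, e, hS⟩ := hg.per_pt c hs hu s0 hθ
    obtain ⟨j', x', hx', e', hS'⟩ := hg.per_pt c hs hu' s1 hθ'
    by_contra! hlt
    rw [Subtype.dist_eq, e, e'] at hlt
    have d1 := (abs_sub_le_dist_E3 _ _).trans_lt hlt
    rw [piS_two, piS_two] at d1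
    have d2 := (dist_piS_ge (θ := (j + (G (x, u)).1) / P) (θ' := (j' + (G (x', u')).1) / P)
      hε c.hε1 (c.height hs hS.2).le (c.height hs hS'.2).le).trans_lt hlt
    have k1 : |(G (x, u)).2 - (G (x', u')).2| < 1 / (8 * m) := by
      have e1 : a + h * (s + (G (x, u)).2) - (a + h * (s + (G (x', u')).2)) =
          h * ((G (x, u)).2 - (G (x', u')).2) := by ring
      rw [e1, abs_mul, abs_of_pos hh] at d1
      have := d1.trans_le hr1
      rw [div_eq_mul_one_div] at this
      exact lt_of_mul_lt_mul_left this hh.le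
    obtain ⟨R, hR⟩ : ∃ R : ℤ, R = round ((j + (G (x, u)).1) / P - (j' + (G (x', u')).1) / P) := ⟨_, rfl⟩
    rw [← hR] at d2
    have k2 := hX x hx x' hx' (j' - j + P * R) k1
    have e2 : (j + (G (x, u)).1) / P - (j' + (G (x', u')).1) / P - R =
        ((G (x, u)).1 - (G (x', u')).1 - ((j' - j + P * R : ℤ) : ℝ)) / P := by
      push_cast
      field_simp
      ring
    rw [e2, abs_div, abs_of_pos hP] at d2
    have k3 : 2 * ε * ((1 / (4 * m)) / P) ≤
        2 * ε * (|(G (x, u)).1 - (G (x', u')).1 - ((j' - j + P * R : ℤ) : ℝ)| / P) := by gcongr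
    have k4 : 2 * ε * ((1 / (4 * m)) / P) = ε / (2 * m * P) := by
      field_simp
      norm_num
    linarith
  obtain ⟨E, hE⟩ : ∃ E : Set S2, E = (fun θ => g (sph (θ, a + h * (s + u')))) '' Per P X1 := ⟨_, rfl⟩
  have hEne : E.Nonempty := by
    rw [hE]
    apply Set.Nonempty.image
    apply nonempty_of_measure_ne_zero (μ := volume)
    rw [pv1]
    intro h0
    rw [h0] at v1
    simp at v1
  have hlip : LipschitzWith 1 (fun x : S2 => max (r - infDist x E) 0) := by
    have h1 : LipschitzWith 1 (fun x : S2 => r - infDist x E) := by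
      have := (LipschitzWith.const (α := S2) r).sub (lipschitz_infDist_pt E)
      simpa using this
    exact h1.max_const 0
  refine ⟨_, hlip, ?_⟩
  rw [lat_integral g (c.mem_Icc hs hu') _ hlip.continuous, lat_integral g (c.mem_Icc hs hu) _ hlip.continuous]
  have hlow := int_lower (F := fun θ => max (r - infDist (g (sph (θ, a + h * (s + u')))) E) 0)
    (hlip.continuous.comp (g.continuous.comp (sph_cont _))) (fun θ => le_max_right _ _) pm1 ps1 (r := r)
    (b := 1 / 128) (by
      intro θ hθ
      have : infDist (g (sph (θ, a + h * (s + u')))) E = 0 := by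
        apply infDist_zero_of_mem
        rw [hE]; exact ⟨θ, hθ, rfl⟩
      simp only [this, sub_zero]
      exact max_eq_left hr.le) hr.le (by rw [pv1]; exact v1)
  have hupp := int_upper (F := fun θ => max (r - infDist (g (sph (θ, a + h * (s + u)))) E) 0)
    (hlip.continuous.comp (g.continuous.comp (sph_cont _))) pm0 ps0 (r := r) (b := 1 / 1024)
    (fun θ => max_le (by linarith [infDist_nonneg (x := g (sph (θ, a + h * (s + u)))) (s := E)]) hr.le) (by
      intro θ hθ
      apply max_eq_right
      rw [sub_nonpos]
      rw [le_infDist hEne]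
      rintro z hz
      rw [hE] at hz
      obtain ⟨θ', hθ', rfl⟩ := hz
      exact hfar θ hθ θ' hθ') hr.le (by norm_num) (by
      have f0 : volume X0 ≠ ∞ := ((measure_mono s0).trans_lt (by simp)).ne
      rw [measure_sdiff ps0 pm0.nullMeasurableSet (by rw [pv0]; exact f0), pv0]
      rw [measure_sdiff s0 m0.nullMeasurableSet f0] at v0
      simpa using v0)
  linarith

lemma IsMap.z_int {P L a h ε G g} (c : Cfg P L a h ε) (hg : IsMap P L a h G g) {y : ℝ}
    (hy : y ∈ Set.Icc (-1 : ℝ) 1) :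
    |(∫ x : S2, (x : E3) 2 ∂(Measure.map g (latitudeMeasure y))) - y| ≤ ε / 8 := by
  have hcont : Continuous fun x : S2 => (x : E3) 2 := by fun_prop
  rw [lat_integral g hy _ hcont]
  have hc2 : Continuous fun θ : ℝ => (g (sph (θ, y)) : E3) 2 := hcont.comp (g.continuous.comp (sph_cont y))
  have e : (∫ θ in Set.Icc (0 : ℝ) 1, (g (sph (θ, y)) : E3) 2) - y =
      ∫ θ in Set.Icc (0 : ℝ) 1, ((g (sph (θ, y)) : E3) 2 - y) := by
    rw [integral_sub hc2.integrableOn_Icc (integrableOn_const (by simp))]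
    simp
  rw [e, ← Real.norm_eq_abs]
  have := norm_setIntegral_le_of_norm_le_const (μ := volume) (s := Set.Icc (0 : ℝ) 1) (C := ε / 8)
    (f := fun θ => (g (sph (θ, y)) : E3) 2 - y) (by simp) (by
      intro θ _
      have h1 := hg.dist_le c (sph (θ, y))
      rw [Subtype.dist_eq] at h1
      have h2 := (abs_sub_le_dist_E3 _ _).trans h1
      rw [sph_coe (θ, y) hy, piS_two] at h2
      exact h2)
  simpa using this

lemma z_lip : LipschitzWith 1 fun x : S2 => (x : E3) 2 := by
  apply LipschitzWith.of_dist_le_mul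
  intro x y
  rw [Real.dist_eq, Subtype.dist_eq]
  simpa using abs_sub_le_dist_E3 (x : E3) y

/-- The set of heights whose image latitude measure is close to that of `y`. -/
def closeSet (g : S2 ≃ₜ S2) (η y : ℝ) : Set ℝ :=
  {y' ∈ Set.Icc (-1 : ℝ) 1 | ∀ f : S2 → ℝ, LipschitzWith 1 f →
    (∫ x, f x ∂(Measure.map g (latitudeMeasure y))) -
      (∫ x, f x ∂(Measure.map g (latitudeMeasure y'))) ≤ 3 * η}

lemma closeSet_polar {P L a h ε G g} (c : Cfg P L a h ε) (hg : IsMap P L a h G g) {η y : ℝ}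
    (hη : η < ε / 12) (hy : y ∈ Set.Icc (-1 + ε) (1 - ε)) {y' : ℝ} (hy' : y' ∈ closeSet g η y) :
    |y'| < 1 - ε / 2 := by
  have hε := c.hε
  have h1 := hg.z_int c (y := y) ⟨by linarith [hy.1], by linarith [hy.2]⟩
  have h2 := hg.z_int c hy'.1
  have h3 := hy'.2 _ z_lip
  have h4 := hy'.2 _ z_lip.neg
  simp only [Pi.neg_apply, integral_neg] at h4
  rw [abs_le] at h1 h2
  rw [abs_lt]
  constructor <;> linarith [hy.1, hy.2]

lemma vol_affine (Z : Set ℝ) (b : ℝ) {h : ℝ} (hh : 0 < h) :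
    volume {y : ℝ | (y + b) * h⁻¹ ∈ Z} = ENNReal.ofReal h * volume Z := by
  have e : {y : ℝ | (y + b) * h⁻¹ ∈ Z} = (fun y => y + b) ⁻¹' ((fun y => y * h⁻¹) ⁻¹' Z) := rfl
  rw [e, measure_preimage_add_right, Real.volume_preimage_mul_right (inv_ne_zero hh.ne'), inv_inv,
    abs_of_pos hh]

lemma close_measure {P L a h ε G g} (c : Cfg P L a h ε) (hg : IsMap P L a h G g) {m : ℕ} (hm : 0 < m)
    {r : ℝ} (hr : 0 < r) (hr1 : r ≤ h / (8 * m)) (hr2 : r ≤ ε / (2 * m * P)) {η : ℝ}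
    (hηr : η = r / 1000) (hη : η < ε / 12) {Bad : Set ℝ} {κ D : ℝ≥0∞} (hBad : volume Bad ≤ κ)
    (hD : ∀ u ∈ Set.Ioo (0 : ℝ) 1, u ∉ Bad →
        volume {u' | u' ∈ Set.Ioo (0 : ℝ) 1 ∧ u' ∉ Bad ∧ ¬ SepG G m u u'} ≤ D)
    {y : ℝ} (hy : y ∈ Set.Icc (-1 + ε) (1 - ε)) :
    (1 / 2 : ℝ≥0∞) * volume (closeSet g η y) ≤ κ + D := by
  have hε := c.hε
  have hh := c.hh
  have ha := c.ha
  have haL := c.haL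
  set Z : ℕ → Set ℝ := fun s => {u | u ∈ Set.Ioo (0 : ℝ) 1 ∧ a + h * (s + u) ∈ closeSet g η y} with hZ
  have hZv : ∀ s < L, volume (Z s) ≤ κ + D := by
    intro s hs
    have hsub : Z s ⊆ Bad ∪ (Z s \ Bad) := by intro u hu; by_cases h : u ∈ Bad <;> simp [h, hu]
    refine (measure_mono hsub).trans ((measure_union_le _ _).trans (add_le_add hBad ?_))
    rcases Set.eq_empty_or_nonempty (Z s \ Bad) with he | ⟨u0, hu0, hb0⟩
    · simp [he]
    refine le_trans (measure_mono ?_) (hD u0 hu0.1 hb0)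
    rintro u' ⟨hu', hb'⟩
    refine ⟨hu'.1, hb', fun hsep => ?_⟩
    obtain ⟨f, hf, hfi⟩ := sep_test c hg hm hr hr1 hr2 hs hu0.1 hu'.1 hsep
    have h1 := hu0.2.2 f hf
    have h2 := hu'.2.2 _ hf.neg
    simp only [Pi.neg_apply, integral_neg] at h2
    rw [hηr] at h1 h2
    linarith
  have hcov : closeSet g η y ⊆ (Set.range fun n : ℕ => a + h * n) ∪
      ⋃ s ∈ Finset.range L, {y' : ℝ | (y' + -(a + h * s)) * h⁻¹ ∈ Z s} := by
    intro y' hy'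
    have hp := abs_lt.1 (closeSet_polar c hg hη hy hy')
    obtain ⟨t, ht⟩ : ∃ t, t = (y' - a) / h := ⟨_, rfl⟩
    have hyt : y' = a + h * t := by rw [ht]; field_simp; ring
    have ht0 : 0 < t := by rw [ht]; apply div_pos _ hh; linarith [hp.1]
    have htL : t < L := by
      have : h * t < h * L := by linarith [hp.2]
      exact lt_of_mul_lt_mul_left this hh.le
    have f1 := Nat.floor_le ht0.le
    have f2 := Nat.lt_floor_add_one t
    obtain ⟨s, hs⟩ : ∃ s, s = ⌊t⌋₊ := ⟨_, rfl⟩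
    rw [← hs] at f1 f2
    rcases eq_or_lt_of_le f1 with he | hlt
    · left; exact ⟨s, by simp only []; rw [he, ← hyt]⟩
    · right
      have hsL : s < L := by exact_mod_cast f1.trans_lt htL
      simp only [Set.mem_iUnion, Finset.mem_range]
      refine ⟨s, hsL, ?_⟩
      have e : (y' + -(a + h * s)) * h⁻¹ = t - s := by rw [hyt]; field_simp; ring
      rw [Set.mem_ofPred_eq, e]
      refine ⟨⟨by linarith, by linarith⟩, ?_⟩
      rw [add_sub_cancel, ← hyt]
      exact hy'
  have hvol : volume (closeSet g η y) ≤ 2 * (κ + D) := by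
    refine (measure_mono hcov).trans ((measure_union_le _ _).trans ?_)
    rw [(Set.countable_range _).measure_zero, zero_add]
    refine (measure_biUnion_finset_le _ _).trans ?_
    have : ∀ s ∈ Finset.range L, volume {y' : ℝ | (y' + -(a + h * s)) * h⁻¹ ∈ Z s} ≤
        ENNReal.ofReal h * (κ + D) := by
      intro s hs
      rw [vol_affine _ _ hh]
      gcongr
      exact hZv s (Finset.mem_range.1 hs)
    refine (Finset.sum_le_sum this).trans ?_
    rw [Finset.sum_const, Finset.card_range, nsmul_eq_mul, ← mul_assoc]
    gcongr
    rw [← ENNReal.ofReal_natCast, ← ENNReal.ofReal_mul (by positivity)]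
    rw [show (2 : ℝ≥0∞) = ENNReal.ofReal 2 by simp]
    apply ENNReal.ofReal_le_ofReal
    linarith
  calc (1 / 2 : ℝ≥0∞) * volume (closeSet g η y) ≤ (1 / 2 : ℝ≥0∞) * (2 * (κ + D)) := by gcongr
    _ = κ + D := by
      rw [← mul_assoc, one_div, ENNReal.inv_mul_cancel (by simp) (by simp), one_mul]

lemma numerics {ε C η₁ : ℝ} (hε : 0 < ε) (hε1 : ε < 1) (hC : 0 < C) (hη₁ : 0 < η₁) :
    ∃ v : ℕ, 1 ≤ v ∧ C / v < η₁ ∧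
      2 * (3 / 4 : ℝ) ^ (v ^ 2) ≤ Real.exp (-(C / v) ^ (-2 + ε)) := by
  have hlog : 0 < Real.log (4 / 3) := Real.log_pos (by norm_num)
  have t1 : Filter.Tendsto (fun v : ℕ => C / (v : ℝ)) Filter.atTop (nhds 0) :=
    tendsto_const_div_atTop_nhds_zero_nat C
  have t2 : Filter.Tendsto (fun v : ℕ => (C / (v : ℝ)) ^ ε * (C ^ (-2 : ℝ)) + Real.log 2 * (1 / (v : ℝ)))
      Filter.atTop (nhds 0) := by
    have h1 := t1.rpow_const (p := ε) (Or.inr hε.le)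
    rw [Real.zero_rpow hε.ne'] at h1
    simpa using (h1.mul_const (C ^ (-2 : ℝ))).add
      ((tendsto_one_div_atTop_nhds_zero_nat (𝕜 := ℝ)).const_mul (Real.log 2))
  obtain ⟨v, hv1, hv2, hv3⟩ := ((Filter.eventually_ge_atTop 1).and
    ((t1.eventually (gt_mem_nhds hη₁)).and (t2.eventually (gt_mem_nhds hlog)))).exists
  refine ⟨v, hv1, hv2, ?_⟩
  have hvR : (1 : ℝ) ≤ v := by exact_mod_cast hv1
  have hx : 0 < C / v := by positivity
  have e1 : (C / (v : ℝ)) ^ (-2 + ε) = (C / (v : ℝ)) ^ ε * (C ^ (-2 : ℝ)) * v ^ 2 := by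
    rw [Real.rpow_add hx, Real.div_rpow hC.le (by positivity) (-2 : ℝ), Real.rpow_neg (by positivity : (0 : ℝ) ≤ v)]
    rw [show (2 : ℝ) = (2 : ℕ) by norm_num, Real.rpow_natCast]
    field_simp
  have e2 : 2 * (3 / 4 : ℝ) ^ (v ^ 2) = Real.exp (Real.log 2 - v ^ 2 * Real.log (4 / 3)) := by
    rw [Real.exp_sub, Real.exp_log (by norm_num)]
    have : (v : ℝ) ^ 2 * Real.log (4 / 3) = Real.log ((4 / 3) ^ (v ^ 2)) := by
      rw [Real.log_pow]; push_cast; ring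
    rw [this, Real.exp_log (by positivity), show (3 / 4 : ℝ) = (4 / 3)⁻¹ by norm_num, inv_pow,
      ← div_eq_mul_inv]
  rw [e2, Real.exp_le_exp, e1]
  have hl2 : 0 < Real.log 2 := Real.log_pos (by norm_num)
  have h3 : ((C / (v : ℝ)) ^ ε * (C ^ (-2 : ℝ)) + Real.log 2 * (1 / (v : ℝ))) * v ^ 2 ≤
      Real.log (4 / 3) * v ^ 2 := by gcongr
  have h4 : Real.log 2 * (1 / (v : ℝ)) * v ^ 2 = Real.log 2 * v := by field_simp
  have h5 : Real.log 2 ≤ Real.log 2 * v := le_mul_of_one_le_right hl2.le hvR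
  linarith

lemma cfg_exists {ε : ℝ} (hε : 0 < ε) (hε1 : ε < 1) (q : ℕ) (hq : 1 ≤ q) :
    ∃ (P' L : ℕ) (a h : ℝ), Cfg (q * P') L a h ε := by
  obtain ⟨P', hP'⟩ := exists_nat_gt (100 / ε)
  obtain ⟨L, hL⟩ := exists_nat_gt (800 / ε ^ 2)
  have hp0 : (0 : ℝ) < P' := lt_trans (by positivity) hP'
  have hl0 : (0 : ℝ) < L := lt_trans (by positivity) hL
  have hqR : (1 : ℝ) ≤ q := by exact_mod_cast hq
  have hP0 : 0 < P' := by exact_mod_cast hp0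
  refine ⟨P', L, -1 + ε / 2, (2 - ε) / L, ?_⟩
  refine ⟨by positivity, hε, hε1, div_pos (by linarith) hl0, rfl, by field_simp; ring, ?_, ?_⟩
  · rw [div_lt_iff₀ (by positivity)] at hL
    rw [div_le_iff₀ hl0]
    nlinarith
  · rw [div_lt_iff₀ hε] at hP'
    push_cast
    rw [div_le_iff₀ (by positivity)]
    nlinarith [mul_le_mul_of_nonneg_right hqR (mul_pos hp0 hε).le]

/-- **Corollary 4.2 (sphere case): the emergence lemma on the sphere.** There is `ε₀ > 0` such
that for every `ε ∈ (0, ε₀)`, `q ≥ 1` and `η₁ > 0`, there are `η ∈ (0, η₁)` and a `C^∞`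
diffeomorphism `g` of `S²` preserving the normalized surface measure, equal to the identity
near the poles, commuting with `R_{1/q}`, `ε`-`C⁰`-close to the identity together with its
inverse, and such that for every `y ∈ [−1+ε, 1−ε]`, the normalized measure of the set of
heights `y'` with `d_K(g_*μ_y, g_*μ_{y'}) ≤ 3η` is at most `exp(−η^{−2+ε})`. -/
theorem sphere_emergence_lemma :
    ∃ ε₀ > (0 : ℝ), ∀ ε : ℝ, 0 < ε → ε < ε₀ → ∀ q : ℕ, 1 ≤ q → ∀ η₁ : ℝ, 0 < η₁ →
      ∃ η : ℝ, 0 < η ∧ η < η₁ ∧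
      ∃ g : sphere (0 : EuclideanSpace ℝ (Fin 3)) 1 ≃ₜ sphere (0 : EuclideanSpace ℝ (Fin 3)) 1,
        ContMDiff (𝓡 2) (𝓡 2) (⊤ : ℕ∞) ⇑g ∧ ContMDiff (𝓡 2) (𝓡 2) (⊤ : ℕ∞) ⇑g.symm ∧
        MeasurePreserving g sphereMeasure sphereMeasure ∧
        (∃ δ > 0, ∀ x : sphere (0 : EuclideanSpace ℝ (Fin 3)) 1,
          1 - δ < |(x : EuclideanSpace ℝ (Fin 3)) 2| → g x = x) ∧
        (∀ x y : sphere (0 : EuclideanSpace ℝ (Fin 3)) 1,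
          (y : EuclideanSpace ℝ (Fin 3)) = rotZ (1 / q) x →
          (g y : EuclideanSpace ℝ (Fin 3)) = rotZ (1 / q) (g x)) ∧
        (∀ x : sphere (0 : EuclideanSpace ℝ (Fin 3)) 1,
          dist (g x) x ≤ ε ∧ dist (g.symm x) x ≤ ε) ∧
        ∀ y ∈ Set.Icc (-1 + ε) (1 - ε),
          (1 / 2 : ℝ≥0∞) * (volume : Measure ℝ) {y' ∈ Set.Icc (-1 : ℝ) 1 |
              ∀ f : sphere (0 : EuclideanSpace ℝ (Fin 3)) 1 → ℝ, LipschitzWith 1 f →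
                (∫ x, f x ∂(Measure.map g (latitudeMeasure y))) -
                    (∫ x, f x ∂(Measure.map g (latitudeMeasure y'))) ≤ 3 * η} ≤
            ENNReal.ofReal (Real.exp (-η ^ (-2 + ε))) := by
  refine ⟨1, one_pos, fun ε hε hε1 q hq η₁ hη₁ => ?_⟩
  obtain ⟨P', L, a, h, c⟩ := cfg_exists hε hε1 q hq
  have hP : (0 : ℝ) < (q * P' : ℕ) := by exact_mod_cast c.hP
  have hh := c.hh
  obtain ⟨C, hC⟩ : ∃ C, C = min (h / 8) (ε / (2 * (q * P' : ℕ))) := ⟨_, rfl⟩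
  have hC0 : 0 < C := by rw [hC]; apply lt_min <;> positivity
  have hC1 : C ≤ h / 8 := hC ▸ min_le_left _ _
  have hC2 : C ≤ ε / (2 * (q * P' : ℕ)) := hC ▸ min_le_right _ _
  obtain ⟨v, hv, hvη, hvexp⟩ := numerics (C := C / 8000) (η₁ := min η₁ (ε / 12)) hε hε1
    (by positivity) (lt_min hη₁ (by positivity))
  have hvR : (0 : ℝ) < v := by exact_mod_cast hv
  obtain ⟨G, Bad, hG, hBad, hD⟩ := planar v hv (ENNReal.ofReal ((3 / 4) ^ (v ^ 2)))
    (by rw [ENNReal.ofReal_pos]; positivity)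
  obtain ⟨g, hs, hon, hoff⟩ := global_map c.hP c.hh c.ha' c.haL' G hG
  have hg : IsMap (q * P') L a h G g := ⟨hG, hon, hoff⟩
  refine ⟨C / 8000 / v, by positivity, hvη.trans_le (min_le_left _ _), g, hs.smooth, hs.smooth_symm,
    hs.mp, ⟨ε / 2, by positivity, fun x hx => hg.pole c x hx⟩,
    fun x y hxy => hg.comm c q P' hq rfl x y hxy, fun x => ⟨?_, ?_⟩, fun y hy => ?_⟩
  · linarith [hg.dist_le c x]
  · linarith [hg.dist_le_symm c x]
  · have key := close_measure c hg (m := 8 * v) (by omega) (r := C / (8 * v)) (by positivity)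
      (by
        push_cast
        rw [div_le_div_iff₀ (by positivity) (by positivity)]
        nlinarith [mul_pos hvR hC0])
      (by
        rw [le_div_iff₀ (by positivity)] at hC2 ⊢
        have : C / (8 * v) * (2 * ((8 * v : ℕ) : ℝ) * (q * P' : ℕ)) = C * (2 * (q * P' : ℕ)) := by
          push_cast; field_simp
        linarith)
      (η := C / 8000 / v) (by field_simp; norm_num) (hvη.trans_le (min_le_right _ _)) hBad hD hy
    refine le_trans key ?_
    rw [← ENNReal.ofReal_add (by positivity) (by positivity)]
    apply ENNReal.ofReal_le_ofReal
    linarith
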